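/- Every inner Eulerian grapht (of arbitrary cardinality) that satisfies the linkability condition admits a perfect linkage. -/

import Mathlib

/-! Common definitions: graphts (multigraphs with terminals), walks, paths, cycles,
edge cuts, inner Eulerian graphts, path systems, linkages, Erdős–Menger cuts,
restriction (edge deletion) and contraction. -/

universe u v

/-- A *grapht*: a multigraph (no loops, parallel edges allowed) given by an incidence
function `I : E → Sym2 V`, together with a set `T` of at least two terminal vertices. -/
structure Grapht (V : Type u) (E : Type v) where
  I : E → Sym2 V
  loopless : ∀ e : E, ¬ (I e).IsDiag
  T : Set V
  T_nontrivial : T.Nontrivial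

namespace Grapht

variable {V : Type u} {E : Type v}

/-- `G.IsWalk vs es` holds when `vs` is the vertex sequence and `es` the edge sequence
of a walk in `G`. -/
inductive IsWalk (G : Grapht V E) : List V → List E → Prop
  | nil (v : V) : IsWalk G [v] []
  | cons {u w : V} {vs : List V} {e : E} {es : List E} :
      G.I e = s(u, w) → IsWalk G (w :: vs) es → IsWalk G (u :: w :: vs) (e :: es)

/-- A finite path in the grapht `G` (no repeated vertices), with endpoints `first`, `last`. -/
structure Path (G : Grapht V E) where
  first : V
  last : V
  verts : List V
  edges : List E
  isWalk : G.IsWalk verts edges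
  nodup : verts.Nodup
  head_eq : verts.head? = some first
  getLast_eq : verts.getLast? = some last

/-- A finite cycle in the grapht `G`. -/
structure Cycle (G : Grapht V E) where
  verts : List V
  edges : List E
  isWalk : G.IsWalk verts edges
  closed : verts.head? = verts.getLast?
  nontrivial : edges ≠ []
  edges_nodup : edges.Nodup
  tail_nodup : verts.tail.Nodup

variable {G : Grapht V E}

/-- The internal (inner) vertices of a path. -/
def Path.inner (P : G.Path) : List V := (P.verts.drop 1).dropLast

/-- The edge set of a path. -/
def Path.edgeSet (P : G.Path) : Set E := {e | e ∈ P.edges}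

/-- The edge set of a cycle. -/
def Cycle.edgeSet (C : G.Cycle) : Set E := {e | e ∈ C.edges}

variable (G)

/-- `δ_G(X)`: the set of edges with exactly one endpoint in `X`. -/
def edgeCut (X : Set V) : Set E :=
  {e | ∃ u w, G.I e = s(u, w) ∧ u ∈ X ∧ w ∉ X}

/-- A grapht is *inner Eulerian* if there is no `X ⊆ V ∖ T` whose cut `δ(X)` is a
finite set of odd size. -/
def InnerEulerian : Prop :=
  ∀ X : Set V, Disjoint X G.T → ¬ ((G.edgeCut X).Finite ∧ Odd (G.edgeCut X).ncard)

/-- An `AB`-path: a path with first vertex in `A`, last vertex in `B` and no internal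
vertex in `A ∪ B`. -/
def IsABPath (A B : Set V) (P : G.Path) : Prop :=
  P.first ∈ A ∧ P.last ∈ B ∧ ∀ v ∈ P.inner, v ∉ A ∪ B

/-- A `T`-path: a path between two distinct terminal vertices without internal
terminal vertices. -/
def IsTPath (P : G.Path) : Prop :=
  P.first ∈ G.T ∧ P.last ∈ G.T ∧ P.first ≠ P.last ∧ ∀ v ∈ P.inner, v ∉ G.T

/-- A system of pairwise edge-disjoint paths. -/
def EdgeDisjoint (Ps : Set G.Path) : Prop :=
  Ps.Pairwise fun P Q => ∀ e, e ∈ P.edges → e ∉ Q.edges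

/-- A system of pairwise edge-disjoint `T`-paths. -/
def IsTPathSystem (Ps : Set G.Path) : Prop :=
  G.EdgeDisjoint Ps ∧ ∀ P ∈ Ps, G.IsTPath P

/-- The set of edges used by a path system. -/
def sysEdges (Ps : Set G.Path) : Set E := ⋃ P ∈ Ps, P.edgeSet

/-- `C` is *orthogonal* to the path system `Ps`: `C` consists of exactly one edge from
each path of `Ps`. -/
def Orthogonal (C : Set E) (Ps : Set G.Path) : Prop :=
  (∀ P ∈ Ps, ∃! e, e ∈ C ∧ e ∈ P.edges) ∧ ∀ e ∈ C, ∃ P ∈ Ps, e ∈ P.edges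

/-- `C` separates `A` and `B`: every `AB`-path meets `C` (i.e. `G − C` has no `AB`-path). -/
def Separates (C : Set E) (A B : Set V) : Prop :=
  ∀ P : G.Path, G.IsABPath A B P → ∃ e ∈ C, e ∈ P.edges

/-- An `AB`-cut. -/
def IsABCut (A B : Set V) (C : Set E) : Prop :=
  ∀ P : G.Path, G.IsABPath A B P → ∃ e ∈ C, e ∈ P.edges

/-- An Erdős–Menger `AB`-cut: an `AB`-cut orthogonal to some system of pairwise
edge-disjoint `AB`-paths. -/
def IsEMABCut (A B : Set V) (C : Set E) : Prop :=
  G.IsABCut A B C ∧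
    ∃ Ps : Set G.Path, G.EdgeDisjoint Ps ∧ (∀ P ∈ Ps, G.IsABPath A B P) ∧ G.Orthogonal C Ps

/-- The order `⊴` on (Erdős–Menger) `AB`-cuts: on every `AB`-path the first edge of `C`
comes no later than the first edge of `C'`. -/
def ABCutLE (A B : Set V) (C C' : Set E) : Prop :=
  ∀ P : G.Path, G.IsABPath A B P →
    ∀ i : Fin P.edges.length, P.edges.get i ∈ C' →
      ∃ j : Fin P.edges.length, (j : ℕ) ≤ (i : ℕ) ∧ P.edges.get j ∈ C

/-- `C` is the `⊴`-largest Erdős–Menger `AB`-cut. -/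
def IsLargestEMABCut (A B : Set V) (C : Set E) : Prop :=
  G.IsEMABCut A B C ∧ ∀ C', G.IsEMABCut A B C' → G.ABCutLE A B C' C

/-- A system `Ps` of pairwise edge-disjoint `T`-paths *links* the terminal `t`:
it covers `δ(t)`. -/
def Links (Ps : Set G.Path) (t : V) : Prop :=
  G.IsTPathSystem Ps ∧ ∀ e ∈ G.edgeCut {t}, ∃ P ∈ Ps, e ∈ P.edges

/-- The terminal `t` is linked. -/
def Linked (t : V) : Prop := ∃ Ps : Set G.Path, G.Links Ps t

/-- The linkability condition: every terminal is linked. -/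
def LinkabilityCondition : Prop := ∀ t ∈ G.T, G.Linked t

/-- A perfect linkage: a system of pairwise edge-disjoint `T`-paths linking every
terminal. -/
def IsPerfectLinkage (Ps : Set G.Path) : Prop :=
  G.IsTPathSystem Ps ∧ ∀ t ∈ G.T, ∀ e ∈ G.edgeCut {t}, ∃ P ∈ Ps, e ∈ P.edges

/-- In the two-terminal setting: a system of pairwise edge-disjoint `st`-paths
covering `δ(s)` (a linkage of `s`). -/
def IsStLinkage (s t : V) (Ps : Set G.Path) : Prop :=
  G.EdgeDisjoint Ps ∧ (∀ P ∈ Ps, G.IsABPath {s} {t} P) ∧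
    ∀ e ∈ G.edgeCut {s}, ∃ P ∈ Ps, e ∈ P.edges

/-- `s` is linked (two-terminal setting). -/
def StLinked (s t : V) : Prop := ∃ Ps : Set G.Path, G.IsStLinkage s t Ps

/-- `λ_G(A,B)`: the maximal number of pairwise edge-disjoint `AB`-paths. -/
noncomputable def lambda (A B : Set V) : ℕ :=
  sSup {n : ℕ | ∃ Ps : Set G.Path, G.EdgeDisjoint Ps ∧ (∀ P ∈ Ps, G.IsABPath A B P) ∧
    Ps.Finite ∧ Ps.ncard = n}

/-- The grapht obtained by deleting all edges outside `F`. -/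
def restrict (F : Set E) : Grapht V F where
  I e := G.I e.1
  loopless e := G.loopless e.1
  T := G.T
  T_nontrivial := G.T_nontrivial

/-- The map sending every vertex of a contracted set `X t` (`t ∈ T`) to `t`. -/
noncomputable def contractMap (X : V → Set V) : V → V := fun v =>
  letI := Classical.dec (∃ u ∈ G.T, v ∈ X u)
  if h : ∃ u ∈ G.T, v ∈ X u then h.choose else v

/-- The contraction `G/ℱ` of the family `ℱ = {X t : t ∈ T}`: each `X t` is contracted
to `t` and the arising loops are deleted. -/
noncomputable def contract (X : V → Set V) :
    Grapht V {e : E // ¬ ((G.I e).map (G.contractMap X)).IsDiag} where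
  I e := (G.I e.1).map (G.contractMap X)
  loopless e := e.2
  T := G.T
  T_nontrivial := G.T_nontrivial

end Grapht

namespace LK
variable {V : Type u} {E : Type v}

/-- Walks, given by the list of their edges. -/
inductive Wk (I : E → Sym2 V) : V → List E → V → Prop
  | nil (a : V) : Wk I a [] a
  | cons {a b c : V} {e : E} {l : List E} : I e = s(a, b) → Wk I b l c → Wk I a (e :: l) c

/-- The edge cut of a vertex set. -/
def Dl (I : E → Sym2 V) (X : Set V) : Set E :=
  {e | ∃ u w, I e = s(u, w) ∧ u ∈ X ∧ w ∉ X}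

variable {I : E → Sym2 V}

theorem Wk.nil_iff {a b : V} : Wk I a [] b ↔ a = b := by
  constructor
  · intro h; cases h; rfl
  · rintro rfl; exact Wk.nil _

theorem Wk.cons_iff {a c : V} {e : E} {l : List E} :
    Wk I a (e :: l) c ↔ ∃ b, I e = s(a, b) ∧ Wk I b l c := by
  constructor
  · intro h; cases h with | cons h1 h2 => exact ⟨_, h1, h2⟩
  · rintro ⟨b, h1, h2⟩; exact Wk.cons h1 h2

theorem Wk.append_iff {a c : V} {l m : List E} :
    Wk I a (l ++ m) c ↔ ∃ b, Wk I a l b ∧ Wk I b m c := by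
  induction l generalizing a with
  | nil => simp [Wk.nil_iff]
  | cons e l ih =>
    simp only [List.cons_append, Wk.cons_iff, ih]
    constructor
    · rintro ⟨b, h, d, h1, h2⟩; exact ⟨d, ⟨b, h, h1⟩, h2⟩
    · rintro ⟨d, ⟨b, h, h1⟩, h2⟩; exact ⟨b, h, d, h1, h2⟩

theorem Wk.append {a b c : V} {l m : List E} (h : Wk I a l b) (h' : Wk I b m c) :
    Wk I a (l ++ m) c := Wk.append_iff.2 ⟨b, h, h'⟩

theorem Wk.single {a b : V} {e : E} (h : I e = s(a, b)) : Wk I a [e] b :=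
  Wk.cons h (Wk.nil _)

theorem Wk.unique {a b b' : V} {l : List E} (h : Wk I a l b) (h' : Wk I a l b') : b = b' := by
  induction h with
  | nil a => exact Wk.nil_iff.1 h'
  | cons h1 h2 ih =>
    obtain ⟨d, h3, h4⟩ := Wk.cons_iff.1 h'
    rw [h1] at h3
    have := Sym2.congr_right.1 h3
    subst this
    exact ih h4

theorem Wk.reverse {a b : V} {l : List E} (h : Wk I a l b) : Wk I b l.reverse a := by
  induction h with
  | nil a => exact Wk.nil _
  | cons h1 h2 ih =>
    rw [List.reverse_cons]
    exact ih.append (Wk.single (by rw [h1, Sym2.eq_swap]))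

theorem Wk.congr {I' : E → Sym2 V} {a b : V} {l : List E} (h : Wk I a l b)
    (hI : ∀ e ∈ l, I e = I' e) : Wk I' a l b := by
  induction h with
  | nil a => exact Wk.nil _
  | cons h1 h2 ih =>
    refine Wk.cons ((hI _ (by simp)).symm.trans h1) (ih fun e he => hI e (by simp [he]))

/-- All vertices strictly before the end of the walk `l` starting at `a` avoid `B`. -/
def Clean (I : E → Sym2 V) (B : Set V) (a : V) (l : List E) : Prop :=
  ∀ m1 m2 d, l = m1 ++ m2 → m2 ≠ [] → Wk I a m1 d → d ∉ B

theorem Wk.firstHit {B : Set V} {a b : V} {l : List E} (h : Wk I a l b) (hb : b ∈ B) :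
    ∃ l1 l2 c, l = l1 ++ l2 ∧ Wk I a l1 c ∧ Wk I c l2 b ∧ c ∈ B ∧ Clean I B a l1 := by
  induction h with
  | nil a =>
    refine ⟨[], [], a, rfl, Wk.nil _, Wk.nil _, hb, ?_⟩
    intro m1 m2 d h1 h2
    simp at h1
    exact absurd h1.2 h2
  | @cons a b c e l h1 h2 ih =>
    by_cases ha : a ∈ B
    · refine ⟨[], e :: l, a, rfl, Wk.nil _, Wk.cons h1 h2, ha, ?_⟩
      intro m1 m2 d h1 h2
      simp at h1
      exact absurd h1.2 h2
    · obtain ⟨l1, l2, d, rfl, w1, w2, hd, hc⟩ := ih hb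
      refine ⟨e :: l1, l2, d, rfl, Wk.cons h1 w1, w2, hd, ?_⟩
      intro m1 m2 x hm hm2 hx
      cases m1 with
      | nil => rw [Wk.nil_iff] at hx; subst hx; exact ha
      | cons f m1 =>
        simp only [List.cons_append, List.cons.injEq] at hm
        obtain ⟨rfl, hm⟩ := hm
        obtain ⟨y, h3, h4⟩ := Wk.cons_iff.1 hx
        rw [h1] at h3
        have := Sym2.congr_right.1 h3
        subst this
        exact hc m1 m2 x hm hm2 h4

theorem Wk.crossing {X : Set V} {a b : V} {l : List E} (h : Wk I a l b) (ha : a ∈ X)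
    (hb : b ∉ X) : ∃ l1 e l2 u w, l = l1 ++ e :: l2 ∧ Wk I a l1 u ∧ I e = s(u, w) ∧
      Wk I w l2 b ∧ u ∈ X ∧ w ∉ X := by
  induction h with
  | nil a => exact absurd ha hb
  | @cons a b c e l h1 h2 ih =>
    by_cases hbX : b ∈ X
    · obtain ⟨l1, f, l2, u, w, rfl, h3, h4, h5, h6, h7⟩ := ih hbX hb
      exact ⟨e :: l1, f, l2, u, w, rfl, Wk.cons h1 h3, h4, h5, h6, h7⟩
    · exact ⟨[], e, l, a, b, rfl, Wk.nil _, h1, h2, ha, hbX⟩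

theorem mem_Dl {X : Set V} {e : E} {a b : V} (h : I e = s(a, b)) :
    e ∈ Dl I X ↔ ¬ (a ∈ X ↔ b ∈ X) := by
  constructor
  · rintro ⟨u, w, h1, h2, h3⟩
    rw [h] at h1
    rcases Sym2.eq_iff.1 h1 with ⟨rfl, rfl⟩ | ⟨rfl, rfl⟩ <;> tauto
  · intro hn
    by_cases ha : a ∈ X
    · exact ⟨a, b, h, ha, by tauto⟩
    · exact ⟨b, a, by rw [h, Sym2.eq_swap], by tauto, ha⟩

open Classical in
theorem Wk.parity {X : Set V} {a b : V} {l : List E} (h : Wk I a l b) :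
    Even ((l.filter (fun e => e ∈ Dl I X)).length) ↔ (a ∈ X ↔ b ∈ X) := by
  induction h with
  | nil a => simp
  | @cons a b c e l h1 h2 ih =>
    have := mem_Dl (X := X) h1
    by_cases he : e ∈ Dl I X
    · rw [List.filter_cons_of_pos (by simpa using he), List.length_cons, Nat.even_add_one, ih]
      have := this.1 he
      tauto
    · rw [List.filter_cons_of_neg (by simpa using he), ih]
      have := (not_congr this).1 he
      tauto

open Classical in
theorem ncard_filter {S : Set E} {l : List E} (hl : l.Nodup) :
    {e | e ∈ S ∧ e ∈ l}.ncard = (l.filter (fun e => e ∈ S)).length := by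
  have : {e | e ∈ S ∧ e ∈ l} = ((l.filter (fun e => e ∈ S)).toFinset : Set E) := by
    ext e; simp [and_comm]
  rw [this, Set.ncard_coe_finset, List.toFinset_card_of_nodup (hl.filter _)]

theorem finite_list {S : Set E} (l : List E) : {e | e ∈ S ∧ e ∈ l}.Finite := by
  classical
  refine Set.Finite.subset (List.finite_toSet l) ?_
  rintro e ⟨_, h⟩; exact h

theorem Wk.trail {a b : V} {l : List E} (h : Wk I a l b) :
    ∃ l', l'.Nodup ∧ (∀ e ∈ l', e ∈ l) ∧ Wk I a l' b := by
  induction h with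
  | nil a => exact ⟨[], by simp, by simp, Wk.nil _⟩
  | @cons a b c e l h1 h2 ih =>
    obtain ⟨l', hn, hs, hw⟩ := ih
    by_cases he : e ∈ l'
    · obtain ⟨m1, m2, rfl⟩ := List.append_of_mem he
      obtain ⟨x, hx1, hx2⟩ := Wk.append_iff.1 hw
      obtain ⟨y, hy1, hy2⟩ := Wk.cons_iff.1 hx2
      rw [h1] at hy1
      rcases Sym2.eq_iff.1 hy1 with ⟨rfl, rfl⟩ | ⟨rfl, rfl⟩
      · exact ⟨e :: m2, (List.nodup_append.1 hn).2.1, fun f hf => by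
          have := hs f (by simp at hf ⊢; tauto); simp [this], hx2⟩
      · refine ⟨m2, ((List.nodup_append.1 hn).2.1).of_cons, fun f hf => by
          have := hs f (by simp; tauto); simp [this], hy2⟩
    · exact ⟨e :: l', by simp [he, hn], fun f hf => by
        simp at hf ⊢; rcases hf with h | h
        · exact Or.inl h
        · exact Or.inr (hs f h), Wk.cons h1 hw⟩

/-- inner Eulerian, for an edge set `H`. -/
def IE (I : E → Sym2 V) (T : Set V) (H : Set E) : Prop :=
  ∀ X : Set V, Disjoint X T → ¬ ((Dl I X ∩ H).Finite ∧ Odd (Dl I X ∩ H).ncard)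

theorem IE.remove {T : Set V} {H : Set E} (h : IE I T H) {a b : V} {l : List E}
    (hw : Wk I a l b) (hn : l.Nodup) (hl : ∀ e ∈ l, e ∈ H) (ha : a ∈ T) (hb : b ∈ T) :
    IE I T (H \ {e | e ∈ l}) := by
  classical
  rintro X hX ⟨hf, ho⟩
  have h1 : Dl I X ∩ H = (Dl I X ∩ (H \ {e | e ∈ l})) ∪ {e | e ∈ Dl I X ∧ e ∈ l} := by
    ext e
    have := hl e
    simp only [Set.mem_inter_iff, Set.mem_union, Set.mem_sdiff, Set.mem_ofPred_eq]
    tauto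
  have hd : Disjoint (Dl I X ∩ (H \ {e | e ∈ l})) {e | e ∈ Dl I X ∧ e ∈ l} := by
    rw [Set.disjoint_left]
    rintro e ⟨_, _, h⟩ ⟨_, h'⟩
    exact h h'
  refine h X hX ⟨?_, ?_⟩
  · rw [h1]; exact hf.union (finite_list l)
  · rw [h1, Set.ncard_union_eq hd hf (finite_list l), ncard_filter hn]
    refine ho.add_even ((hw.parity).2 ?_)
    have h2 : a ∉ X := fun h => (Set.disjoint_left.1 hX h) ha
    have h3 : b ∉ X := fun h => (Set.disjoint_left.1 hX h) hb
    tauto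

/-- edges with both ends in `Y` -/
def Ins (I : E → Sym2 V) (Y : Set V) : Set E := {e | ∀ x ∈ I e, x ∈ Y}

theorem mem_Ins {Y : Set V} {e : E} {a b : V} (h : I e = s(a, b)) :
    e ∈ Ins I Y ↔ a ∈ Y ∧ b ∈ Y := by
  simp [Ins, h]

theorem Wk.end_mem_of_ins {Y : Set V} {a b : V} {l : List E} (h : Wk I a l b)
    (hl : ∀ e ∈ l, e ∈ Ins I Y) (ha : a ∈ Y) : b ∈ Y := by
  induction h with
  | nil a => exact ha
  | cons h1 h2 ih =>
    exact ih (fun e he => hl e (by simp [he])) ((mem_Ins h1).1 (hl _ (by simp))).2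

end LK

namespace LK
variable {V : Type u} {E : Type v} {I : E → Sym2 V}

def Src (I : E → Sym2 V) (H : Set E) (t : V) : Set E := Dl I {t} ∩ H

/-- A family of edge-disjoint trails, one for each edge at `t`. -/
structure Fam (I : E → Sym2 V) (H : Set E) (t : V) (w : E → List E) (en : E → V) : Prop where
  wk : ∀ s ∈ Src I H t, Wk I t (w s) (en s)
  hd : ∀ s ∈ Src I H t, ∃ l, w s = s :: l
  nd : ∀ s ∈ Src I H t, (w s).Nodup
  sub : ∀ s ∈ Src I H t, ∀ e ∈ w s, e ∈ H
  dj : ∀ s ∈ Src I H t, ∀ s' ∈ Src I H t, ∀ e, e ∈ w s → e ∈ w s' → s = s'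

def LinkedTo (I : E → Sym2 V) (H : Set E) (t : V) (B : Set V) : Prop :=
  ∃ w en, Fam I H t w en ∧ ∀ s ∈ Src I H t, en s ∈ B

def Nice (I : E → Sym2 V) (T : Set V) (H : Set E) : Prop :=
  IE I T H ∧ ∀ t ∈ T, LinkedTo I H t (T \ {t})

variable {H : Set E} {t : V} {w : E → List E} {en : E → V} {T B X Y : Set V}

theorem mem_Src {s : E} : s ∈ Src I H t ↔ s ∈ H ∧ ∃ y, y ≠ t ∧ I s = s(t, y) := by
  constructor
  · rintro ⟨⟨u, x, h1, h2, h3⟩, h⟩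
    cases h2
    exact ⟨h, x, h3, h1⟩
  · rintro ⟨h, y, h1, h2⟩
    exact ⟨⟨t, y, h2, rfl, h1⟩, h⟩

theorem Fam.mem_self (F : Fam I H t w en) {s : E} (hs : s ∈ Src I H t) : s ∈ w s := by
  obtain ⟨l, h⟩ := F.hd s hs
  simp [h]

theorem Fam.pref (F : Fam I H t w en) {w' : E → List E} {en' : E → V}
    (h : ∀ s ∈ Src I H t, ∃ m, w s = w' s ++ m) (h' : ∀ s ∈ Src I H t, w' s ≠ [])
    (hw : ∀ s ∈ Src I H t, Wk I t (w' s) (en' s)) : Fam I H t w' en' := by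
  have hsub : ∀ s ∈ Src I H t, ∀ e ∈ w' s, e ∈ w s := by
    intro s hs e he
    obtain ⟨m, hm⟩ := h s hs
    rw [hm]; simp [he]
  refine ⟨hw, ?_, ?_, ?_, ?_⟩
  · intro s hs
    obtain ⟨m, hm⟩ := h s hs
    obtain ⟨l, hl⟩ := F.hd s hs
    have := h' s hs
    cases hq : w' s with
    | nil => exact absurd hq this
    | cons a k =>
      rw [hq, hl] at hm
      simp at hm
      exact ⟨k, by rw [hm.1]⟩
  · intro s hs
    obtain ⟨m, hm⟩ := h s hs
    have := F.nd s hs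
    rw [hm] at this
    exact (List.nodup_append.1 this).1
  · intro s hs e he
    exact F.sub s hs e (hsub s hs e he)
  · intro s hs s' hs' e he he'
    exact F.dj s hs s' hs' e (hsub s hs e he) (hsub s' hs' e he')

theorem LinkedTo.trim (hB : t ∉ B) (h : LinkedTo I H t B) :
    ∃ w en, Fam I H t w en ∧ ∀ s ∈ Src I H t, en s ∈ B ∧ Clean I B t (w s) := by
  classical
  obtain ⟨w, en, F, hen⟩ := h
  have : ∀ s, ∃ l1 c, s ∈ Src I H t → ∃ l2, w s = l1 ++ l2 ∧ Wk I t l1 c ∧ c ∈ B ∧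
      Clean I B t l1 := by
    intro s
    by_cases hs : s ∈ Src I H t
    · obtain ⟨l1, l2, c, h1, h2, h3, h4, h5⟩ := (F.wk s hs).firstHit (hen s hs)
      exact ⟨l1, c, fun _ => ⟨l2, h1, h2, h4, h5⟩⟩
    · exact ⟨[], t, fun h => absurd h hs⟩
  choose w' en' hw' using this
  refine ⟨w', en', F.pref ?_ ?_ ?_, ?_⟩
  · intro s hs
    obtain ⟨l2, h, _⟩ := hw' s hs
    exact ⟨l2, h⟩
  · intro s hs h0
    obtain ⟨l2, _, h1, h2, _⟩ := hw' s hs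
    rw [h0, Wk.nil_iff] at h1
    exact hB (h1 ▸ h2)
  · intro s hs
    obtain ⟨l2, _, h1, h2, _⟩ := hw' s hs
    exact h1
  · intro s hs
    obtain ⟨l2, _, h1, h2, h3⟩ := hw' s hs
    exact ⟨h2, h3⟩

/-- the dart `(a, e, b)` is used by the family -/
def UD (I : E → Sym2 V) (H : Set E) (t : V) (w : E → List E) (a : V) (e : E) (b : V) : Prop :=
  ∃ s ∈ Src I H t, ∃ l1 l2, w s = l1 ++ e :: l2 ∧ Wk I t l1 a ∧ I e = s(a, b)

def Stp (I : E → Sym2 V) (H : Set E) (t : V) (w : E → List E) (x y : V) : Prop :=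
  ∃ e ∈ H, I e = s(x, y) ∧ y ≠ t ∧ ¬ UD I H t w x e y

/-- chains -/
def Ch (R : V → V → Prop) (z : V) : V → List V → Prop
  | x, [] => x = z
  | x, y :: l => R x y ∧ Ch R z y l

theorem Ch.suffix {R : V → V → Prop} {z x y : V} {l m : List V} (h : Ch R z x (l ++ y :: m)) :
    Ch R z y m := by
  induction l generalizing x with
  | nil => exact h.2
  | cons a l ih => exact ih h.2

theorem exists_ch {R : V → V → Prop} {x z : V} (h : Relation.ReflTransGen R x z) :
    ∃ l, Ch R z x l ∧ (x :: l).Nodup := by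
  induction h using Relation.ReflTransGen.head_induction_on with
  | refl => exact ⟨[], rfl, by simp⟩
  | head h1 h2 ih =>
    rename_i a b
    obtain ⟨l, h3, h4⟩ := ih
    by_cases ha : a ∈ b :: l
    · rcases List.mem_cons.1 ha with rfl | ha
      · exact ⟨l, h3, h4⟩
      · obtain ⟨m1, m2, rfl⟩ := List.append_of_mem ha
        refine ⟨m2, h3.suffix, ?_⟩
        have := h4.of_cons
        exact (List.nodup_append.1 this).2.1
    · exact ⟨b :: l, ⟨h1, h3⟩, List.nodup_cons.2 ⟨ha, h4⟩⟩

theorem Ch.mono {R R' : V → V → Prop} {x z x0 : V} {l : List V} (h : Ch R z x l)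
    (hx : x0 ∉ x :: l) (hR : ∀ a b, a ≠ x0 → R a b → R' a b) : Ch R' z x l := by
  induction l generalizing x with
  | nil => exact h
  | cons a l ih =>
    simp only [List.mem_cons, not_or] at hx
    refine ⟨hR _ _ (fun h => hx.1 h.symm) h.1, ih h.2 ?_⟩
    simp only [List.mem_cons, not_or]; exact ⟨hx.2.1, hx.2.2⟩

open Classical in
theorem Fam.update (F : Fam I H t w en) {s : E} {l : List E} {b : V}
    (h1 : Wk I t l b) (h2 : ∃ m, l = s :: m) (h3 : l.Nodup) (h4 : ∀ e ∈ l, e ∈ H)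
    (h5 : ∀ s' ∈ Src I H t, s' ≠ s → ∀ e ∈ l, e ∉ w s') :
    Fam I H t (Function.update w s l) (Function.update en s b) := by
  refine ⟨?_, ?_, ?_, ?_, ?_⟩
  · intro r hr
    by_cases h : r = s
    · subst h; simpa using h1
    · simpa [h] using F.wk r hr
  · intro r hr
    by_cases h : r = s
    · subst h; simpa using h2
    · simpa [h] using F.hd r hr
  · intro r hr
    by_cases h : r = s
    · subst h; simpa using h3
    · simpa [h] using F.nd r hr
  · intro r hr
    by_cases h : r = s
    · subst h; simpa using h4
    · simpa [h] using F.sub r hr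
  · intro r hr r' hr' e he he'
    by_cases h : r = s
    · by_cases h' : r' = s
      · rw [h, h']
      · subst h
        simp only [Function.update_self] at he
        simp only [Function.update_of_ne h'] at he'
        exact absurd he' (h5 r' hr' h' e he)
    · by_cases h' : r' = s
      · subst h'
        simp only [Function.update_self] at he'
        simp only [Function.update_of_ne h] at he
        exact absurd he (h5 r hr h e he')
      · simp only [Function.update_of_ne h] at he
        simp only [Function.update_of_ne h'] at he'
        exact F.dj r hr r' hr' e he he'

theorem Fam.rest (F : Fam I H t w en) {s e : E} (hs : s ∈ Src I H t) {l1 l2 : List E} {a b : V}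
    (h : w s = l1 ++ e :: l2) (h1 : Wk I t l1 a) (h2 : I e = s(a, b)) : Wk I b l2 (en s) := by
  have := F.wk s hs
  rw [h] at this
  obtain ⟨d, h3, h4⟩ := Wk.append_iff.1 this
  obtain rfl := h1.unique h3
  obtain ⟨f, h5, h6⟩ := Wk.cons_iff.1 h4
  rw [h2] at h5
  obtain rfl := Sym2.congr_right.1 h5
  exact h6

open Classical in
theorem Fam.augment (l : List V) : ∀ (w : E → List E) (en : E → V) (s0 : E) (z : V),
    Fam I H t w en → s0 ∈ Src I H t → Ch (Stp I H t w) z (en s0) l → (en s0 :: l).Nodup →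
    ∃ w' en', Fam I H t w' en' ∧ ∃ π : Equiv.Perm E, (∀ s, π s ∈ Src I H t ↔ s ∈ Src I H t) ∧
      (∀ s ∈ Src I H t, en' s = Function.update en s0 z (π s)) ∧ {s | w' s ≠ w s}.Finite := by
  induction l with
  | nil =>
    intro w en s0 z F hs hc _
    refine ⟨w, en, F, 1, by simp, ?_, by simp⟩
    intro s hs
    have : en s0 = z := hc
    by_cases h : s = s0
    · subst h; simp [this]
    · simp [h]
  | cons y l ih =>
    intro w en s0 z F hs hc hn
    obtain ⟨⟨e, heH, heI, hyt, hUD⟩, hc⟩ := hc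
    have hxn : en s0 ∉ y :: l := (List.nodup_cons.1 hn).1
    have hyn : (y :: l).Nodup := (List.nodup_cons.1 hn).2
    by_cases hu : ∃ s ∈ Src I H t, e ∈ w s
    · obtain ⟨s, hsS, hes⟩ := hu
      obtain ⟨l1, l2, hl⟩ := List.append_of_mem hes
      have hwk := F.wk s hsS
      rw [hl] at hwk
      obtain ⟨a, ha1, ha2⟩ := Wk.append_iff.1 hwk
      obtain ⟨b, hb1, hb2⟩ := Wk.cons_iff.1 ha2
      have hab : a = y ∧ b = en s0 := by
        have hb1' := hb1
        rw [heI] at hb1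
        rcases Sym2.eq_iff.1 hb1 with ⟨h1, h2⟩ | ⟨h1, h2⟩
        · exact absurd ⟨s, hsS, l1, l2, hl, h1 ▸ ha1, heI⟩ hUD
        · exact ⟨h2.symm, h1.symm⟩
      obtain ⟨rfl, rfl⟩ := hab
      have hl1 : l1 ≠ [] := by
        rintro rfl
        exact hyt (Wk.nil_iff.1 ha1).symm
      have hnd := F.nd s hsS
      rw [hl] at hnd
      have hsub : ∀ f ∈ l1, f ∈ w s := by intro f hf; rw [hl]; simp [hf]
      have hd1 : ∃ m, l1 = s :: m := by
        obtain ⟨m, hm⟩ := F.hd s hsS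
        rw [hl] at hm
        cases l1 with
        | nil => exact absurd rfl hl1
        | cons c k => simp at hm; exact ⟨k, by rw [hm.1]⟩
      have F1 : Fam I H t (Function.update w s l1) (Function.update en s a) :=
        F.update ha1 hd1 (List.nodup_append.1 hnd).1 (fun f hf => F.sub s hsS f (hsub f hf))
          (fun s' hs' hne f hf hf' => hne (F.dj s' hs' s hsS f hf' (hsub f hf)))
      have hUD1 : ∀ c f d, UD I H t (Function.update w s l1) c f d → UD I H t w c f d := by
        rintro c f d ⟨r, hr, m1, m2, hm, hm1, hm2⟩
        by_cases h : r = s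
        · subst h
          rw [Function.update_self] at hm
          exact ⟨r, hr, m1, m2 ++ e :: l2, by rw [hl, hm]; simp, hm1, hm2⟩
        · rw [Function.update_of_ne h] at hm
          exact ⟨r, hr, m1, m2, hm, hm1, hm2⟩
      by_cases hss : s = s0
      · subst hss
        obtain ⟨w', en', F', π, h1, h2, h3⟩ := ih _ _ s z F1 hsS (by
          rw [Function.update_self]
          exact hc.mono hxn (fun c d _ ⟨f, hf1, hf2, hf3, hf4⟩ =>
            ⟨f, hf1, hf2, hf3, fun h => hf4 (hUD1 _ _ _ h)⟩)) (by
          rw [Function.update_self]; exact hyn)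
        refine ⟨w', en', F', π, h1, ?_, ?_⟩
        · intro r hr
          rw [h2 r hr, Function.update_idem]
        · refine (h3.union (Set.finite_singleton s)).subset ?_
          intro r hr
          by_cases h : r = s
          · exact Or.inr h
          · left
            simpa [h] using hr
      · have hss' : s0 ≠ s := fun h => hss h.symm
        have hd2 : ∀ f ∈ l2, f ∉ w s0 := by
          intro f hf hf'
          exact hss (F.dj s hsS s0 hs f (by rw [hl]; simp [hf]) hf')
        have F2 : Fam I H t (Function.update (Function.update w s l1) s0 (w s0 ++ l2))
            (Function.update (Function.update en s a) s0 (en s)) := by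
          refine F1.update ((F.wk s0 hs).append hb2) ?_ ?_ ?_ ?_
          · obtain ⟨m, hm⟩ := F.hd s0 hs
            exact ⟨m ++ l2, by rw [hm]; rfl⟩
          · refine List.nodup_append.2 ⟨F.nd s0 hs, ((List.nodup_append.1 hnd).2.1).of_cons, ?_⟩
            rintro f hf g hg rfl
            exact hd2 f hg hf
          · intro f hf
            rcases List.mem_append.1 hf with h | h
            · exact F.sub s0 hs f h
            · exact F.sub s hsS f (by rw [hl]; simp [h])
          · intro s' hs' hne f hf hf'
            by_cases h : s' = s
            · subst h
              rw [Function.update_self] at hf'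
              rcases List.mem_append.1 hf with h | h
              · exact hss (F.dj s' hs' s0 hs f (hsub f hf') h)
              · exact (List.nodup_append.1 hnd).2.2 f hf' f (by simp [h]) rfl
            · rw [Function.update_of_ne h] at hf'
              rcases List.mem_append.1 hf with h' | h'
              · exact hne (F.dj s' hs' s0 hs f hf' h')
              · exact h (F.dj s' hs' s hsS f hf' (by rw [hl]; simp [h']))
        have hUD2 : ∀ c f d, UD I H t (Function.update (Function.update w s l1) s0 (w s0 ++ l2)) c f d
            → UD I H t w c f d := by
          rintro c f d ⟨r, hr, m1, m2, hm, hm1, hm2⟩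
          by_cases h : r = s0
          · subst h
            rw [Function.update_self] at hm
            rcases List.append_eq_append_iff.1 hm with ⟨k, hk1, hk2⟩ | ⟨k, hk1, hk2⟩
            · refine ⟨s, hsS, l1 ++ e :: k, m2, by rw [hl, hk2]; simp, ?_, hm2⟩
              refine ha1.append (Wk.cons hb1 ?_)
              rw [hk1] at hm1
              obtain ⟨p, hp1, hp2⟩ := Wk.append_iff.1 hm1
              rw [(F.wk r hr).unique hp1]
              exact hp2
            · cases k with
              | nil =>
                simp at hk2 hk1
                refine ⟨s, hsS, l1 ++ [e], m2, by rw [hl, ← hk2]; simp, ?_, hm2⟩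
                rw [← hk1] at hm1
                rw [hm1.unique (F.wk r hr)]
                exact ha1.append (Wk.single hb1)
              | cons g k =>
                simp at hk2
                obtain ⟨rfl, hk2⟩ := hk2
                exact ⟨r, hr, m1, k, hk1, hm1, hm2⟩
          · rw [Function.update_of_ne h] at hm
            exact hUD1 _ _ _ ⟨r, hr, m1, m2, hm, hm1, hm2⟩
        have hens : (Function.update (Function.update en s a) s0 (en s)) s = a := by
          simp [hss]
        obtain ⟨w', en', F', π, h1, h2, h3⟩ := ih _ _ s z F2 hsS (by
          rw [hens]
          exact hc.mono hxn (fun c d _ ⟨f, hf1, hf2, hf3, hf4⟩ =>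
            ⟨f, hf1, hf2, hf3, fun h => hf4 (hUD2 _ _ _ h)⟩)) (by
          rw [hens]; exact hyn)
        refine ⟨w', en', F', π.trans (Equiv.swap s0 s), ?_, ?_, ?_⟩
        · intro r
          rw [← h1 r]
          simp only [Equiv.trans_apply]
          by_cases h : π r = s0
          · rw [h, Equiv.swap_apply_left]; tauto
          · by_cases h' : π r = s
            · rw [h', Equiv.swap_apply_right]; tauto
            · rw [Equiv.swap_apply_of_ne_of_ne h h']
        · intro r hr
          rw [h2 r hr]
          simp only [Equiv.trans_apply]
          by_cases h : π r = s0
          · rw [h, Equiv.swap_apply_left]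
            simp [hss, hss']
          · by_cases h' : π r = s
            · rw [h', Equiv.swap_apply_right]; simp
            · rw [Equiv.swap_apply_of_ne_of_ne h h']
              simp [h, h']
        · refine (h3.union ((Set.finite_singleton s).union (Set.finite_singleton s0))).subset ?_
          intro r hr
          by_cases h : r = s
          · exact Or.inr (Or.inl h)
          · by_cases h' : r = s0
            · exact Or.inr (Or.inr h')
            · left
              simpa [h, h'] using hr
    · have hu' : ∀ s ∈ Src I H t, e ∉ w s := fun s hs h => hu ⟨s, hs, h⟩
      have F1 : Fam I H t (Function.update w s0 (w s0 ++ [e])) (Function.update en s0 y) := by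
        refine F.update ((F.wk s0 hs).append (Wk.single heI)) ?_ ?_ ?_ ?_
        · obtain ⟨m, hm⟩ := F.hd s0 hs
          exact ⟨m ++ [e], by rw [hm]; rfl⟩
        · refine List.nodup_append.2 ⟨F.nd s0 hs, by simp, ?_⟩
          rintro f hf g hg rfl
          simp at hg; subst hg
          exact hu' s0 hs hf
        · intro f hf
          rcases List.mem_append.1 hf with h | h
          · exact F.sub s0 hs f h
          · simp at h; subst h; exact heH
        · intro s' hs' hne f hf hf'
          rcases List.mem_append.1 hf with h | h
          · exact hne (F.dj s' hs' s0 hs f hf' h)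
          · simp at h; subst h; exact hu' s' hs' hf'
      have hUD2 : ∀ c f d, c ≠ en s0 → UD I H t (Function.update w s0 (w s0 ++ [e])) c f d
            → UD I H t w c f d := by
        rintro c f d hcx ⟨r, hr, m1, m2, hm, hm1, hm2⟩
        by_cases h : r = s0
        · subst h
          rw [Function.update_self] at hm
          rcases List.append_eq_append_iff.1 hm with ⟨k, hk1, hk2⟩ | ⟨k, hk1, hk2⟩
          · cases k with
            | nil =>
              simp at hk1
              rw [hk1] at hm1
              exact absurd (hm1.unique (F.wk r hr)) hcx
            | cons g k => simp at hk2
          · cases k with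
            | nil =>
              simp at hk1
              rw [← hk1] at hm1
              exact absurd (hm1.unique (F.wk r hr)) hcx
            | cons g k =>
              simp at hk2
              obtain ⟨rfl, hk2⟩ := hk2
              exact ⟨r, hr, m1, k, hk1, hm1, hm2⟩
        · rw [Function.update_of_ne h] at hm
          exact ⟨r, hr, m1, m2, hm, hm1, hm2⟩
      obtain ⟨w', en', F', π, h1, h2, h3⟩ := ih _ _ s0 z F1 hs (by
        rw [Function.update_self]
        exact hc.mono hxn (fun c d hcx ⟨f, hf1, hf2, hf3, hf4⟩ =>
          ⟨f, hf1, hf2, hf3, fun h => hf4 (hUD2 _ _ _ hcx h)⟩)) (by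
        rw [Function.update_self]; exact hyn)
      refine ⟨w', en', F', π, h1, ?_, ?_⟩
      · intro r hr
        rw [h2 r hr, Function.update_idem]
      · refine (h3.union (Set.finite_singleton s0)).subset ?_
        intro r hr
        by_cases h : r = s0
        · exact Or.inr h
        · left
          simpa [h] using hr

/-- a tight set: all edges are used outwards. -/
structure Tight (I : E → Sym2 V) (H : Set E) (t : V) (w : E → List E) (X : Set V) : Prop where
  mem : t ∈ X
  out : ∀ g ∈ H, ∀ u v, I g = s(u, v) → u ∈ X → v ∉ X → UD I H t w u g v
  inn : ∀ g u v, u ∈ X → v ∉ X → ¬ UD I H t w v g u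

theorem UD.anti (F : Fam I H t w en) {a b : V} {g : E} (h : UD I H t w a g b)
    (h' : UD I H t w b g a) : a = b := by
  obtain ⟨s, hs, l1, l2, h1, h2, h3⟩ := h
  obtain ⟨s', hs', m1, m2, h1', h2', h3'⟩ := h'
  obtain rfl := F.dj s hs s' hs' g (by simp [h1]) (by simp [h1'])
  have hn := F.nd s hs
  have hnd := hn
  rw [h1] at hnd
  have hnd' := hn
  rw [h1'] at hnd'
  rw [h1] at h1'
  have e1 : g ∉ l1 := fun h => (List.nodup_append.1 hnd).2.2 g h g (by simp) rfl
  have e2 : g ∉ m1 := fun h => (List.nodup_append.1 hnd').2.2 g h g (by simp) rfl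
  have : l1 = m1 := by
    rcases List.append_eq_append_iff.1 h1' with ⟨k, hk1, hk2⟩ | ⟨k, hk1, hk2⟩
    · cases k with
      | nil => simp at hk1; exact hk1.symm
      | cons c k => simp at hk2; exfalso; apply e2; rw [hk1, hk2.1]; simp
    · cases k with
      | nil => simp at hk1; exact hk1
      | cons c k => simp at hk2; exfalso; apply e1; rw [hk1, hk2.1]; simp
  subst this
  exact h2.unique h2'

open Classical in
theorem Fam.dichotomy (F : Fam I H t w en) {s0 : E} (hs : s0 ∈ Src I H t) (hB : t ∉ B) :
    (∃ z ∈ B, ∃ w' en', Fam I H t w' en' ∧ ∃ π : Equiv.Perm E,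
      (∀ s, π s ∈ Src I H t ↔ s ∈ Src I H t) ∧
      (∀ s ∈ Src I H t, en' s = Function.update en s0 z (π s)) ∧ {s | w' s ≠ w s}.Finite) ∨
    ∃ X, en s0 ∈ X ∧ Disjoint X B ∧ Tight I H t w X := by
  by_cases h : ∃ z ∈ B, Relation.ReflTransGen (Stp I H t w) (en s0) z
  · left
    obtain ⟨z, hz, h⟩ := h
    obtain ⟨l, hl1, hl2⟩ := exists_ch h
    exact ⟨z, hz, Fam.augment l w en s0 z F hs hl1 hl2⟩
  · right
    refine ⟨insert t {z | Relation.ReflTransGen (Stp I H t w) (en s0) z}, ?_, ?_, ?_⟩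
    · right; exact Relation.ReflTransGen.refl
    · rw [Set.disjoint_left]
      rintro a (rfl | ha) haB
      · exact hB haB
      · exact h ⟨a, haB, ha⟩
    · refine ⟨by simp, ?_, ?_⟩
      · rintro g hg u v hI hu hv
        simp only [Set.mem_insert_iff, Set.mem_ofPred_eq, not_or] at hv
        rcases hu with rfl | hu
        · have hgS : g ∈ Src I H u := mem_Src.2 ⟨hg, v, hv.1, hI⟩
          obtain ⟨l, hl⟩ := F.hd g hgS
          exact ⟨g, hgS, [], l, hl, Wk.nil _, hI⟩
        · by_contra hud
          exact hv.2 (Relation.ReflTransGen.tail hu ⟨g, hg, hI, hv.1, hud⟩)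
      · rintro g u v hu hv hud
        simp only [Set.mem_insert_iff, Set.mem_ofPred_eq, not_or] at hv
        have hud0 := hud
        obtain ⟨s, hsS, l1, l2, h1, h2, h3⟩ := hud
        have hgH : g ∈ H := F.sub s hsS g (by simp [h1])
        have h3' : I g = s(u, v) := by rw [h3, Sym2.eq_swap]
        rcases hu with rfl | hu
        · have hgS : g ∈ Src I H u := mem_Src.2 ⟨hgH, v, hv.1, h3'⟩
          obtain ⟨l, hl⟩ := F.hd g hgS
          have := UD.anti F hud0 ⟨g, hgS, [], l, hl, Wk.nil _, h3'⟩
          exact hv.1 this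
        · refine hv.2 (Relation.ReflTransGen.tail hu ⟨g, hgH, h3', hv.1, fun h' => ?_⟩)
          have := UD.anti F hud0 h'
          rw [this] at hv
          exact hv.2 hu

theorem Tight.pref (hX : Tight I H t w X) {s : E} (hs : s ∈ Src I H t) {l1 l2 : List E} {u : V}
    (h : w s = l1 ++ l2) (h1 : Wk I t l1 u) (hu : u ∈ X) : ∀ e ∈ l1, e ∈ Ins I X := by
  intro e he
  obtain ⟨m1, m2, rfl⟩ := List.append_of_mem he
  have key : ∀ k1 k2 d, m1 ++ e :: m2 = k1 ++ k2 → Wk I t k1 d → d ∈ X := by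
    intro k1 k2 d hk hd
    by_contra hdX
    rw [hk] at h1
    obtain ⟨d', hd1, hd2⟩ := Wk.append_iff.1 h1
    obtain rfl := hd.unique hd1
    obtain ⟨n1, f, n2, p, q, hn, hn1, hn2, hn3, hn4, hn5⟩ :=
      hd2.crossing (X := Xᶜ) hdX (by simpa using hu)
    refine hX.inn f q p (by simpa using hn5) hn4 ⟨s, hs, k1 ++ n1, n2 ++ l2, ?_, hd.append hn1, hn2⟩
    rw [h, hk, hn]; simp
  obtain ⟨a, ha1, ha2⟩ := Wk.append_iff.1 h1
  obtain ⟨b, hb1, hb2⟩ := Wk.cons_iff.1 ha2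
  rw [mem_Ins hb1]
  exact ⟨key m1 _ a rfl ha1, key (m1 ++ [e]) m2 b (by simp) (ha1.append (Wk.single hb1))⟩

end LK

namespace LK
variable {V : Type u} {E : Type v} {I : E → Sym2 V}
variable {H : Set E} {t : V} {w : E → List E} {en : E → V} {T B X Y : Set V}

/-- shelters -/
structure Shel (I : E → Sym2 V) (H : Set E) (T : Set V) (Y : Set V) (q : E → List E) : Prop where
  wk : ∀ g ∈ H, ∀ u v, I g = s(u, v) → u ∈ Y → v ∉ Y → ∃ st ∈ T, st ∈ Y ∧ Wk I u (q g) st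
  nd : ∀ g ∈ Dl I Y ∩ H, (q g).Nodup
  sub : ∀ g ∈ Dl I Y ∩ H, ∀ e ∈ q g, e ∈ H ∧ e ∈ Ins I Y
  dj : ∀ g ∈ Dl I Y ∩ H, ∀ g' ∈ Dl I Y ∩ H, ∀ e, e ∈ q g → e ∈ q g' → g = g'

theorem Fam.unique_split (F : Fam I H t w en) {s s' e : E} {l1 l2 m1 m2 : List E}
    (hs : s ∈ Src I H t) (hs' : s' ∈ Src I H t) (h : w s = l1 ++ e :: l2)
    (h' : w s' = m1 ++ e :: m2) : s = s' ∧ l1 = m1 ∧ l2 = m2 := by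
  obtain rfl := F.dj s hs s' hs' e (by simp [h]) (by simp [h'])
  have hn := F.nd s hs
  have hnd := hn
  rw [h] at hnd
  have hnd' := hn
  rw [h'] at hnd'
  rw [h] at h'
  have e1 : e ∉ l1 := fun h => (List.nodup_append.1 hnd).2.2 e h e (by simp) rfl
  have e2 : e ∉ m1 := fun h => (List.nodup_append.1 hnd').2.2 e h e (by simp) rfl
  have : l1 = m1 := by
    rcases List.append_eq_append_iff.1 h' with ⟨k, hk1, hk2⟩ | ⟨k, hk1, hk2⟩
    · cases k with
      | nil => simp at hk1; exact hk1.symm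
      | cons c k => simp at hk2; exfalso; apply e2; rw [hk1, hk2.1]; simp
    · cases k with
      | nil => simp at hk1; exact hk1
      | cons c k => simp at hk2; exfalso; apply e1; rw [hk1, hk2.1]; simp
  subst this
  simp at h'
  exact ⟨rfl, rfl, h'⟩

theorem Tight.shel (hX : Tight I H t w X) (F : Fam I H t w en) (ht : t ∈ T) :
    ∃ q, Shel I H T X q := by
  classical
  have : ∀ g, ∃ r : List E, g ∈ Dl I X ∩ H → ∃ s ∈ Src I H t, ∃ l1 l2 u v, w s = l1 ++ g :: l2 ∧
      Wk I t l1 u ∧ I g = s(u, v) ∧ u ∈ X ∧ v ∉ X ∧ r = l1.reverse := by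
    intro g
    by_cases hg : g ∈ Dl I X ∩ H
    · obtain ⟨⟨u, v, h1, h2, h3⟩, h⟩ := hg
      obtain ⟨s, hs, l1, l2, h4, h5, h6⟩ := hX.out g h u v h1 h2 h3
      exact ⟨l1.reverse, fun _ => ⟨s, hs, l1, l2, u, v, h4, h5, h6, h2, h3, rfl⟩⟩
    · exact ⟨[], fun h => absurd h hg⟩
  choose q hq using this
  refine ⟨q, ?_, ?_, ?_, ?_⟩
  · intro g hg u v hI hu hv
    obtain ⟨s, hs, l1, l2, u', v', h1, h2, h3, h4, h5, h6⟩ := hq g ⟨⟨u, v, hI, hu, hv⟩, hg⟩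
    refine ⟨t, ht, hX.mem, ?_⟩
    rw [hI] at h3
    rcases Sym2.eq_iff.1 h3 with ⟨rfl, rfl⟩ | ⟨rfl, rfl⟩
    · rw [h6]; exact h2.reverse
    · exact absurd h4 hv
  · intro g hg
    obtain ⟨s, hs, l1, l2, u', v', h1, h2, h3, h4, h5, h6⟩ := hq g hg
    rw [h6]
    have := F.nd s hs
    rw [h1] at this
    exact List.nodup_reverse.2 (List.nodup_append.1 this).1
  · intro g hg e he
    obtain ⟨s, hs, l1, l2, u', v', h1, h2, h3, h4, h5, h6⟩ := hq g hg
    rw [h6, List.mem_reverse] at he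
    exact ⟨F.sub s hs e (by simp [h1, he]), hX.pref hs h1 h2 h4 e he⟩
  · intro g hg g' hg' e he he'
    obtain ⟨s, hs, l1, l2, u, v, h1, h2, h3, h4, h5, h6⟩ := hq g hg
    obtain ⟨s', hs', l1', l2', u', v', h1', h2', h3', h4', h5', h6'⟩ := hq g' hg'
    rw [h6, List.mem_reverse] at he
    rw [h6', List.mem_reverse] at he'
    obtain rfl := F.dj s hs s' hs' e (by simp [h1, he]) (by simp [h1', he'])
    by_contra hne
    have n1 : ∀ e ∈ l1, e ∈ Ins I X := hX.pref hs h1 h2 h4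
    have n2 : ∀ e ∈ l1', e ∈ Ins I X := hX.pref hs h1' h2' h4'
    have g1 : g ∉ l1' := fun h => h5 ((mem_Ins h3).1 (n2 g h)).2
    have g2 : g' ∉ l1 := fun h => h5' ((mem_Ins h3').1 (n1 g' h)).2
    rw [h1] at h1'
    rcases List.append_eq_append_iff.1 h1' with ⟨k, hk1, hk2⟩ | ⟨k, hk1, hk2⟩
    · cases k with
      | nil => simp at hk2; exact hne hk2.1
      | cons c k => simp at hk2; apply g1; rw [hk1, hk2.1]; simp
    · cases k with
      | nil => simp at hk2; exact hne hk2.1.symm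
      | cons c k => simp at hk2; apply g2; rw [hk1, hk2.1]; simp

theorem Clean.mono {a : V} {l : List E} (h : Clean I B a l) (hY : Y ⊆ B) : Clean I Y a l :=
  fun m1 m2 d h1 h2 h3 h4 => h m1 m2 d h1 h2 h3 (hY h4)

theorem Clean.not_ins {a b : V} {l : List E} (h : Clean I B a l) (hw : Wk I a l b) :
    ∀ e ∈ l, e ∉ Ins I B := by
  intro e he he'
  obtain ⟨m1, m2, rfl⟩ := List.append_of_mem he
  obtain ⟨d, hd1, hd2⟩ := Wk.append_iff.1 hw
  obtain ⟨c, hc1, hc2⟩ := Wk.cons_iff.1 hd2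
  exact h m1 _ d rfl (by simp) hd1 ((mem_Ins hc1).1 he').1

theorem Wk.trunc {a b : V} {l : List E} (h : Wk I a l b) (B : Set V) :
    ∃ l1 l2 c, l = l1 ++ l2 ∧ Wk I a l1 c ∧ Clean I B a l1 ∧ (c ∈ B ∨ c = b) := by
  obtain ⟨l1, l2, c, h1, h2, h3, h4, h5⟩ := h.firstHit (B := insert b B) (by simp)
  refine ⟨l1, l2, c, h1, h2, h5.mono (by simp), ?_⟩
  rcases h4 with h | h
  · exact Or.inr h
  · exact Or.inl h

theorem Clean.last {a b : V} {l : List E} (h : Clean I B a l) (hw : Wk I a l b) (ha : a ∉ B)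
    (hb : b ∈ B) : ∃ m g u, l = m ++ [g] ∧ I g = s(b, u) ∧ u ∉ B := by
  have hl : l ≠ [] := by
    rintro rfl
    rw [Wk.nil_iff] at hw
    exact ha (hw ▸ hb)
  obtain ⟨m, g, rfl⟩ : ∃ m g, l = m ++ [g] := ⟨l.dropLast, l.getLast hl, (List.dropLast_append_getLast hl).symm⟩
  obtain ⟨d, hd1, hd2⟩ := Wk.append_iff.1 hw
  obtain ⟨c, hc1, hc2⟩ := Wk.cons_iff.1 hd2
  rw [Wk.nil_iff] at hc2
  subst hc2
  exact ⟨m, g, d, rfl, by rw [hc1, Sym2.eq_swap], h m [g] d rfl (by simp) hd1⟩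

/-- Following a shelter. -/
theorem Shel.follow {q : E → List E} (hS : Shel I H T Y q) (J : Set E) (p : E → List E)
    (a en : E → V) (ha : ∀ j ∈ J, a j ∉ Y) (hw : ∀ j ∈ J, Wk I (a j) (p j) (en j))
    (hn : ∀ j ∈ J, (p j).Nodup) (hH : ∀ j ∈ J, ∀ e ∈ p j, e ∈ H)
    (hd : ∀ j ∈ J, ∀ j' ∈ J, ∀ e, e ∈ p j → e ∈ p j' → j = j')
    (hc : ∀ j ∈ J, Clean I Y (a j) (p j)) :
    ∃ (r : E → List E) (en' : E → V), ∀ j ∈ J, Wk I (a j) (p j ++ r j) (en' j) ∧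
      (p j ++ r j).Nodup ∧ (∀ e ∈ r j, e ∈ H ∧ e ∈ Ins I Y) ∧
      (en' j ∈ T ∩ Y ∨ (r j = [] ∧ en' j = en j ∧ en j ∉ Y)) ∧
      (r j = [] ∨ ∃ h ∈ p j, h ∈ Dl I Y ∩ H ∧ r j = q h) ∧
      (∀ j' ∈ J, ∀ e, e ∈ p j ++ r j → e ∈ p j' ++ r j' → j = j') := by
  classical
  have : ∀ j, ∃ (r : List E) (en' : V), j ∈ J → Wk I (a j) (p j ++ r) en' ∧
      (en' ∈ T ∩ Y ∨ (r = [] ∧ en' = en j ∧ en j ∉ Y)) ∧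
      (r = [] ∨ ∃ h ∈ p j, h ∈ Dl I Y ∩ H ∧ r = q h) := by
    intro j
    by_cases hj : j ∈ J
    · by_cases hY : en j ∈ Y
      · obtain ⟨m, g, u, h1, h2, h3⟩ := (hc j hj).last (hw j hj) (ha j hj) hY
        have hg : g ∈ p j := by simp [h1]
        have hgH := hH j hj g hg
        obtain ⟨st, hs1, hs2, hs3⟩ := hS.wk g hgH _ _ h2 hY h3
        exact ⟨q g, st, fun _ => ⟨(hw j hj).append hs3, Or.inl ⟨hs1, hs2⟩,
          Or.inr ⟨g, hg, ⟨⟨_, _, h2, hY, h3⟩, hgH⟩, rfl⟩⟩⟩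
      · exact ⟨[], en j, fun _ => ⟨by simpa using hw j hj, Or.inr ⟨rfl, rfl, hY⟩, Or.inl rfl⟩⟩
    · exact ⟨[], en j, fun h => absurd h hj⟩
  choose r en' hr using this
  have hsub : ∀ j ∈ J, ∀ e ∈ r j, e ∈ H ∧ e ∈ Ins I Y := by
    intro j hj e he
    obtain ⟨h1, h2, h3⟩ := hr j hj
    rcases h3 with h3 | ⟨g, hg1, hg2, hg3⟩
    · rw [h3] at he; simp at he
    · rw [hg3] at he; exact hS.sub g hg2 e he
  have hpr : ∀ j ∈ J, ∀ j' ∈ J, ∀ e ∈ p j, e ∉ r j' := by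
    intro j hj j' hj' e he he'
    exact (hc j hj).not_ins (hw j hj) e he (hsub j' hj' e he').2
  refine ⟨r, en', fun j hj => ?_⟩
  obtain ⟨h1, h2, h3⟩ := hr j hj
  refine ⟨h1, ?_, hsub j hj, h2, h3, ?_⟩
  · refine List.nodup_append.2 ⟨hn j hj, ?_, ?_⟩
    · rcases h3 with h3 | ⟨g, hg1, hg2, hg3⟩
      · rw [h3]; simp
      · rw [hg3]; exact hS.nd g hg2
    · rintro e he _ he' rfl
      exact hpr j hj j hj e he he'
  · intro j' hj' e he he'
    rcases List.mem_append.1 he with he | he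
    · rcases List.mem_append.1 he' with he' | he'
      · exact hd j hj j' hj' e he he'
      · exact absurd he' (hpr j hj j' hj' e he)
    · rcases List.mem_append.1 he' with he' | he'
      · exact absurd he (hpr j' hj' j hj e he')
      · obtain ⟨_, _, h3'⟩ := hr j' hj'
        rcases h3 with h3 | ⟨g, hg1, hg2, hg3⟩
        · rw [h3] at he; simp at he
        · rcases h3' with h3' | ⟨g', hg1', hg2', hg3'⟩
          · rw [h3'] at he'; simp at he'
          · rw [hg3] at he
            rw [hg3'] at he'
            obtain rfl := hS.dj g hg2 g' hg2' e he he'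
            exact hd j hj j' hj' g hg1 hg1'

theorem Shel.link {q : E → List E} (hS : Shel I H T Y q) (htY : t ∉ Y)
    (h : LinkedTo I H t ((T \ {t}) ∪ Y)) : LinkedTo I H t (T \ {t}) := by
  obtain ⟨w, en, F, hw⟩ := h.trim (by simp [htY])
  obtain ⟨r, en', h⟩ := hS.follow (Src I H t) w (fun _ => t) en (fun _ _ => htY) F.wk F.nd F.sub
    F.dj (fun s hs => ((hw s hs).2).mono (by simp))
  refine ⟨fun s => w s ++ r s, en', ⟨?_, ?_, ?_, ?_, ?_⟩, ?_⟩
  · intro s hs; exact (h s hs).1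
  · intro s hs
    obtain ⟨l, hl⟩ := F.hd s hs
    exact ⟨l ++ r s, by simp [hl]⟩
  · intro s hs; exact (h s hs).2.1
  · intro s hs e he
    rcases List.mem_append.1 he with he | he
    · exact F.sub s hs e he
    · exact ((h s hs).2.2.1 e he).1
  · intro s hs; exact (h s hs).2.2.2.2.2
  · intro s hs
    rcases (h s hs).2.2.2.1 with h1 | ⟨h1, h2, h3⟩
    · refine ⟨h1.1, ?_⟩
      rintro rfl
      exact htY h1.2
    · rw [h2]
      rcases (hw s hs).1 with h4 | h4
      · exact h4
      · exact absurd h4 h3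

theorem Dl_union {g : E} (h : g ∈ Dl I (Y ∪ X)) : g ∈ Dl I Y ∨ g ∈ Dl I X := by
  obtain ⟨u, v, h1, h2, h3⟩ := h
  simp only [Set.mem_union, not_or] at h3
  rcases h2 with h2 | h2
  · exact Or.inl ⟨u, v, h1, h2, h3.1⟩
  · exact Or.inr ⟨u, v, h1, h2, h3.2⟩

theorem Ins_mono (h : Y ⊆ X) : Ins I Y ⊆ Ins I X := fun _ he x hx => h (he x hx)

theorem not_Ins_of_Dl {g : E} (h : g ∈ Dl I Y) : g ∉ Ins I Y := by
  obtain ⟨u, v, h1, h2, h3⟩ := h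
  rw [mem_Ins h1]
  exact fun h => h3 h.2

theorem Shel.merge {q q' : E → List E} (hS : Shel I H T Y q) (hS' : Shel I H T X q') :
    ∃ q'', Shel I H T (Y ∪ X) q'' ∧ ∀ g ∈ Dl I Y ∩ Dl I (Y ∪ X), q'' g = q g := by
  classical
  -- truncated trails for the second type of edges
  let J : Set E := {g | g ∈ Dl I (Y ∪ X) ∩ H ∧ g ∉ Dl I Y}
  have hJ : ∀ g ∈ J, ∃ u v, I g = s(u, v) ∧ u ∈ X ∧ u ∉ Y ∧ v ∉ Y ∪ X := by
    rintro g ⟨⟨⟨u, v, h1, h2, h3⟩, _⟩, h4⟩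
    rw [mem_Dl h1] at h4
    simp only [Set.mem_union] at h2 h3
    refine ⟨u, v, h1, ?_, ?_, h3⟩ <;> tauto
  have hJX : ∀ g ∈ J, g ∈ Dl I X ∩ H := by
    intro g hg
    obtain ⟨u, v, h1, h2, h3, h4⟩ := hJ g hg
    exact ⟨⟨u, v, h1, h2, fun h => h4 (Or.inr h)⟩, hg.1.2⟩
  have : ∀ g, ∃ (u : V) (p : List E) (c : V), g ∈ J → (∃ v, I g = s(u, v) ∧ u ∈ X ∧ u ∉ Y ∧ v ∉ Y ∪ X) ∧
      (∃ m, q' g = p ++ m) ∧ Wk I u p c ∧ Clean I Y u p ∧ (c ∈ Y ∨ c ∈ T ∩ X) := by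
    intro g
    by_cases hg : g ∈ J
    · obtain ⟨u, v, h1, h2, h3, h4⟩ := hJ g hg
      obtain ⟨st, hs1, hs2, hs3⟩ := hS'.wk g hg.1.2 u v h1 h2 (fun h => h4 (Or.inr h))
      obtain ⟨l1, l2, c, e1, e2, e3, e4⟩ := hs3.trunc Y
      refine ⟨u, l1, c, fun _ => ⟨⟨v, h1, h2, h3, h4⟩, ⟨l2, e1⟩, e2, e3, ?_⟩⟩
      rcases e4 with e4 | rfl
      · exact Or.inl e4
      · exact Or.inr ⟨hs1, hs2⟩
    · have : Nonempty V := by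
        exact Sym2.inductionOn (f := fun _ => Nonempty V) (I g) (fun a _ => ⟨a⟩)
      exact ⟨Classical.arbitrary V, [], Classical.arbitrary V, fun h => absurd h hg⟩
  choose a p en hp using this
  have hpq : ∀ g ∈ J, ∀ e ∈ p g, e ∈ q' g := by
    intro g hg e he
    obtain ⟨m, hm⟩ := (hp g hg).2.1
    rw [hm]; simp [he]
  obtain ⟨r, en', hr⟩ := hS.follow J p a en
    (fun g hg => by obtain ⟨v, h1, h2, h3, h4⟩ := (hp g hg).1; exact h3)
    (fun g hg => (hp g hg).2.2.1)
    (fun g hg => by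
      obtain ⟨m, hm⟩ := (hp g hg).2.1
      have := hS'.nd g (hJX g hg)
      rw [hm] at this
      exact (List.nodup_append.1 this).1)
    (fun g hg e he => (hS'.sub g (hJX g hg) e (hpq g hg e he)).1)
    (fun g hg g' hg' e he he' => hS'.dj g (hJX g hg) g' (hJX g' hg') e (hpq g hg e he)
      (hpq g' hg' e he'))
    (fun g hg => (hp g hg).2.2.2.1)
  have hcross : ∀ g ∈ Dl I (Y ∪ X) ∩ H, g ∈ Dl I Y → ∀ g' ∈ J, ∀ e, e ∈ q g → e ∉ p g' ++ r g' := by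
    intro g hg hgY g' hg' e he he'
    have heI := (hS.sub g ⟨hgY, hg.2⟩ e he).2
    rcases List.mem_append.1 he' with he' | he'
    · exact (hp g' hg').2.2.2.1.not_ins (hp g' hg').2.2.1 e he' heI
    · rcases (hr g' hg').2.2.2.2.1 with h | ⟨h, hh1, hh2, hh3⟩
      · rw [h] at he'; simp at he'
      · rw [hh3] at he'
        obtain rfl := hS.dj g ⟨hgY, hg.2⟩ h hh2 e he he'
        have := (hS'.sub g' (hJX g' hg') g (hpq g' hg' g hh1)).2
        exact not_Ins_of_Dl hg.1 (Ins_mono Set.subset_union_right this)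
  refine ⟨fun g => if g ∈ Dl I Y then q g else p g ++ r g, ⟨?_, ?_, ?_, ?_⟩, ?_⟩
  · intro g hg u v h1 h2 h3
    have hgD : g ∈ Dl I (Y ∪ X) := ⟨u, v, h1, h2, h3⟩
    simp only [Set.mem_union, not_or] at h3
    by_cases hY : g ∈ Dl I Y
    · simp only [hY, if_true]
      have huY : u ∈ Y := by
        rw [mem_Dl h1] at hY; tauto
      obtain ⟨st, hs1, hs2, hs3⟩ := hS.wk g hg u v h1 huY h3.1
      exact ⟨st, hs1, Or.inl hs2, hs3⟩
    · simp only [hY, if_false]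
      have hgJ : g ∈ J := ⟨⟨hgD, hg⟩, hY⟩
      obtain ⟨⟨v', k1, k2, k3, k4⟩, -, -, -, k5⟩ := hp g hgJ
      obtain ⟨m1, m2, m3, m4, m5, m6⟩ := hr g hgJ
      have hau : a g = u := by
        rw [h1] at k1
        rcases Sym2.eq_iff.1 k1 with ⟨rfl, rfl⟩ | ⟨rfl, rfl⟩
        · rfl
        · exact absurd k2 h3.2
      rw [hau] at m1
      refine ⟨en' g, ?_, ?_, m1⟩
      · rcases m4 with m4 | ⟨_, m4, m4'⟩
        · exact m4.1
        · rw [m4]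
          rcases k5 with k5 | k5
          · exact absurd k5 m4'
          · exact k5.1
      · rcases m4 with m4 | ⟨_, m4, m4'⟩
        · exact Or.inl m4.2
        · rw [m4]
          rcases k5 with k5 | k5
          · exact absurd k5 m4'
          · exact Or.inr k5.2
  · intro g hg
    by_cases hY : g ∈ Dl I Y
    · simp only [hY, if_true]
      exact hS.nd g ⟨hY, hg.2⟩
    · simp only [hY, if_false]
      exact (hr g ⟨hg, hY⟩).2.1
  · intro g hg e he
    by_cases hY : g ∈ Dl I Y
    · simp only [hY, if_true] at he
      have := hS.sub g ⟨hY, hg.2⟩ e he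
      exact ⟨this.1, Ins_mono Set.subset_union_left this.2⟩
    · simp only [hY, if_false] at he
      have hgJ : g ∈ J := ⟨hg, hY⟩
      rcases List.mem_append.1 he with he | he
      · have := hS'.sub g (hJX g hgJ) e (hpq g hgJ e he)
        exact ⟨this.1, Ins_mono Set.subset_union_right this.2⟩
      · have := (hr g hgJ).2.2.1 e he
        exact ⟨this.1, Ins_mono Set.subset_union_left this.2⟩
  · intro g hg g' hg' e he he'
    by_cases hY : g ∈ Dl I Y
    · by_cases hY' : g' ∈ Dl I Y
      · simp only [hY, hY', if_true] at he he'
        exact hS.dj g ⟨hY, hg.2⟩ g' ⟨hY', hg'.2⟩ e he he'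
      · simp only [hY, hY', if_true, if_false] at he he'
        exact absurd he' (hcross g hg hY g' ⟨hg', hY'⟩ e he)
    · by_cases hY' : g' ∈ Dl I Y
      · simp only [hY, hY', if_true, if_false] at he he'
        exact absurd he (hcross g' hg' hY' g ⟨hg, hY⟩ e he')
      · simp only [hY, hY', if_false] at he he'
        exact (hr g ⟨hg, hY⟩).2.2.2.2.2 g' ⟨hg', hY'⟩ e he he'
  · rintro g ⟨hg, -⟩
    simp [hg]

theorem Shel.sUnion (𝒳 : Set (Set V)) (h : ∀ X ∈ 𝒳, ∃ q, Shel I H T X q) :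
    ∃ q, Shel I H T (⋃₀ 𝒳) q := by
  classical
  let S := {p : Set V × (E → List E) // Shel I H T p.1 p.2 ∧ p.1 ⊆ ⋃₀ 𝒳}
  let r : S → S → Prop := fun a b => a.1.1 ⊆ b.1.1 ∧
    ∀ g ∈ Dl I a.1.1 ∩ Dl I b.1.1, b.1.2 g = a.1.2 g
  have hsand : ∀ {A B C : Set V} {g : E}, A ⊆ B → B ⊆ C → g ∈ Dl I A → g ∈ Dl I C → g ∈ Dl I B := by
    intro A B C g hAB hBC hA hC
    obtain ⟨u, v, h1, h2, h3⟩ := hA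
    rw [mem_Dl h1] at hC ⊢
    have a1 := hAB h2
    have a2 := hBC a1
    have a3 : v ∈ B → v ∈ C := fun h => hBC h
    tauto
  have htr : ∀ {a b c : S}, r a b → r b c → r a c := by
    rintro a b c ⟨h1, h2⟩ ⟨h3, h4⟩
    refine ⟨h1.trans h3, ?_⟩
    rintro g ⟨hg1, hg2⟩
    have := hsand h1 h3 hg1 hg2
    rw [h4 g ⟨this, hg2⟩, h2 g ⟨hg1, this⟩]
  have hrefl : ∀ a : S, r a a := fun a => ⟨le_rfl, fun _ _ => rfl⟩
  have htot : ∀ {c : Set S} {a b : S}, IsChain r c → a ∈ c → b ∈ c → r a b ∨ r b a := by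
    intro c a b hc ha hb
    by_cases h : a = b
    · subst h; exact Or.inl (hrefl a)
    · exact hc ha hb h
  obtain ⟨m, hm⟩ := exists_maximal_of_chains_bounded (r := r) (by
    intro c hc
    let U : Set V := {x | ∃ a ∈ c, x ∈ a.1.1}
    have hq : ∀ g, ∃ l, ∀ a ∈ c, g ∈ Dl I a.1.1 → g ∈ Dl I U → a.1.2 g = l := by
      intro g
      by_cases hg : ∃ a ∈ c, g ∈ Dl I a.1.1
      · obtain ⟨a, ha, hga⟩ := hg
        refine ⟨a.1.2 g, fun b hb hgb _ => ?_⟩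
        rcases htot hc ha hb with h | h
        · exact h.2 g ⟨hga, hgb⟩
        · exact (h.2 g ⟨hgb, hga⟩).symm
      · exact ⟨[], fun a ha hga _ => absurd ⟨a, ha, hga⟩ hg⟩
    choose q hq using hq
    have hsub : ∀ a ∈ c, a.1.1 ⊆ U := fun a ha x hx => ⟨a, ha, hx⟩
    have hmem : ∀ a ∈ c, ∀ g u v, I g = s(u, v) → u ∈ a.1.1 → v ∉ U → g ∈ Dl I a.1.1 ∧ g ∈ Dl I U := by
      intro a ha g u v h1 h2 h3
      exact ⟨⟨u, v, h1, h2, fun h => h3 (hsub a ha h)⟩, ⟨u, v, h1, hsub a ha h2, h3⟩⟩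
    have hex : ∀ g ∈ Dl I U, ∃ a ∈ c, g ∈ Dl I a.1.1 ∧ q g = a.1.2 g := by
      rintro g ⟨u, v, h1, ⟨a, ha, hu⟩, h3⟩
      obtain ⟨h4, h5⟩ := hmem a ha g u v h1 hu h3
      exact ⟨a, ha, h4, (hq g a ha h4 h5).symm⟩
    have hU : Shel I H T U q := by
      refine ⟨?_, ?_, ?_, ?_⟩
      · rintro g hg u v h1 ⟨a, ha, hu⟩ h3
        obtain ⟨h4, h5⟩ := hmem a ha g u v h1 hu h3
        rw [← hq g a ha h4 h5]
        obtain ⟨st, hs1, hs2, hs3⟩ := a.2.1.wk g hg u v h1 hu (fun h => h3 (hsub a ha h))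
        exact ⟨st, hs1, hsub a ha hs2, hs3⟩
      · rintro g ⟨hg, hgH⟩
        obtain ⟨a, ha, h1, h2⟩ := hex g hg
        rw [h2]; exact a.2.1.nd g ⟨h1, hgH⟩
      · rintro g ⟨hg, hgH⟩ e he
        obtain ⟨a, ha, h1, h2⟩ := hex g hg
        rw [h2] at he
        have := a.2.1.sub g ⟨h1, hgH⟩ e he
        exact ⟨this.1, Ins_mono (hsub a ha) this.2⟩
      · rintro g ⟨hg, hgH⟩ g' ⟨hg', hgH'⟩ e he he'
        obtain ⟨a, ha, h1, h2⟩ := hex g hg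
        obtain ⟨b, hb, h1', h2'⟩ := hex g' hg'
        rcases htot hc ha hb with h | h
        · have h3 := hsand h.1 (hsub b hb) h1 hg
          rw [← hq g b hb h3 hg] at he
          rw [h2'] at he'
          exact b.2.1.dj g ⟨h3, hgH⟩ g' ⟨h1', hgH'⟩ e he he'
        · have h3 := hsand h.1 (hsub a ha) h1' hg'
          rw [← hq g' a ha h3 hg'] at he'
          rw [h2] at he
          exact a.2.1.dj g ⟨h1, hgH⟩ g' ⟨h3, hgH'⟩ e he he'
    refine ⟨⟨(U, q), hU, ?_⟩, ?_⟩
    · rintro x ⟨a, ha, hx⟩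
      exact a.2.2 hx
    · intro a ha
      refine ⟨hsub a ha, ?_⟩
      rintro g ⟨h1, h2⟩
      exact (hq g a ha h1 h2).symm) htr
  have : m.1.1 = ⋃₀ 𝒳 := by
    refine subset_antisymm m.2.2 ?_
    rintro x ⟨X, hX, hx⟩
    obtain ⟨q', hq'⟩ := h X hX
    obtain ⟨q'', h1, h2⟩ := m.2.1.merge hq'
    have := hm ⟨(m.1.1 ∪ X, q''), h1, Set.union_subset m.2.2 (Set.subset_sUnion_of_mem hX)⟩
      ⟨Set.subset_union_left, h2⟩
    exact this.1 (Or.inr hx)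
  have h' : ∃ q, Shel I H T m.1.1 q := ⟨_, m.2.1⟩
  rwa [this] at h'

end LK

namespace LK
variable {V : Type u} {E : Type v} {I : E → Sym2 V}
variable {H : Set E} {t : V} {w : E → List E} {en : E → V} {T B X Y : Set V}

theorem Src_mono {H' : Set E} (h : H' ⊆ H) : Src I H' t ⊆ Src I H t :=
  fun _ hs => ⟨hs.1, h hs.2⟩

theorem Fam.restrict (F : Fam I H t w en) {H' : Set E} (h : H' ⊆ H)
    (h' : ∀ s ∈ Src I H' t, ∀ e ∈ w s, e ∈ H') : Fam I H' t w en :=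
  ⟨fun s hs => F.wk s (Src_mono h hs), fun s hs => F.hd s (Src_mono h hs),
    fun s hs => F.nd s (Src_mono h hs), h',
    fun s hs s' hs' => F.dj s (Src_mono h hs) s' (Src_mono h hs')⟩

theorem Fam.ne_start (F : Fam I H t w en) {s : E} (hs : s ∈ Src I H t) {l1 l2 : List E} {d : V}
    (h : w s = l1 ++ l2) (h1 : l1 ≠ []) (hd : Wk I t l1 d) : d ≠ t := by
  rintro rfl
  obtain ⟨l, hl⟩ := F.hd s hs
  obtain ⟨hsH, y, hy, hI⟩ := mem_Src.1 hs
  have hnd := F.nd s hs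
  cases l1 with
  | nil => exact h1 rfl
  | cons a k =>
    rw [hl] at h
    simp only [List.cons_append, List.cons.injEq] at h
    obtain ⟨rfl, hlk⟩ := h
    obtain ⟨y', hy1, hy2⟩ := Wk.cons_iff.1 hd
    rw [hI] at hy1
    obtain rfl := Sym2.congr_right.1 hy1
    obtain ⟨m1, f, m2, u, v, e1, e2, e3, e4, e5, e6⟩ := hy2.crossing (X := {d}ᶜ) hy (by simp)
    simp at e5 e6
    subst e6
    have hf : f ∈ w s := by rw [hl, hlk, e1]; simp
    have hfS : f ∈ Src I H v := mem_Src.2 ⟨F.sub s hs f hf, u, e5, by rw [e3, Sym2.eq_swap]⟩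
    obtain rfl := F.dj f hfS s hs f (F.mem_self hfS) hf
    rw [hl, hlk, e1] at hnd
    simp at hnd

open Classical in
theorem parity_step (hIE : IE I T H) (ht : t ∈ T) (F : Fam I H t w en) {s0 : E}
    (hc : ∀ s ∈ Src I H t, s ≠ s0 → en s ∈ T \ {t}) :
    ∃ (u : List E) (s1 : E) (w' : E → List E) (en' : E → V),
      (s0 ∈ Src I H t → (∃ m, u = s0 :: m) ∧ u.Nodup ∧ (∀ e ∈ u, e ∈ H) ∧
        ∃ b ∈ T \ {t}, Wk I t u b) ∧
      IE I T (H \ {e | e ∈ u}) ∧ Fam I (H \ {e | e ∈ u}) t w' en' ∧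
      (∀ s ∈ Src I (H \ {e | e ∈ u}) t, s ≠ s1 → en' s ∈ T \ {t}) ∧
      (∀ s ∈ Src I (H \ {e | e ∈ u}) t, s ≠ s1 → w' s = w s ∧ en' s = en s) ∧
      (∀ s ∈ Src I H t, s ≠ s0 → s ∈ Src I (H \ {e | e ∈ u}) t) := by
  by_cases hs0 : s0 ∈ Src I H t
  swap
  · refine ⟨[], s0, w, en, fun h => absurd h hs0, ?_⟩
    simp only [List.not_mem_nil, Set.ofPred_false, Set.sdiff_empty]
    exact ⟨hIE, F, hc, fun _ _ _ => by simp, fun _ h _ => h⟩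
  have hself : ∀ s ∈ Src I H t, s ∈ w s := fun s hs => F.mem_self hs
  let R : Set E := {e | e ∈ H ∧ ∀ s ∈ Src I H t, e ∉ w s}
  -- finishing
  have fin : ∀ (l : List E) (b : V), (∀ e ∈ l, e ∈ R) → l.Nodup → Wk I (en s0) l b → b ∈ T \ {t} →
    ∃ (u : List E) (s1 : E) (w' : E → List E) (en' : E → V),
      (s0 ∈ Src I H t → (∃ m, u = s0 :: m) ∧ u.Nodup ∧ (∀ e ∈ u, e ∈ H) ∧
        ∃ b ∈ T \ {t}, Wk I t u b) ∧
      IE I T (H \ {e | e ∈ u}) ∧ Fam I (H \ {e | e ∈ u}) t w' en' ∧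
      (∀ s ∈ Src I (H \ {e | e ∈ u}) t, s ≠ s1 → en' s ∈ T \ {t}) ∧
      (∀ s ∈ Src I (H \ {e | e ∈ u}) t, s ≠ s1 → w' s = w s ∧ en' s = en s) ∧
      (∀ s ∈ Src I H t, s ≠ s0 → s ∈ Src I (H \ {e | e ∈ u}) t) := by
    intro l b hl hln hlw hb
    have hn : (w s0 ++ l).Nodup := by
      refine List.nodup_append.2 ⟨F.nd s0 hs0, hln, ?_⟩
      rintro e he _ he' rfl
      exact (hl e he').2 s0 hs0 he
    have hH : ∀ e ∈ w s0 ++ l, e ∈ H := by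
      intro e he
      rcases List.mem_append.1 he with h | h
      · exact F.sub s0 hs0 e h
      · exact (hl e h).1
    have hdis : ∀ s ∈ Src I H t, s ≠ s0 → ∀ e ∈ w s, e ∉ w s0 ++ l := by
      intro s hs hne e he he'
      rcases List.mem_append.1 he' with h | h
      · exact hne (F.dj s hs s0 hs0 e he h)
      · exact (hl e h).2 s hs he
    have hne : ∀ s ∈ Src I (H \ {e | e ∈ w s0 ++ l}) t, s ≠ s0 := by
      rintro s hs rfl
      exact hs.2.2 (List.mem_append_left _ (hself s hs0))
    have hwu := (F.wk s0 hs0).append hlw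
    refine ⟨w s0 ++ l, s0, w, en, fun _ => ⟨?_, hn, hH, b, hb, hwu⟩, hIE.remove hwu hn hH ht hb.1,
      F.restrict Set.sdiff_subset ?_, ?_, fun _ _ _ => ⟨rfl, rfl⟩, ?_⟩
    · obtain ⟨m, hm⟩ := F.hd s0 hs0
      exact ⟨m ++ l, by rw [hm]; rfl⟩
    · intro s hs e he
      have hs' := Src_mono Set.sdiff_subset hs
      exact ⟨F.sub s hs' e he, hdis s hs' (hne s hs) e he⟩
    · intro s hs h; exact hc s (Src_mono Set.sdiff_subset hs) h
    · intro s hs hne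
      exact ⟨hs.1, hs.2, hdis s hs hne s (hself s hs)⟩
  by_cases hp : en s0 ∈ T \ {t}
  · exact fin [] (en s0) (by simp) (by simp) (Wk.nil _) hp
  have hpt : en s0 ≠ t := by
    obtain ⟨m, hm⟩ := F.hd s0 hs0
    exact F.ne_start hs0 (l2 := []) (by simp) (by rw [hm]; simp) (F.wk s0 hs0)
  let C : Set V := {z | ∃ l, Wk I (en s0) l z ∧ ∀ e ∈ l, e ∈ R}
  have htC : t ∉ C := by
    rintro ⟨l, h1, h2⟩
    obtain ⟨m1, f, m2, u, v, e1, e2, e3, e4, e5, e6⟩ := h1.crossing (X := {t}ᶜ) hpt (by simp)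
    simp at e5 e6
    subst e6
    have hf := h2 f (by simp [e1])
    have hfS : f ∈ Src I H v := mem_Src.2 ⟨hf.1, u, e5, by rw [e3, Sym2.eq_swap]⟩
    exact hf.2 f hfS (hself f hfS)
  by_cases hCT : ∃ z ∈ C, z ∈ T
  · obtain ⟨z, ⟨l, hl1, hl2⟩, hz⟩ := hCT
    obtain ⟨l', k1, k2, k3⟩ := hl1.trail
    refine fin l' z (fun e he => hl2 e (k2 e he)) k1 k3 ⟨hz, ?_⟩
    rintro rfl
    exact htC ⟨l, hl1, hl2⟩
  have hCd : Disjoint C T := by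
    rw [Set.disjoint_left]; intro z hz hz'; exact hCT ⟨z, hz, hz'⟩
  have hRC : ∀ e ∈ R, ∀ a b, I e = s(a, b) → a ∈ C → b ∈ C := by
    rintro e he a b hI ⟨l, h1, h2⟩
    refine ⟨l ++ [e], h1.append (Wk.single hI), ?_⟩
    intro f hf
    rcases List.mem_append.1 hf with h | h
    · exact h2 f h
    · simp at h; subst h; exact he
  obtain ⟨s1, hs1, hne1, l1, l2, c, hw1, hl1, hcC⟩ : ∃ s1 ∈ Src I H t, s1 ≠ s0 ∧ ∃ l1 l2 c,
      w s1 = l1 ++ l2 ∧ Wk I t l1 c ∧ c ∈ C := by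
    by_contra hcon
    have hvis : ∀ s ∈ Src I H t, s ≠ s0 → ∀ l1 l2 c, w s = l1 ++ l2 → Wk I t l1 c → c ∉ C :=
      fun s hs h l1 l2 c h1 h2 h3 => hcon ⟨s, hs, h, l1, l2, c, h1, h2, h3⟩
    have heq : Dl I C ∩ H = {e | e ∈ Dl I C ∧ e ∈ w s0} := by
      ext e
      constructor
      · rintro ⟨he, heH⟩
        refine ⟨he, ?_⟩
        by_contra hes
        obtain ⟨a, b, hI, ha, hb⟩ := he
        have hnR : e ∉ R := fun h => hb (hRC e h a b hI ha)
        obtain ⟨s, hs, hes'⟩ : ∃ s ∈ Src I H t, e ∈ w s := by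
          by_contra h
          exact hnR ⟨heH, fun s hs h' => h ⟨s, hs, h'⟩⟩
        have hss : s ≠ s0 := by rintro rfl; exact hes hes'
        obtain ⟨m1, m2, hm⟩ := List.append_of_mem hes'
        have hwk := F.wk s hs
        rw [hm] at hwk
        obtain ⟨d, hd1, hd2⟩ := Wk.append_iff.1 hwk
        obtain ⟨f, hf1, hf2⟩ := Wk.cons_iff.1 hd2
        have q1 := hvis s hs hss m1 _ d hm hd1
        have q2 := hvis s hs hss (m1 ++ [e]) m2 f (by rw [hm]; simp) (hd1.append (Wk.single hf1))
        rw [hI] at hf1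
        rcases Sym2.eq_iff.1 hf1 with ⟨rfl, rfl⟩ | ⟨rfl, rfl⟩
        · exact q1 ha
        · exact q2 ha
      · rintro ⟨h1, h2⟩
        exact ⟨h1, F.sub s0 hs0 e h2⟩
    refine hIE C hCd ⟨?_, ?_⟩
    · rw [heq]; exact finite_list _
    · rw [heq, ncard_filter (F.nd s0 hs0), ← Nat.not_even_iff_odd, (F.wk s0 hs0).parity]
      have : en s0 ∈ C := ⟨[], Wk.nil _, by simp⟩
      tauto
  obtain ⟨D0, hD1, hD2⟩ := hcC
  obtain ⟨D, d1, d2, d3⟩ := hD1.trail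
  have d4 : ∀ e ∈ D, e ∈ R := fun e he => hD2 e (d2 e he)
  have hcC : c ∈ C := ⟨D0, hD1, hD2⟩
  have hl1' : l1 ≠ [] := by
    rintro rfl
    rw [Wk.nil_iff] at hl1
    exact htC (hl1 ▸ hcC)
  have hl2 : Wk I c l2 (en s1) := by
    have := F.wk s1 hs1
    rw [hw1] at this
    obtain ⟨c', q1, q2⟩ := Wk.append_iff.1 this
    rw [hl1.unique q1]; exact q2
  have hnd1 := F.nd s1 hs1
  rw [hw1] at hnd1
  have hl2s : ∀ e ∈ l2, e ∈ w s1 := fun e he => by rw [hw1]; simp [he]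
  have hl1s : ∀ e ∈ l1, e ∈ w s1 := fun e he => by rw [hw1]; simp [he]
  have hd1 : ∃ m, l1 = s1 :: m := by
    obtain ⟨m, hm⟩ := F.hd s1 hs1
    rw [hw1] at hm
    cases l1 with
    | nil => exact absurd rfl hl1'
    | cons a k => simp at hm; exact ⟨k, by rw [hm.1]⟩
  have hmem : ∀ e, e ∈ w s0 ++ (D ++ l2) ↔ e ∈ w s0 ∨ e ∈ D ∨ e ∈ l2 := by
    intro e; simp
  have hn : (w s0 ++ (D ++ l2)).Nodup := by
    refine List.nodup_append.2 ⟨F.nd s0 hs0, List.nodup_append.2 ⟨d1, (List.nodup_append.1 hnd1).2.1, ?_⟩, ?_⟩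
    · rintro e he _ he' rfl
      exact (d4 e he).2 s1 hs1 (hl2s e he')
    · rintro e he _ he' rfl
      rcases List.mem_append.1 he' with h | h
      · exact (d4 e h).2 s0 hs0 he
      · exact hne1 (F.dj s1 hs1 s0 hs0 e (hl2s e h) he)
  have hH : ∀ e ∈ w s0 ++ (D ++ l2), e ∈ H := by
    intro e he
    rcases (hmem e).1 he with h | h | h
    · exact F.sub s0 hs0 e h
    · exact (d4 e h).1
    · exact F.sub s1 hs1 e (hl2s e h)
  have hwu : Wk I t (w s0 ++ (D ++ l2)) (en s1) := (F.wk s0 hs0).append (d3.append hl2)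
  have hb := hc s1 hs1 hne1
  have F1 : Fam I H t (Function.update w s1 l1) (Function.update en s1 c) :=
    F.update hl1 hd1 (List.nodup_append.1 hnd1).1 (fun e he => F.sub s1 hs1 e (hl1s e he))
      (fun s' hs' hne e he he' => hne (F.dj s' hs' s1 hs1 e he' (hl1s e he)))
  have hsub := Set.sdiff_subset (s := H) (t := {e | e ∈ w s0 ++ (D ++ l2)})
  have hne0 : ∀ s ∈ Src I (H \ {e | e ∈ w s0 ++ (D ++ l2)}) t, s ≠ s0 := by
    rintro s hs rfl
    exact hs.2.2 (List.mem_append_left _ (hself s hs0))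
  have hdis : ∀ s ∈ Src I H t, s ≠ s0 → ∀ e ∈ Function.update w s1 l1 s, e ∉ w s0 ++ (D ++ l2) := by
    intro s hs hne e he he'
    have hes : e ∈ w s := by
      by_cases h : s = s1
      · subst h; rw [Function.update_self] at he; exact hl1s e he
      · rwa [Function.update_of_ne h] at he
    rcases (hmem e).1 he' with h | h | h
    · exact hne (F.dj s hs s0 hs0 e hes h)
    · exact (d4 e h).2 s hs hes
    · obtain rfl := F.dj s hs s1 hs1 e hes (hl2s e h)
      rw [Function.update_self] at he
      exact (List.nodup_append.1 hnd1).2.2 e he e h rfl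
  refine ⟨w s0 ++ (D ++ l2), s1, _, _, fun _ => ⟨?_, hn, hH, en s1, hb, hwu⟩,
    hIE.remove hwu hn hH ht hb.1, F1.restrict hsub ?_, ?_, ?_, ?_⟩
  · obtain ⟨m, hm⟩ := F.hd s0 hs0
    exact ⟨m ++ (D ++ l2), by rw [hm]; rfl⟩
  · intro s hs e he
    have hs' := Src_mono hsub hs
    exact ⟨F1.sub s hs' e he, hdis s hs' (hne0 s hs) e he⟩
  · intro s hs h
    rw [Function.update_of_ne h]
    exact hc s (Src_mono hsub hs) (hne0 s hs)
  · intro s hs h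
    rw [Function.update_of_ne h, Function.update_of_ne h]
    exact ⟨rfl, rfl⟩
  · intro s hs hne
    refine ⟨hs.1, hs.2, hdis s hs hne s ?_⟩
    exact F1.mem_self hs

/-- If all but one trail are complete, then `t` is linked. -/
theorem parity_lemma (hIE : IE I T H) (ht : t ∈ T) (F : Fam I H t w en) {s0 : E}
    (hc : ∀ s ∈ Src I H t, s ≠ s0 → en s ∈ T \ {t}) : LinkedTo I H t (T \ {t}) := by
  classical
  let St := {x : Set E × (E → List E) × (E → V) × E // IE I T x.1 ∧ Fam I x.1 t x.2.1 x.2.2.1 ∧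
    ∀ s ∈ Src I x.1 t, s ≠ x.2.2.2 → x.2.2.1 s ∈ T \ {t}}
  have step : ∀ x : St, ∃ (u : List E) (y : St),
      (x.1.2.2.2 ∈ Src I x.1.1 t → (∃ m, u = x.1.2.2.2 :: m) ∧ u.Nodup ∧ (∀ e ∈ u, e ∈ x.1.1) ∧
        ∃ b ∈ T \ {t}, Wk I t u b) ∧ y.1.1 = x.1.1 \ {e | e ∈ u} ∧
      (∀ s ∈ Src I y.1.1 t, s ≠ y.1.2.2.2 → y.1.2.1 s = x.1.2.1 s ∧ y.1.2.2.1 s = x.1.2.2.1 s) ∧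
      (∀ s ∈ Src I x.1.1 t, s ≠ x.1.2.2.2 → s ∈ Src I y.1.1 t) := by
    rintro ⟨⟨H, w, en, s0⟩, h1, h2, h3⟩
    obtain ⟨u, s1, w', en', k1, k2, k3, k4, k5, k6⟩ := parity_step h1 ht h2 h3
    exact ⟨u, ⟨⟨_, w', en', s1⟩, k2, k3, k4⟩, k1, rfl, k5, k6⟩
  choose u nx hu hH hw hS using step
  let x : ℕ → St := fun n => nx^[n] ⟨⟨H, w, en, s0⟩, hIE, F, hc⟩
  have hx : ∀ n, x (n + 1) = nx (x n) := fun n => Function.iterate_succ_apply' _ _ _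
  have hanti : ∀ n m, n ≤ m → (x m).1.1 ⊆ (x n).1.1 := by
    intro n m h
    induction m, h using Nat.le_induction with
    | base => exact le_rfl
    | succ m _ ih =>
      rw [hx, hH]
      exact Set.sdiff_subset.trans ih
  have hdisj : ∀ n m, n < m → ∀ e ∈ (x m).1.1, e ∉ u (x n) := by
    intro n m h e he
    have := hanti (n + 1) m h he
    rw [hx, hH] at this
    exact this.2
  let N : E → Prop := fun s => ∃ n, s ∈ Src I (x n).1.1 t ∧ s = (x n).1.2.2.2
  have hx0 : (x 0).1 = ⟨H, w, en, s0⟩ := rfl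
  have hN : ∀ s ∈ Src I H t, ¬ N s → ∀ n, s ∈ Src I (x n).1.1 t ∧ (x n).1.2.1 s = w s ∧
      (x n).1.2.2.1 s = en s ∧ s ≠ (x n).1.2.2.2 := by
    intro s hs hNs n
    induction n with
    | zero => exact ⟨hs, rfl, rfl, fun h => hNs ⟨0, hs, h⟩⟩
    | succ n ih =>
      have h1 := hS (x n) s ih.1 ih.2.2.2
      rw [← hx] at h1
      have h2 : s ≠ (x (n + 1)).1.2.2.2 := fun h => hNs ⟨n + 1, h1, h⟩
      have h3 := hw (x n) s
      rw [← hx] at h3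
      have h3 := h3 h1 h2
      exact ⟨h1, h3.1.trans ih.2.1, h3.2.trans ih.2.2.1, h2⟩
  have hdef : ∀ s, ∃ (l : List E) (b : V), s ∈ Src I H t → (Wk I t l b ∧ b ∈ T \ {t} ∧ (∃ m, l = s :: m) ∧
      l.Nodup ∧ (∀ e ∈ l, e ∈ H) ∧ ((¬ N s ∧ l = w s) ∨ ∃ n, l = u (x n) ∧ s ∈ Src I (x n).1.1 t ∧
        s = (x n).1.2.2.2)) := by
    intro s
    by_cases hNs : N s
    · obtain ⟨n, h1, h2⟩ := hNs
      obtain ⟨k1, k2, k3, b, k4, k5⟩ := hu (x n) (h2 ▸ h1)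
      exact ⟨u (x n), b, fun _ => ⟨k5, k4, h2 ▸ k1, k2, fun e he => hanti 0 n (by simp) (k3 e he),
        Or.inr ⟨n, rfl, h1, h2⟩⟩⟩
    · refine ⟨w s, en s, fun hs => ⟨F.wk s hs, ?_, F.hd s hs, F.nd s hs, F.sub s hs, Or.inl ⟨hNs, rfl⟩⟩⟩
      exact hc s hs (hN s hs hNs 0).2.2.2
  choose w' en' hw' using hdef
  have hsep : ∀ s ∈ Src I H t, ¬ N s → ∀ n, ∀ e ∈ w s, e ∉ u (x n) := by
    intro s hs hNs n e he
    obtain ⟨k1, k2, -, -⟩ := hN s hs hNs (n + 1)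
    rw [← k2] at he
    exact hdisj n (n + 1) (by simp) e ((x (n + 1)).2.2.1.sub s k1 e he)
  refine ⟨w', en', ⟨fun s hs => (hw' s hs).1, fun s hs => (hw' s hs).2.2.1,
    fun s hs => (hw' s hs).2.2.2.1, fun s hs => (hw' s hs).2.2.2.2.1, ?_⟩, fun s hs => (hw' s hs).2.1⟩
  intro s hs s' hs' e he he'
  rcases (hw' s hs).2.2.2.2.2 with ⟨h1, h2⟩ | ⟨n, h1, h2, h3⟩
  · rcases (hw' s' hs').2.2.2.2.2 with ⟨h1', h2'⟩ | ⟨n', h1', h2', h3'⟩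
    · rw [h2] at he; rw [h2'] at he'
      exact F.dj s hs s' hs' e he he'
    · rw [h2] at he; rw [h1'] at he'
      exact absurd he' (hsep s hs h1 n' e he)
  · rcases (hw' s' hs').2.2.2.2.2 with ⟨h1', h2'⟩ | ⟨n', h1', h2', h3'⟩
    · rw [h1] at he; rw [h2'] at he'
      exact absurd he (hsep s' hs' h1' n e he')
    · rw [h1] at he; rw [h1'] at he'
      rcases lt_trichotomy n n' with h | h | h
      · exact absurd he (hdisj n n' h e ((hu (x n') (h3' ▸ h2')).2.2.1 e he'))
      · subst h; rw [h3, h3']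
      · exact absurd he' (hdisj n' n h e ((hu (x n) (h3 ▸ h2)).2.2.1 e he))

end LK

namespace LK
variable {V : Type u} {E : Type v} {I : E → Sym2 V}
variable {H : Set E} {t : V} {w : E → List E} {en : E → V} {T B X Y : Set V}

theorem Dl_congr {I' : E → Sym2 V} (h : ∀ e ∈ H, I e = I' e) : Dl I X ∩ H = Dl I' X ∩ H := by
  ext e
  constructor
  · rintro ⟨⟨u, v, h1, h2, h3⟩, he⟩
    exact ⟨⟨u, v, (h e he) ▸ h1, h2, h3⟩, he⟩
  · rintro ⟨⟨u, v, h1, h2, h3⟩, he⟩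
    exact ⟨⟨u, v, (h e he) ▸ h1, h2, h3⟩, he⟩

theorem Fam.congr {I' : E → Sym2 V} (F : Fam I H t w en) (h : ∀ e ∈ H, I e = I' e) :
    Fam I' H t w en := by
  have hS : Src I H t = Src I' H t := Dl_congr h
  refine ⟨?_, ?_, ?_, ?_, ?_⟩ <;> rw [← hS]
  · intro s hs
    exact (F.wk s hs).congr (fun e he => h e (F.sub s hs e he))
  · exact F.hd
  · exact F.nd
  · exact F.sub
  · exact F.dj

theorem Nice.congr {I' : E → Sym2 V} (N : Nice I T H) (h : ∀ e ∈ H, I e = I' e) :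
    Nice I' T H := by
  refine ⟨?_, ?_⟩
  · intro X hX
    rw [← Dl_congr h]
    exact N.1 X hX
  · intro t ht
    obtain ⟨w, en, F, hw⟩ := N.2 t ht
    have hS : Src I H t = Src I' H t := Dl_congr h
    exact ⟨w, en, F.congr h, by rwa [← hS]⟩

theorem nice_del_TT (N : Nice I T H) {e : E} {x : V} (ht : t ∈ T) (hx : x ∈ T) (hI : I e = s(t, x))
    (htx : x ≠ t) (he : e ∈ H) : Nice I T (H \ {k | k ∈ [e]}) := by
  refine ⟨N.1.remove (Wk.single hI) (by simp) (by simpa using he) ht hx, ?_⟩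
  intro t' ht'
  obtain ⟨w, en, F, hw⟩ := (N.2 t' ht').trim (by simp)
  have hsub := Set.sdiff_subset (s := H) (t := {k | k ∈ [e]})
  refine ⟨w, en, F.restrict hsub ?_, fun s hs => (hw s (Src_mono hsub hs)).1⟩
  intro s hs f hf
  have hs' := Src_mono hsub hs
  refine ⟨F.sub s hs' f hf, ?_⟩
  intro hfe
  simp at hfe
  subst hfe
  have hsf : s ≠ f := fun h => hs.2.2 (by simp [h])
  by_cases h1 : f ∈ Src I H t'
  · exact hsf (F.dj s hs' f h1 f hf (F.mem_self h1))
  · have h2 : f ∈ Ins I (T \ {t'}) := by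
      rw [mem_Ins hI]
      have : f ∉ Dl I {t'} := fun h => h1 ⟨h, he⟩
      rw [mem_Dl hI] at this
      simp only [Set.mem_singleton_iff] at this
      refine ⟨⟨ht, ?_⟩, ⟨hx, ?_⟩⟩
      · rintro rfl; simp at this; exact htx this
      · rintro rfl; simp at this; exact htx this.symm
    exact (hw s hs').2.not_ins (F.wk s hs') f hf h2

theorem odd_insert {S : Set E} {a : E} (h : a ∉ S) :
    ((insert a S).Finite ∧ Odd (insert a S).ncard) ↔ (S.Finite ∧ ¬ Odd S.ncard) := by
  constructor
  · rintro ⟨h1, h2⟩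
    have hS := h1.subset (Set.subset_insert a S)
    rw [Set.ncard_insert_of_notMem h hS, Nat.odd_add_one] at h2
    exact ⟨hS, h2⟩
  · rintro ⟨h1, h2⟩
    rw [Set.ncard_insert_of_notMem h h1, Nat.odd_add_one]
    exact ⟨h1.insert a, h2⟩

open Classical in
theorem IE_split (hIE : IE I T H) {e f : E} {x y : V} (hI : I e = s(t, x)) (hf : I f = s(x, y))
    (ht : t ∈ T) (he : e ∈ H) (hfH : f ∈ H) (hef : e ≠ f) :
    IE (Function.update I e s(t, y)) T (H \ {f}) := by
  intro X hX
  have htX : t ∉ X := fun h => Set.disjoint_left.1 hX h ht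
  have h0 := hIE X hX
  let A : Set E := Dl I X ∩ (H \ {e, f})
  have heA : e ∉ A := fun h => h.2.2 (by simp)
  have hfA : f ∉ A := fun h => h.2.2 (by simp)
  have hI' : Function.update I e s(t, y) e = s(t, y) := by simp
  have heD := mem_Dl (X := X) hI
  have hfD := mem_Dl (X := X) hf
  have heD' := mem_Dl (X := X) hI'
  have hoth : ∀ k, k ≠ e → (k ∈ Dl (Function.update I e s(t, y)) X ↔ k ∈ Dl I X) := by
    intro k hk
    simp only [Dl, Set.mem_ofPred_eq, Function.update_of_ne hk]
  have mem1 : ∀ k, k ∈ Dl I X ∩ H ↔ k ∈ A ∨ (k = e ∧ x ∈ X) ∨ (k = f ∧ ¬ (x ∈ X ↔ y ∈ X)) := by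
    intro k
    simp only [A, Set.mem_inter_iff, Set.mem_sdiff, Set.mem_insert_iff, Set.mem_singleton_iff]
    by_cases h1 : k = e
    · subst h1; rw [heD]; simp [he, hef, htX]
    · by_cases h2 : k = f
      · subst h2; rw [hfD]; simp [hfH, h1]
      · simp [h1, h2]
  have mem2 : ∀ k, k ∈ Dl (Function.update I e s(t, y)) X ∩ (H \ {f}) ↔ k ∈ A ∨ (k = e ∧ y ∈ X) := by
    intro k
    simp only [A, Set.mem_inter_iff, Set.mem_sdiff, Set.mem_insert_iff, Set.mem_singleton_iff]
    by_cases h1 : k = e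
    · subst h1; rw [heD']; simp [he, hef, htX]
    · rw [hoth k h1]; simp [h1]
  clear_value A
  clear heD hfD heD' hoth
  by_cases hx : x ∈ X <;> by_cases hy : y ∈ X
  · have e1 : Dl I X ∩ H = Dl (Function.update I e s(t, y)) X ∩ (H \ {f}) := by
      ext k; rw [mem1, mem2]; simp [hx, hy]
    rwa [← e1]
  · have e1 : Dl I X ∩ H = insert e (insert f A) := by
      ext k; rw [mem1]; simp only [hx, hy, Set.mem_insert_iff]; clear mem1 mem2 h0; tauto
    have e2 : Dl (Function.update I e s(t, y)) X ∩ (H \ {f}) = A := by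
      ext k; rw [mem2]; simp [hy]
    rw [e2]
    rw [e1, odd_insert (by simp [hef, heA])] at h0
    intro hA
    refine h0 ⟨hA.1.insert f, fun h => ?_⟩
    exact ((odd_insert hfA).1 ⟨hA.1.insert f, h⟩).2 hA.2
  · have e1 : Dl I X ∩ H = insert f A := by
      ext k; rw [mem1]; simp only [hx, hy, Set.mem_insert_iff]; clear mem1 mem2 h0; tauto
    have e2 : Dl (Function.update I e s(t, y)) X ∩ (H \ {f}) = insert e A := by
      ext k; rw [mem2]; simp only [hy, Set.mem_insert_iff]; clear mem1 mem2 h0; tauto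
    rw [e2, odd_insert heA]
    rwa [e1, odd_insert hfA] at h0
  · have e1 : Dl I X ∩ H = Dl (Function.update I e s(t, y)) X ∩ (H \ {f}) := by
      ext k; rw [mem1, mem2]; simp [hx, hy]
    rwa [← e1]

end LK

namespace LK
variable {V : Type u} {E : Type v} {I : E → Sym2 V}
variable {H : Set E} {t : V} {w : E → List E} {en : E → V} {T B X Y : Set V}

theorem Fam.mono (F : Fam I H t w en) {H' : Set E} (h : H ⊆ H') (hS : Src I H' t ⊆ Src I H t) :
    Fam I H' t w en :=
  ⟨fun s hs => F.wk s (hS hs), fun s hs => F.hd s (hS hs), fun s hs => F.nd s (hS hs),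
    fun s hs e he => h (F.sub s (hS hs) e he), fun s hs s' hs' => F.dj s (hS hs) s' (hS hs')⟩

open Classical in
theorem Fam.insert (F : Fam I H t w en) {e : E} {b : V} (he : e ∉ H) (hI : I e = s(t, b)) :
    Fam I (insert e H) t (Function.update w e [e]) (Function.update en e b) := by
  have hS : ∀ s ∈ Src I (Insert.insert e H) t, s ≠ e → s ∈ Src I H t := by
    intro s hs hne
    refine ⟨hs.1, ?_⟩
    rcases hs.2 with h | h
    · exact absurd h hne
    · exact h
  refine ⟨?_, ?_, ?_, ?_, ?_⟩
  · intro s hs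
    by_cases h : s = e
    · subst h; simpa using Wk.single hI
    · simpa [h] using F.wk s (hS s hs h)
  · intro s hs
    by_cases h : s = e
    · subst h; simp
    · simpa [h] using F.hd s (hS s hs h)
  · intro s hs
    by_cases h : s = e
    · subst h; simp
    · simpa [h] using F.nd s (hS s hs h)
  · intro s hs k hk
    by_cases h : s = e
    · subst h; simp at hk; simp [hk]
    · rw [Function.update_of_ne h] at hk
      exact Or.inr (F.sub s (hS s hs h) k hk)
  · intro s hs s' hs' k hk hk'
    by_cases h : s = e
    · by_cases h' : s' = e
      · rw [h, h']
      · subst h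
        simp at hk
        subst hk
        rw [Function.update_of_ne h'] at hk'
        exact absurd (F.sub s' (hS s' hs' h') k hk') he
    · by_cases h' : s' = e
      · subst h'
        simp at hk'
        subst hk'
        rw [Function.update_of_ne h] at hk
        exact absurd (F.sub s (hS s hs h) k hk) he
      · rw [Function.update_of_ne h] at hk
        rw [Function.update_of_ne h'] at hk'
        exact F.dj s (hS s hs h) s' (hS s' hs' h') k hk hk'

open Classical in
theorem split_stuck (N : Nice I T H) {e f : E} {x y t' : V} (hI : I e = s(t, x)) (hf : I f = s(x, y))
    (ht : t ∈ T) (he : e ∈ H) (hfH : f ∈ H) (hef : e ≠ f) (hxT : x ∉ T) (hyt : y ≠ t)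
    (ht' : t' ∈ T) (htt : t' ≠ t)
    (hno : ¬ LinkedTo (Function.update I e s(t, y)) (H \ {f}) t' (T \ {t'})) :
    ∃ P en, Fam I H t' P en ∧ (∀ s ∈ Src I H t', en s ∈ T \ {t'} ∧ Clean I (T \ {t'}) t' (P s)) ∧
    ∃ s1 ∈ Src I H t', ∃ s2 ∈ Src I H t', s1 ≠ s2 ∧ ∃ p1 p2 r, P s1 = p1 ++ [e] ∧
      P s2 = p2 ++ f :: r ∧ Wk I t' p1 x ∧ Wk I t' p2 x ∧ ∃ X : Set V, x ∈ X ∧ Disjoint X (T \ {t'}) ∧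
      Tight I H t' (Function.update P s2 (p2 ++ [f])) X := by
  obtain ⟨P, en, F, hP⟩ := (N.2 t' ht').trim (by simp)
  have hIE' := IE_split N.1 hI hf ht he hfH hef
  have hpar : ∀ Q enQ, Fam (Function.update I e s(t, y)) (H \ {f}) t' Q enQ → ∀ s0,
      (∀ s ∈ Src (Function.update I e s(t, y)) (H \ {f}) t', s ≠ s0 → enQ s ∈ T \ {t'}) → False :=
    fun Q enQ FQ s0 h => hno (parity_lemma hIE' ht' FQ h)
  set I' := Function.update I e s(t, y) with hI'
  have hI'e : I' e = s(t, y) := by simp [hI']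
  have hI'o : ∀ k, k ≠ e → I k = I' k := fun k hk => by simp [hI', hk]
  have hcg : ∀ l a b, e ∉ l → (Wk I a l b ↔ Wk I' a l b) := by
    intro l a b hl
    have : ∀ k ∈ l, I k = I' k := fun k hk => hI'o k (fun h => hl (h ▸ hk))
    exact ⟨fun h => h.congr this, fun h => h.congr (fun k hk => (this k hk).symm)⟩
  have hxt' : x ≠ t' := by rintro rfl; exact hxT ht'
  have hxt : x ≠ t := by rintro rfl; exact hxT ht
  have htB : t ∈ T \ {t'} := ⟨ht, fun h => htt h.symm⟩
  have heS : e ∉ Src I H t' := by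
    rintro ⟨h, -⟩
    rw [mem_Dl hI] at h
    simp [hxt', htt.symm] at h
  have hlast : ∀ s ∈ Src I H t', ∀ l1 l2, P s = l1 ++ e :: l2 → l2 = [] ∧ Wk I t' l1 x := by
    intro s hs l1 l2 h
    have hw := F.wk s hs
    rw [h] at hw
    obtain ⟨d, hd1, hd2⟩ := Wk.append_iff.1 hw
    obtain ⟨c, hc1, hc2⟩ := Wk.cons_iff.1 hd2
    have hd := (hP s hs).2 l1 _ d h (by simp) hd1
    rw [hI] at hc1
    rcases Sym2.eq_iff.1 hc1 with ⟨rfl, rfl⟩ | ⟨rfl, rfl⟩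
    · exact absurd htB hd
    · refine ⟨?_, hd1⟩
      by_contra hl2
      exact (hP s hs).2 (l1 ++ [e]) l2 t (by rw [h]; simp) hl2
        (hd1.append (Wk.single (by rw [hI, Sym2.eq_swap]))) htB
  -- truncated family
  let Q : E → List E := fun s => if s = f then P s else
    (P s).takeWhile (fun k => decide (k ≠ e ∧ k ≠ f))
  have hQf : ∀ s, s ≠ f → Q s = (P s).takeWhile (fun k => decide (k ≠ e ∧ k ≠ f)) := by
    intro s hs; simp [Q, hs]
  have hQpre : ∀ s, ∃ m, P s = Q s ++ m := by
    intro s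
    by_cases h : s = f
    · exact ⟨[], by simp [Q, h]⟩
    · exact ⟨_, by rw [hQf s h]; exact (List.takeWhile_append_dropWhile).symm⟩
  have hQef : ∀ s, s ≠ f → e ∉ Q s ∧ f ∉ Q s := by
    intro s hs
    rw [hQf s hs]
    constructor
    · intro h
      have := List.mem_takeWhile_imp h
      simp at this
    · intro h
      have := List.mem_takeWhile_imp h
      simp at this
  have hQself : ∀ s, e ∉ P s → f ∉ P s → Q s = P s := by
    intro s h1 h2
    by_cases h : s = f
    · simp [Q, h]
    · rw [hQf s h, List.takeWhile_eq_self_iff]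
      intro k hk
      simp only [decide_eq_true_eq]
      exact ⟨fun h => h1 (h ▸ hk), fun h => h2 (h ▸ hk)⟩
  have hQsplit : ∀ s, s ≠ f → ∀ k l1 l2, (k = e ∨ k = f) → P s = l1 ++ k :: l2 → e ∉ l1 → f ∉ l1 →
      Q s = l1 := by
    intro s hs k l1 l2 hk h1 h2 h3
    rw [hQf s hs, h1, List.takeWhile_append_of_pos]
    · rw [List.takeWhile_cons_of_neg]
      · simp
      · rcases hk with rfl | rfl <;> simp
    · intro a ha
      simp only [decide_eq_true_eq]
      exact ⟨fun h => h2 (h ▸ ha), fun h => h3 (h ▸ ha)⟩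
  have hex : ∀ s, ∃ c, s ∈ Src I H t' → Wk I t' (Q s) c := by
    intro s
    by_cases hs : s ∈ Src I H t'
    · obtain ⟨m, hm⟩ := hQpre s
      have := F.wk s hs
      rw [hm] at this
      obtain ⟨c, hc, -⟩ := Wk.append_iff.1 this
      exact ⟨c, fun _ => hc⟩
    · exact ⟨t, fun h => absurd h hs⟩
  choose enQ henQ using hex
  have hQne : ∀ s ∈ Src I H t', Q s ≠ [] := by
    intro s hs h0
    obtain ⟨l, hl⟩ := F.hd s hs
    have hse : s ≠ e := by rintro rfl; exact heS hs
    by_cases h : s = f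
    · simp only [Q, h, if_true] at h0
      rw [h] at hl
      rw [hl] at h0
      simp at h0
    · rw [hQf s h, hl, List.takeWhile_cons_of_pos] at h0
      · simp at h0
      · simp [h, hse]
  have hQsub : ∀ s, ∀ k ∈ Q s, k ∈ P s := by
    intro s k hk
    obtain ⟨m, hm⟩ := hQpre s
    rw [hm]; simp [hk]
  have FQ : Fam I H t' Q enQ := F.pref (fun s _ => hQpre s) hQne (fun s hs => henQ s hs)
  let H2 : Set E := H \ {e, f}
  have hH2 : H2 ⊆ H := Set.sdiff_subset
  have FQ2 : Fam I H2 t' Q enQ := by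
    refine FQ.restrict hH2 ?_
    intro s hs k hk
    have hsf : s ≠ f := fun h => hs.2.2 (by simp [h])
    refine ⟨FQ.sub s (Src_mono hH2 hs) k hk, ?_⟩
    rintro (rfl | rfl)
    · exact (hQef s hsf).1 hk
    · exact (hQef s hsf).2 hk
  have hH2I : ∀ k ∈ H2, I k = I' k := fun k hk => hI'o k (fun h => hk.2 (by simp [h]))
  have FQ' : Fam I' H2 t' Q enQ := FQ2.congr hH2I
  have hSrc2 : Src I H2 t' = Src I' H2 t' := Dl_congr hH2I
  have hunaff : ∀ s ∈ Src I H t', e ∉ P s → f ∉ P s → enQ s ∈ T \ {t'} := by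
    intro s hs h1 h2
    have := henQ s hs
    rw [hQself s h1 h2] at this
    rw [this.unique (F.wk s hs)]
    exact (hP s hs).1
  have hins : H \ {f} = insert e H2 := by
    ext k
    simp only [H2, Set.mem_sdiff, Set.mem_singleton_iff, Set.mem_insert_iff]
    by_cases h : k = e
    · subst h; simp [he, hef]
    · simp [h]
  have heH2 : e ∉ H2 := fun h => h.2 (by simp)
  by_cases hyt' : y = t'
  · exfalso
    have hfS : f ∈ Src I H t' := mem_Src.2 ⟨hfH, x, hxt', by rw [hf, hyt', Sym2.eq_swap]⟩
    have F3 : Fam I' (insert e H2) t' (Function.update Q e [e]) (Function.update enQ e t) :=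
      FQ'.insert heH2 (by rw [hI'e, hyt', Sym2.eq_swap])
    rw [← hins] at F3
    obtain ⟨s0, hs0⟩ : ∃ s0, ∀ s ∈ Src I H t', e ∈ P s → s = s0 := by
      by_cases h : ∃ s ∈ Src I H t', e ∈ P s
      · obtain ⟨s0, h1, h2⟩ := h
        exact ⟨s0, fun s hs hes => F.dj s hs s0 h1 e hes h2⟩
      · exact ⟨e, fun s hs hes => absurd ⟨s, hs, hes⟩ h⟩
    refine hpar _ _ F3 s0 ?_
    intro s hs hne
    by_cases hse : s = e
    · subst hse; simpa using htB
    · rw [Function.update_of_ne hse]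
      have hs2 : s ∈ Src I H2 t' := by
        rw [hSrc2]
        refine ⟨hs.1, hs.2.1, ?_⟩
        rintro (h | h)
        · exact hse h
        · exact hs.2.2 h
      have hs3 := Src_mono hH2 hs2
      have hsf : s ≠ f := fun h => hs.2.2 h
      exact hunaff s hs3 (fun h => hne (hs0 s hs3 h))
        (fun h => hsf (F.dj s hs3 f hfS f h (F.mem_self hfS)))
  have hfS : f ∉ Src I H t' := by
    rintro ⟨h, -⟩
    rw [mem_Dl hf] at h
    simp [hxt', hyt'] at h
  have heS' : e ∉ Src I' (H \ {f}) t' := by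
    rintro ⟨h, -⟩
    rw [mem_Dl hI'e] at h
    simp [htt.symm, hyt'] at h
  have hSS : ∀ s, s ∈ Src I' (H \ {f}) t' ↔ s ∈ Src I H t' := by
    intro s
    constructor
    · intro hs
      have hse : s ≠ e := by rintro rfl; exact heS' hs
      have : s ∈ Src I' H2 t' := ⟨hs.1, hs.2.1, by
        rintro (h | h)
        · exact hse h
        · exact hs.2.2 h⟩
      rw [← hSrc2] at this
      exact Src_mono hH2 this
    · intro hs
      have hse : s ≠ e := by rintro rfl; exact heS hs
      have hsf : s ≠ f := by rintro rfl; exact hfS hs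
      have : s ∈ Src I H2 t' := ⟨hs.1, hs.2, by
        rintro (h | h)
        · exact hse h
        · exact hsf h⟩
      rw [hSrc2] at this
      exact ⟨this.1, this.2.1, hsf⟩
  have hSf : ∀ s ∈ Src I H t', s ≠ f := by rintro s hs rfl; exact hfS hs
  have F3 : Fam I' (H \ {f}) t' Q enQ := by
    refine FQ'.mono (by rw [hins]; exact Set.subset_insert _ _) ?_
    intro s hs
    have hse : s ≠ e := by rintro rfl; exact heS' hs
    exact ⟨hs.1, hs.2.1, by
        rintro (h | h)
        · exact hse h
        · exact hs.2.2 h⟩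
  -- two affected trails
  obtain ⟨s1, hs1, s2, hs2, hs12, hes1, hfs2⟩ : ∃ s1 ∈ Src I H t', ∃ s2 ∈ Src I H t', s1 ≠ s2 ∧
      e ∈ P s1 ∧ f ∈ P s2 := by
    by_contra hcon
    obtain ⟨s0, hs0⟩ : ∃ s0, ∀ s ∈ Src I H t', (e ∈ P s ∨ f ∈ P s) → s = s0 := by
      by_cases h : ∃ s ∈ Src I H t', (e ∈ P s ∨ f ∈ P s)
      · obtain ⟨s0, h1, h2⟩ := h
        refine ⟨s0, fun s hs hes => ?_⟩
        by_contra hne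
        rcases hes with hes | hes <;> rcases h2 with h2 | h2
        · exact hne (F.dj s hs s0 h1 e hes h2)
        · exact hcon ⟨s, hs, s0, h1, hne, hes, h2⟩
        · exact hcon ⟨s0, h1, s, hs, fun h => hne h.symm, h2, hes⟩
        · exact hne (F.dj s hs s0 h1 f hes h2)
      · exact ⟨e, fun s hs hes => absurd ⟨s, hs, hes⟩ h⟩
    refine hpar _ _ F3 s0 ?_
    intro s hs hne
    rw [hSS] at hs
    exact hunaff s hs (fun h => hne (hs0 s hs (Or.inl h))) (fun h => hne (hs0 s hs (Or.inr h)))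
  obtain ⟨p1, l2, hp1⟩ := List.append_of_mem hes1
  obtain ⟨rfl, hp1x⟩ := hlast s1 hs1 p1 l2 hp1
  obtain ⟨p2, r, hp2⟩ := List.append_of_mem hfs2
  have hnd1 := F.nd s1 hs1
  rw [hp1] at hnd1
  have hnd2 := F.nd s2 hs2
  rw [hp2] at hnd2
  have hes2 : e ∉ P s2 := fun h => hs12 (F.dj s1 hs1 s2 hs2 e hes1 h)
  have hfs1 : f ∉ P s1 := fun h => hs12 (F.dj s1 hs1 s2 hs2 f h hfs2)
  have hQ1 : Q s1 = p1 := hQsplit s1 (hSf s1 hs1) e p1 [] (Or.inl rfl) hp1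
    (fun h => (List.nodup_append.1 hnd1).2.2 e h e (by simp) rfl)
    (fun h => hfs1 (by rw [hp1]; simp [h]))
  have hQ2 : Q s2 = p2 := hQsplit s2 (hSf s2 hs2) f p2 r (Or.inr rfl) hp2
    (fun h => hes2 (by rw [hp2]; simp [h]))
    (fun h => (List.nodup_append.1 hnd2).2.2 f h f (by simp) rfl)
  have hcompl : ∀ s ∈ Src I H t', s ≠ s1 → s ≠ s2 → enQ s ∈ T \ {t'} := by
    intro s hs h1 h2
    exact hunaff s hs (fun h => h1 (F.dj s hs s1 hs1 e h hes1)) (fun h => h2 (F.dj s hs s2 hs2 f h hfs2))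
  have henQ1 : enQ s1 = x := by
    have := henQ s1 hs1
    rw [hQ1] at this
    exact this.unique hp1x
  have hp2x : Wk I t' p2 x := by
    have hw := F.wk s2 hs2
    rw [hp2] at hw
    obtain ⟨d, hd1, hd2⟩ := Wk.append_iff.1 hw
    obtain ⟨c, hc1, hc2⟩ := Wk.cons_iff.1 hd2
    rw [hf] at hc1
    rcases Sym2.eq_iff.1 hc1 with ⟨rfl, rfl⟩ | ⟨rfl, rfl⟩
    · exact hd1
    · exfalso
      have hp2' : ∀ k ∈ p2 ++ [e], k = e ∨ k ∈ P s2 := by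
        intro k hk
        rcases List.mem_append.1 hk with h | h
        · right; rw [hp2]; simp [h]
        · left; simpa using h
      have hep2 : e ∉ p2 := fun h => hes2 (by rw [hp2]; simp [h])
      have F4 := F3.update (s := s2) (l := p2 ++ [e]) (b := t)
        (((hcg _ _ _ hep2).1 hd1).append (Wk.single (by rw [hI'e, Sym2.eq_swap])))
        (by
          obtain ⟨m, hm⟩ := F3.hd s2 ((hSS s2).2 hs2)
          rw [hQ2] at hm
          exact ⟨m ++ [e], by rw [hm]; rfl⟩)
        (by
          refine List.nodup_append.2 ⟨(List.nodup_append.1 hnd2).1, by simp, ?_⟩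
          rintro k hk _ hk' rfl
          simp at hk'; subst hk'
          exact hep2 hk)
        (by
          intro k hk
          rcases List.mem_append.1 hk with h | h
          · exact F3.sub s2 ((hSS s2).2 hs2) k (by rw [hQ2]; exact h)
          · simp at h; subst h; exact ⟨he, hef⟩)
        (by
          intro s' hs' hne k hk hk'
          have hs'' := (hSS s').1 hs'
          rcases hp2' k hk with rfl | h
          · exact (hQef s' (hSf s' hs'')).1 hk'
          · exact hne (F.dj s' hs'' s2 hs2 k (hQsub s' k hk') h))
      refine hpar _ _ F4 s1 ?_
      intro s hs hne
      by_cases h : s = s2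
      · subst h; simpa using htB
      · rw [Function.update_of_ne h]
        exact hcompl s ((hSS s).1 hs) hne h
  have henQ2 : enQ s2 = x := by
    have := henQ s2 hs2
    rw [hQ2] at this
    exact this.unique hp2x
  rcases F3.dichotomy (B := T \ {t'}) ((hSS s1).2 hs1) (by simp) with h | h
  · exfalso
    obtain ⟨z, hz, w', en', F', π, h1, h2, h3⟩ := h
    refine hpar _ _ F' (π.symm s2) ?_
    intro s hs hne
    rw [h2 s hs]
    have hπs := (hSS _).1 ((h1 s).2 hs)
    have hne2 : π s ≠ s2 := fun h => hne (by rw [← h]; simp)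
    by_cases h : π s = s1
    · rw [h]; simpa using hz
    · rw [Function.update_of_ne h]
      exact hcompl _ hπs h hne2
  · obtain ⟨X, hxX, hXB, hX⟩ := h
    rw [henQ1] at hxX
    have htX : t ∉ X := fun h => Set.disjoint_left.1 hXB h htB
    have hyX : y ∉ X := by
      intro hyX
      obtain ⟨s, hs, l1, l2, k1, k2, k3⟩ := hX.out e ⟨he, hef⟩ y t (by rw [hI'e, Sym2.eq_swap]) hyX htX
      exact (hQef s (hSf s ((hSS s).1 hs))).1 (by rw [k1]; simp)
    refine ⟨P, en, F, hP, s1, hs1, s2, hs2, hs12, p1, p2, r, hp1, hp2, hp1x, hp2x, X, hxX, hXB, ?_⟩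
    have hWQ : ∀ s ∈ Src I H t', (s ≠ s1 ∧ s ≠ s2 ∧ Function.update P s2 (p2 ++ [f]) s = Q s) ∨
        (s = s1 ∧ Function.update P s2 (p2 ++ [f]) s = Q s ++ [e]) ∨
        (s = s2 ∧ Function.update P s2 (p2 ++ [f]) s = Q s ++ [f]) := by
      intro s hs
      by_cases h2 : s = s2
      · subst h2; right; right; simp [hQ2]
      · by_cases h1 : s = s1
        · subst h1; right; left; simp [h2, hQ1, hp1]
        · left
          refine ⟨h1, h2, ?_⟩
          rw [Function.update_of_ne h2, hQself]
          · exact fun h => h1 (F.dj s hs s1 hs1 e h hes1)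
          · exact fun h => h2 (F.dj s hs s2 hs2 f h hfs2)
    refine ⟨hX.mem, ?_, ?_⟩
    · intro g hg u v hgI hu hv
      by_cases hge : g = e
      · subst hge
        rw [hI] at hgI
        rcases Sym2.eq_iff.1 hgI with ⟨rfl, rfl⟩ | ⟨rfl, rfl⟩
        · exact absurd hu htX
        · exact ⟨s1, hs1, p1, [], by rw [Function.update_of_ne hs12, hp1], hp1x, by rw [hI, Sym2.eq_swap]⟩
      · by_cases hgf : g = f
        · subst hgf
          rw [hf] at hgI
          rcases Sym2.eq_iff.1 hgI with ⟨rfl, rfl⟩ | ⟨rfl, rfl⟩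
          · exact ⟨s2, hs2, p2, [], by simp, hp2x, hf⟩
          · exact absurd hxX hv
        · obtain ⟨s, hs, l1, l2, k1, k2, k3⟩ := hX.out g ⟨hg, hgf⟩ u v (by rw [← hI'o g hge]; exact hgI) hu hv
          have hs' := (hSS s).1 hs
          have hel1 : e ∉ l1 := fun h => (hQef s (hSf s hs')).1 (by rw [k1]; simp [h])
          have hk2 := (hcg _ _ _ hel1).2 k2
          rcases hWQ s hs' with ⟨-, -, h⟩ | ⟨-, h⟩ | ⟨-, h⟩
          · exact ⟨s, hs', l1, l2, h.trans k1, hk2, hgI⟩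
          · exact ⟨s, hs', l1, l2 ++ [e], by rw [h, k1]; simp, hk2, hgI⟩
          · exact ⟨s, hs', l1, l2 ++ [f], by rw [h, k1]; simp, hk2, hgI⟩
    · rintro g u v hu hv ⟨s, hs, l1, l2, k1, k2, k3⟩
      have hq : ∀ m2, Q s = l1 ++ g :: m2 → False := by
        intro m2 hm
        have hel1 : e ∉ l1 := fun h => (hQef s (hSf s hs)).1 (by rw [hm]; simp [h])
        have hge : g ≠ e := by rintro rfl; exact (hQef s (hSf s hs)).1 (by rw [hm]; simp)
        exact hX.inn g u v hu hv ⟨s, (hSS s).2 hs, l1, m2, hm, (hcg _ _ _ hel1).1 k2,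
          by rw [← hI'o g hge]; exact k3⟩
      have hq2 : ∀ k, Q s ++ [k] = l1 ++ g :: l2 → Wk I t' (Q s) x → False := by
        intro k hk hx
        rcases List.eq_nil_or_concat l2 with rfl | ⟨m, b, rfl⟩
        · have := List.append_inj' hk rfl
          rw [this.1] at hx
          exact hv (k2.unique hx ▸ hxX)
        · have : Q s ++ [k] = (l1 ++ g :: m) ++ [b] := by rw [hk]; simp
          exact hq m (List.append_inj' this rfl).1
      rcases hWQ s hs with ⟨-, -, h⟩ | ⟨h', h⟩ | ⟨h', h⟩
      · exact hq l2 (h ▸ k1)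
      · subst h'
        exact hq2 e (h ▸ k1) (hQ1 ▸ hp1x)
      · subst h'
        exact hq2 f (h ▸ k1) (hQ2 ▸ hp2x)

end LK

namespace LK
variable {V : Type u} {E : Type v} {I : E → Sym2 V}
variable {H : Set E} {t : V} {w : E → List E} {en : E → V} {T B X Y : Set V}

theorem LinkedTo.mono (h : LinkedTo I H t B) {B' : Set V} (hB : B ⊆ B') : LinkedTo I H t B' := by
  obtain ⟨w, en, F, h⟩ := h
  exact ⟨w, en, F, fun s hs => hB (h s hs)⟩

/-- Conclusion of the one-path lemma. -/
def Good (I : E → Sym2 V) (T : Set V) (H : Set E) (t : V) (e : E) (x : V) : Prop :=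
  ∃ p b, Wk I x p b ∧ p.Nodup ∧ (∀ k ∈ p, k ∈ H ∧ k ≠ e) ∧ b ∈ T ∧ b ≠ t ∧ Clean I T x p ∧
    Nice I T (H \ {k | k ∈ e :: p})

theorem fail_case (N : Nice I T H) {e f : E} {x y t' : V} (hI : I e = s(t, x)) (hf : I f = s(x, y))
    (ht : t ∈ T) (he : e ∈ H) (hfH : f ∈ H) (hef : e ≠ f) (hxT : x ∉ T) (hyt : y ≠ t)
    (ht' : t' ∈ T) (htt : t' ≠ t)
    (hno : ¬ LinkedTo (by classical exact Function.update I e s(t, y)) (H \ {f}) t' (T \ {t'})) :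
    Good I T H t e x := by
  classical
  obtain ⟨P, en, F, hP, s1, hs1, s2, hs2, hs12, p1, p2, r, hP1, hP2, hw1, hw2, X, hxX, hXT, hX⟩ :=
    split_stuck N hI hf ht he hfH hef hxT hyt ht' htt (by convert hno)
  have hn1 := F.nd s1 hs1
  rw [hP1] at hn1
  have hp1n : p1.Nodup := (List.nodup_append.1 hn1).1
  have hep1 : e ∉ p1 := fun h => (List.nodup_append.1 hn1).2.2 e h e (by simp) rfl
  have hsub1 := F.sub s1 hs1
  rw [hP1] at hsub1
  have hx1 : x ≠ t' := fun h => hxT (h ▸ ht')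
  have hp1ne : p1 ≠ [] := by
    rintro rfl
    exact hx1 (Wk.nil_iff.1 hw1).symm
  have hs1e : s1 ∈ p1 := by
    obtain ⟨l, hl⟩ := F.hd s1 hs1
    rw [hP1] at hl
    cases p1 with
    | nil => exact absurd rfl hp1ne
    | cons a p1 => simp at hl; simp [hl.1]
  -- the truncated family
  set W := Function.update P s2 (p2 ++ [f]) with hW
  have hWsub : ∀ s ∈ Src I H t', ∀ k ∈ W s, k ∈ P s := by
    intro s hs k hk
    by_cases h : s = s2
    · subst h
      rw [hP2]; simp only [hW, Function.update_self] at hk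
      simp at hk ⊢; tauto
    · simpa [hW, h] using hk
  have FW : Fam I H t' W (Function.update en s2 y) := by
    refine F.pref ?_ ?_ ?_
    · intro s hs
      by_cases h : s = s2
      · subst h; exact ⟨r, by simp [hW, hP2]⟩
      · exact ⟨[], by simp [hW, h]⟩
    · intro s hs
      by_cases h : s = s2
      · subst h; simp [hW]
      · obtain ⟨l, hl⟩ := F.hd s hs
        simp [hW, h, hl]
    · intro s hs
      by_cases h : s = s2
      · subst h
        simp only [hW, Function.update_self]
        exact hw2.append (Wk.single hf)
      · simpa [hW, h] using F.wk s hs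
  have hW1 : W s1 = p1 ++ [e] := by simp [hW, hs12, hP1]
  set D : Set E := {k | k ∈ e :: p1.reverse} with hD
  have hDmem : ∀ k, k ∈ D ↔ k ∈ P s1 := by
    intro k
    simp [hD, hP1]; tauto
  have hp1X : ∀ k ∈ p1, k ∈ Ins I X := hX.pref hs1 hW1 hw1 hxX
  have hsubH : H \ D ⊆ H := Set.sdiff_subset
  have hs1D : s1 ∈ D := by simp [hD, hs1e]
  have hsrc : ∀ s ∈ Src I (H \ D) t', s ≠ s1 := by
    rintro s hs rfl
    exact (mem_Src.1 hs).1.2 hs1D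
  refine ⟨p1.reverse, t', hw1.reverse, by simpa using hp1n, ?_, ht', htt, ?_, ?_, ?_⟩
  · intro k hk
    simp at hk
    exact ⟨hsub1 k (by simp [hk]), fun h => hep1 (h ▸ hk)⟩
  · intro m1 m2 d hm hm2 hd
    have hm' : p1 = m2.reverse ++ m1.reverse := by
      rw [← List.reverse_append, ← hm, List.reverse_reverse]
    have h1 := hw1
    rw [hm'] at h1
    obtain ⟨d', h2, h3⟩ := Wk.append_iff.1 h1
    have h4 := h3.reverse
    rw [List.reverse_reverse] at h4
    obtain rfl := hd.unique h4
    have h5 : P s1 = m2.reverse ++ (m1.reverse ++ [e]) := by rw [hP1, hm']; simp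
    have h6 := (hP s1 hs1).2 _ _ _ h5 (by simp) h2
    have h7 := F.ne_start hs1 h5 (by simpa using hm2) h2
    intro h8
    exact h6 ⟨h8, h7⟩
  · have := N.1.remove (l := P s1) (a := t') (b := t) (by
      rw [hP1]; exact hw1.append (Wk.single (by rw [hI, Sym2.eq_swap]))) (F.nd s1 hs1)
      (F.sub s1 hs1) ht' ht
    convert this using 2
    ext k; exact hDmem k
  · intro t'' ht''
    by_cases h : t'' = t'
    · subst h
      refine ⟨P, en, F.restrict hsubH ?_, fun s hs => (hP s (Src_mono hsubH hs)).1⟩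
      intro s hs k hk
      refine ⟨F.sub s (Src_mono hsubH hs) k hk, fun hkD => ?_⟩
      exact hsrc s hs (F.dj s (Src_mono hsubH hs) s1 hs1 k hk ((hDmem k).1 hkD))
    · have FW' : Fam I (H \ D) t' W (Function.update en s2 y) := by
        refine FW.restrict hsubH ?_
        intro s hs k hk
        have hs' := Src_mono hsubH hs
        refine ⟨FW.sub s hs' k hk, fun hkD => ?_⟩
        exact hsrc s hs (F.dj s hs' s1 hs1 k (hWsub s hs' k hk) ((hDmem k).1 hkD))
      have hX' : Tight I (H \ D) t' W X := by
        refine ⟨hX.mem, ?_, ?_⟩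
        · intro g hg u v hguv hu hv
          obtain ⟨s, hs, l1, l2, h1, h2, h3⟩ := hX.out g hg.1 u v hguv hu hv
          refine ⟨s, ?_, l1, l2, h1, h2, h3⟩
          refine ⟨hs.1, hs.2, fun hsD => ?_⟩
          have h5 : s = s1 := F.dj s hs s1 hs1 s (F.mem_self hs) ((hDmem s).1 hsD)
          subst h5
          apply hg.2
          rw [hDmem, ← show W s = P s by simp [hW, hs12], h1]
          simp
        · rintro g u v hu hv ⟨s, hs, hh⟩
          exact hX.inn g u v hu hv ⟨s, Src_mono hsubH hs, hh⟩
      obtain ⟨q, hq⟩ := hX'.shel FW' ht'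
      have htX : t'' ∉ X := fun hh => Set.disjoint_left.1 hXT hh ⟨ht'', h⟩
      refine hq.link htX ?_
      obtain ⟨w2, en2, F2, h2⟩ := ((N.2 t'' ht'').mono
        (Set.subset_union_left (t := X))).trim (by simp [htX])
      refine ⟨w2, en2, F2.restrict hsubH ?_, fun s hs => (h2 s (Src_mono hsubH hs)).1⟩
      intro s hs k hk
      have hs' := Src_mono hsubH hs
      refine ⟨F2.sub s hs' k hk, fun hkD => ?_⟩
      have hni := (h2 s hs').2.not_ins (F2.wk s hs') k hk
      rw [hDmem, hP1] at hkD
      simp only [List.mem_append, List.mem_singleton] at hkD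
      rcases hkD with hkD | rfl
      · exact hni (Ins_mono Set.subset_union_right (hp1X k hkD))
      · by_cases h3 : t'' = t
        · subst h3
          have hke : k ∈ Src I H t'' := mem_Src.2 ⟨he, x, fun h => hxT (h ▸ ht''), hI⟩
          have := F2.dj s hs' k hke k hk (F2.mem_self hke)
          subst this
          exact (mem_Src.1 hs).1.2 (by simp [hD])
        · apply hni
          rw [mem_Ins hI]
          exact ⟨Or.inl ⟨ht, fun h => h3 h.symm⟩, Or.inr hxX⟩

theorem core (rest : List E) : ∀ (I : E → Sym2 V) (H : Set E) (w : E → List E) (en : E → V) (x : V)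
    (e : E), I e = s(t, x) → e ∈ H → x ≠ t → t ∈ T → Nice I T H → Fam I H t w en →
    (∀ s ∈ Src I H t, en s ∈ T \ {t}) → w e = e :: rest → Good I T H t e x := by
  classical
  induction rest with
  | nil =>
    intro I H w en x e hI he hx ht N F hen hw
    have hs : e ∈ Src I H t := mem_Src.2 ⟨he, x, hx, hI⟩
    have h1 := F.wk e hs
    rw [hw] at h1
    have := h1.unique (Wk.single hI)
    have hxT : x ∈ T := this ▸ (hen e hs).1
    exact ⟨[], x, Wk.nil _, by simp, by simp, hxT, hx, by
      intro m1 m2 d h; simp at h; intro h'; exact absurd h.2 h', nice_del_TT N ht hxT hI hx he⟩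
  | cons f rest ih =>
    intro I H w en x e hI he hx ht N F hen hw
    have hs : e ∈ Src I H t := mem_Src.2 ⟨he, x, hx, hI⟩
    by_cases hxT : x ∈ T
    · exact ⟨[], x, Wk.nil _, by simp, by simp, hxT, hx, by
        intro m1 m2 d h; simp at h; intro h'; exact absurd h.2 h', nice_del_TT N ht hxT hI hx he⟩
    have h1 := F.wk e hs
    have hnd := F.nd e hs
    have hsub := F.sub e hs
    rw [hw] at h1 hnd hsub
    obtain ⟨x', hx', h2⟩ := Wk.cons_iff.1 h1
    rw [hI] at hx'
    obtain rfl := Sym2.congr_right.1 hx'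
    obtain ⟨y, hf, h3⟩ := Wk.cons_iff.1 h2
    have hfH : f ∈ H := hsub f (by simp)
    have hef : e ≠ f := by
      intro h; subst h; simp at hnd
    have hyt : y ≠ t := F.ne_start hs (l1 := [e, f]) (l2 := rest) (by simp [hw]) (by simp)
      (Wk.cons hI (Wk.single hf))
    have hsrc : ∀ s, s ∈ Src (Function.update I e s(t, y)) (H \ {f}) t ↔ s ∈ Src I H t := by
      intro s
      rw [mem_Src, mem_Src]
      by_cases h : s = e
      · subst h
        simp [he, hef, hI, hyt, hx]
      · simp only [Function.update_of_ne h]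
        constructor
        · rintro ⟨h4, h5⟩; exact ⟨h4.1, h5⟩
        · rintro ⟨h4, h5⟩
          refine ⟨⟨h4, ?_⟩, h5⟩
          rintro rfl
          exact h (F.dj s (mem_Src.2 ⟨h4, h5⟩) e hs s
            (F.mem_self (mem_Src.2 ⟨h4, h5⟩)) (by simp [hw]))
    have hne : ∀ s ∈ Src I H t, s ≠ e → e ∉ w s ∧ f ∉ w s := by
      intro s hs' h
      exact ⟨fun h4 => h (F.dj s hs' e hs e h4 (by simp [hw])),
        fun h4 => h (F.dj s hs' e hs f h4 (by simp [hw]))⟩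
    have hcong : ∀ k, k ≠ e → I k = Function.update I e s(t, y) k := by
      intro k hk; simp [hk]
    have F' : Fam (Function.update I e s(t, y)) (H \ {f}) t (Function.update w e (e :: rest)) en := by
      have hmem : ∀ s ∈ Src I H t, ∀ k ∈ Function.update w e (e :: rest) s, k ∈ w s := by
        intro s hs' k hk
        by_cases h : s = e
        · subst h; rw [hw]; simp at hk ⊢; tauto
        · simpa [h] using hk
      refine ⟨?_, ?_, ?_, ?_, ?_⟩
      · intro s hs'
        rw [hsrc] at hs'
        by_cases h : s = e
        · subst h
          simp only [Function.update_self]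
          refine Wk.cons (b := y) (by simp) (h3.congr ?_)
          intro k hk
          apply hcong
          rintro rfl
          simp [hk] at hnd
        · simp only [Function.update_of_ne h]
          refine (F.wk s hs').congr ?_
          intro k hk
          apply hcong
          rintro rfl
          exact (hne s hs' h).1 hk
      · intro s hs'
        rw [hsrc] at hs'
        by_cases h : s = e
        · subst h; simp
        · simpa [h] using F.hd s hs'
      · intro s hs'
        rw [hsrc] at hs'
        by_cases h : s = e
        · subst h; simp at hnd ⊢; tauto
        · simpa [h] using F.nd s hs'
      · intro s hs' k hk
        rw [hsrc] at hs'
        refine ⟨F.sub s hs' k (hmem s hs' k hk), ?_⟩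
        rintro rfl
        by_cases h : s = e
        · subst h; simp at hk hnd; tauto
        · exact (hne s hs' h).2 (hmem s hs' _ hk)
      · intro s hs1 s' hs2 k hk hk'
        rw [hsrc] at hs1 hs2
        exact F.dj s hs1 s' hs2 k (hmem s hs1 k hk) (hmem s' hs2 k hk')
    by_cases hall : ∀ t' ∈ T, LinkedTo (Function.update I e s(t, y)) (H \ {f}) t' (T \ {t'})
    · have N' : Nice (Function.update I e s(t, y)) T (H \ {f}) :=
        ⟨IE_split N.1 hI hf ht he hfH hef, hall⟩
      obtain ⟨p, b, g1, g2, g3, g4, g5, g6, g7⟩ := ih (Function.update I e s(t, y)) (H \ {f})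
        (Function.update w e (e :: rest)) en y e (by simp) ⟨he, hef⟩ hyt ht N' F'
        (fun s hs' => hen s ((hsrc s).1 hs')) (by simp)
      have g1' : Wk I y p b := g1.congr (fun k hk => (hcong k (g3 k hk).2).symm)
      refine ⟨f :: p, b, Wk.cons hf g1', ?_, ?_, g4, g5, ?_, ?_⟩
      · simp only [List.nodup_cons]
        exact ⟨fun h => (g3 f h).1.2 rfl, g2⟩
      · intro k hk
        rcases List.mem_cons.1 hk with rfl | hk
        · exact ⟨hfH, fun h => hef h.symm⟩
        · exact ⟨(g3 k hk).1.1, (g3 k hk).2⟩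
      · intro m1 m2 d hm hm2 hd
        cases m1 with
        | nil => rw [Wk.nil_iff] at hd; exact hd ▸ hxT
        | cons a m1 =>
          simp only [List.cons_append, List.cons.injEq] at hm
          obtain ⟨rfl, rfl⟩ := hm
          obtain ⟨y', hy', hd⟩ := Wk.cons_iff.1 hd
          rw [hf] at hy'
          obtain rfl := Sym2.congr_right.1 hy'
          refine g6 m1 m2 d rfl hm2 (hd.congr (fun k hk => hcong k (g3 k (by simp [hk])).2))
      · have : H \ {k | k ∈ e :: f :: p} = (H \ {f}) \ {k | k ∈ e :: p} := by
          ext k; simp; tauto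
        rw [this]
        refine g7.congr ?_
        intro k hk
        refine (hcong k ?_).symm
        rintro rfl
        exact hk.2 (by simp)
    · push Not at hall
      obtain ⟨t', ht', hno⟩ := hall
      have htt : t' ≠ t := by
        rintro rfl
        exact hno ⟨_, _, F', fun s hs' => hen s ((hsrc s).1 hs')⟩
      exact fail_case N hI hf ht he hfH hef hxT hyt ht' htt (by convert hno)

theorem one_path (N : Nice I T H) (ht : t ∈ T) {e : E} (he : e ∈ Src I H t) :
    ∃ x, I e = s(t, x) ∧ Good I T H t e x := by
  obtain ⟨w, en, F, h⟩ := N.2 t ht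
  obtain ⟨heH, x, hx, hI⟩ := mem_Src.1 he
  obtain ⟨l, hl⟩ := F.hd e he
  exact ⟨x, hI, core l I H w en x e hI heH hx ht N F h hl⟩

end LK

namespace LK
variable {V : Type u} {E : Type v} {I : E → Sym2 V}
variable {H : Set E} {t : V} {w : E → List E} {en : E → V} {T B X Y : Set V}

/-- Trails between distinct terminals without inner terminals. -/
def TTrail (I : E → Sym2 V) (T : Set V) (l : List E) : Prop :=
  ∃ a b, a ∈ T ∧ b ∈ T ∧ a ≠ b ∧ Wk I a l b ∧ l.Nodup ∧
    ∀ m1 m2 d, l = m1 ++ m2 → m1 ≠ [] → m2 ≠ [] → Wk I a m1 d → d ∉ T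

/-- Perfect linkage by trails inside `H`. -/
def PL (I : E → Sym2 V) (T : Set V) (H : Set E) : Prop :=
  ∃ P : Set (List E), (∀ l ∈ P, TTrail I T l ∧ ∀ e ∈ l, e ∈ H) ∧
    (∀ l ∈ P, ∀ l' ∈ P, ∀ e, e ∈ l → e ∈ l' → l = l') ∧
    ∀ t ∈ T, ∀ e ∈ Src I H t, ∃ l ∈ P, e ∈ l

theorem step_path (N : Nice I T H) (e : E) : ∃ p : List E, (p ≠ [] → TTrail I T p) ∧
    (∀ k ∈ p, k ∈ H) ∧ Nice I T (H \ {k | k ∈ p}) ∧ ∀ t ∈ T, e ∈ Src I H t → e ∈ p := by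
  by_cases h : ∃ t ∈ T, e ∈ Src I H t
  · obtain ⟨t, ht, he⟩ := h
    obtain ⟨x, hI, p, b, h1, h2, h3, h4, h5, h6, h7⟩ := one_path N ht he
    refine ⟨e :: p, fun _ => ⟨t, b, ht, h4, fun h => h5 h.symm, Wk.cons hI h1, ?_, ?_⟩, ?_, h7, ?_⟩
    · simp only [List.nodup_cons]
      exact ⟨fun h => (h3 e h).2 rfl, h2⟩
    · intro m1 m2 d hm hm1 hm2 hd
      cases m1 with
      | nil => exact absurd rfl hm1
      | cons a m1 =>
        simp only [List.cons_append, List.cons.injEq] at hm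
        obtain ⟨rfl, rfl⟩ := hm
        obtain ⟨y', hy', hd⟩ := Wk.cons_iff.1 hd
        rw [hI] at hy'
        obtain rfl := Sym2.congr_right.1 hy'
        exact h6 m1 m2 d rfl hm2 hd
    · intro k hk
      rcases List.mem_cons.1 hk with rfl | hk
      · exact he.2
      · exact (h3 k hk).1
    · intro t ht _; simp
  · refine ⟨[], by simp, by simp, by simpa using N, ?_⟩
    intro t ht he
    exact absurd ⟨t, ht, he⟩ h

theorem PL_countable (N : Nice I T H) (hH : H.Countable) : PL I T H := by
  classical
  rcases H.eq_empty_or_nonempty with rfl | hne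
  · exact ⟨∅, by simp, by simp, by intro t _ e he; exact absurd he.2 (by simp)⟩
  obtain ⟨g, hg⟩ := hH.exists_eq_range hne
  choose p hp1 hp2 hp3 hp4 using fun (K : {K : Set E // Nice I T K}) (e : E) => step_path K.2 e
  let K : ℕ → {K : Set E // Nice I T K} := fun n => Nat.rec ⟨H, N⟩
    (fun n K => ⟨K.1 \ {k | k ∈ p K (g n)}, hp3 K (g n)⟩) n
  have hK : ∀ n, (K (n+1)).1 = (K n).1 \ {k | k ∈ p (K n) (g n)} := fun n => rfl
  have hK0 : (K 0).1 = H := rfl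
  clear_value K
  have hanti : Antitone (fun n => (K n).1) := by
    refine antitone_nat_of_succ_le ?_
    intro n
    rw [hK]; exact Set.sdiff_subset
  have hd : ∀ m n e, m < n → e ∈ p (K m) (g m) → e ∉ p (K n) (g n) := by
    intro m n e hmn h1 h2
    have h3 := hp2 _ _ _ h2
    have h4 := hanti hmn h3
    simp only [Nat.succ_eq_add_one, hK] at h4
    exact h4.2 h1
  refine ⟨{l | l ≠ [] ∧ ∃ n, l = p (K n) (g n)}, ?_, ?_, ?_⟩
  · rintro l ⟨hl, n, rfl⟩
    exact ⟨hp1 _ _ hl, fun e he => hK0 ▸ hanti (Nat.zero_le n) (hp2 _ _ e he)⟩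
  · rintro l ⟨hl, n, rfl⟩ l' ⟨hl', n', rfl⟩ e he he'
    rcases lt_trichotomy n n' with h | h | h
    · exact absurd he' (hd _ _ _ h he)
    · rw [h]
    · exact absurd he (hd _ _ _ h he')
  · intro t ht e he
    have : e ∈ Set.range g := hg ▸ he.2
    obtain ⟨n, rfl⟩ := this
    by_cases h : g n ∈ (K n).1
    · have := hp4 (K n) (g n) t ht ⟨he.1, h⟩
      exact ⟨_, ⟨List.ne_nil_of_mem this, n, rfl⟩, this⟩
    · have key : ∀ m, g n ∉ (K m).1 → ∃ j, g n ∈ p (K j) (g j) := by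
        intro m
        induction m with
        | zero => intro h; rw [hK0] at h; exact absurd he.2 h
        | succ m ih =>
          intro h
          by_cases h' : g n ∈ (K m).1
          · rw [hK] at h
            refine ⟨m, ?_⟩
            by_contra h2
            exact h ⟨h', h2⟩
          · exact ih h'
      obtain ⟨j, hj⟩ := key n h
      exact ⟨_, ⟨List.ne_nil_of_mem hj, j, rfl⟩, hj⟩

/-- Gluing perfect linkages of disjoint pieces. -/
theorem PL_iUnion {ι : Type*} (D : ι → Set E) (hD : ∀ i, PL I T (D i))
    (hdj : ∀ i j e, e ∈ D i → e ∈ D j → i = j) (hsub : ∀ i, D i ⊆ H)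
    (hcov : ∀ e ∈ H, ∃ i, e ∈ D i) : PL I T H := by
  choose P h1 h2 h3 using hD
  refine ⟨⋃ i, P i, ?_, ?_, ?_⟩
  · intro l hl
    obtain ⟨i, hi⟩ := Set.mem_iUnion.1 hl
    exact ⟨(h1 i l hi).1, fun e he => hsub i ((h1 i l hi).2 e he)⟩
  · intro l hl l' hl' e he he'
    obtain ⟨i, hi⟩ := Set.mem_iUnion.1 hl
    obtain ⟨j, hj⟩ := Set.mem_iUnion.1 hl'
    obtain rfl := hdj i j e ((h1 i l hi).2 e he) ((h1 j l' hj).2 e he')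
    exact h2 i l hi l' hj e he he'
  · intro t ht e he
    obtain ⟨i, hi⟩ := hcov e he.2
    obtain ⟨l, hl, hel⟩ := h3 i t ht e ⟨he.1, hi⟩
    exact ⟨l, Set.mem_iUnion.2 ⟨i, hl⟩, hel⟩

end LK

namespace LK
variable {V : Type u} {E : Type v} {I : E → Sym2 V}
variable {H : Set E} {t : V} {w : E → List E} {en : E → V} {T B X Y : Set V}

/-- Admissible sets of blocks for the finishing lemma. -/
structure Adm (I : E → Sym2 V) (H : Set E) (t : V) (B : Set V) (w : E → List E) (en : E → V)
    (A : Set (E × Finset (E × List E))) : Prop where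
  c1 : ∀ β ∈ A, ∃ u, (β.1, u) ∈ β.2
  c1' : ∀ β ∈ A, β.1 ∈ Src I H t ∧ en β.1 ∉ B
  c2 : ∀ β ∈ A, ∀ p ∈ β.2, p.1 ∈ Src I H t ∧ (∃ l, p.2 = p.1 :: l) ∧ p.2.Nodup ∧
    (∀ e ∈ p.2, e ∈ H) ∧ ∃ b ∈ B, Wk I t p.2 b
  c3 : ∀ β ∈ A, ∀ p ∈ β.2, ∀ β' ∈ A, ∀ p' ∈ β'.2, ∀ e, e ∈ p.2 → e ∈ p'.2 → β = β' ∧ p = p'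
  c4 : ∀ s ∈ Src I H t, (∀ β ∈ A, ∀ p ∈ β.2, p.1 ≠ s) →
    ∀ β ∈ A, ∀ p ∈ β.2, ∀ e ∈ p.2, e ∉ w s

open Cardinal in
theorem finish (F : Fam I H t w en) (ht : t ∈ T) (hB : t ∉ B) (c : Cardinal.{v}) (hc : ℵ₀ ≤ c)
    (hD : #{s | s ∈ Src I H t ∧ en s ∉ B} ≤ c)
    (hno : ∀ s ∈ Src I H t, en s ∉ B → ∀ Z : Set E, #Z ≤ c → ∀ X, en s ∈ X → Disjoint X B →
      ∀ q, ¬ Shel I (H \ Z) T X q) : LinkedTo I H t B := by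
  classical
  obtain ⟨A, hA⟩ : ∃ A, Maximal (fun A => Adm I H t B w en A) A := by
    refine zorn_subset {A | Adm I H t B w en A} ?_
    intro C hC hch
    refine ⟨⋃₀ C, ⟨?_, ?_, ?_, ?_, ?_⟩, fun A hA => Set.subset_sUnion_of_mem hA⟩
    · rintro β ⟨A, hA, hβ⟩
      exact (hC hA).c1 β hβ
    · rintro β ⟨A, hA, hβ⟩
      exact (hC hA).c1' β hβ
    · rintro β ⟨A, hA, hβ⟩
      exact (hC hA).c2 β hβ
    · rintro β ⟨A, hA, hβ⟩ p hp β' ⟨A', hA', hβ'⟩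
      rcases hch.total hA hA' with h | h
      · exact (hC hA').c3 β (h hβ) p hp β' hβ'
      · exact (hC hA).c3 β hβ p hp β' (h hβ')
    · rintro s hs h β ⟨A, hA, hβ⟩
      exact (hC hA).c4 s hs (fun β hβ => h β ⟨A, hA, hβ⟩) β hβ
  have hAd := hA.1
  by_cases hall : ∀ s ∈ Src I H t, en s ∉ B → ∃ β ∈ A, ∃ p ∈ β.2, p.1 = s
  · -- all finalized
    have hch : ∀ s, ∃ u b, s ∈ Src I H t → ((∃ β ∈ A, (s, u) ∈ β.2) ∨
        ((∀ β ∈ A, ∀ p ∈ β.2, p.1 ≠ s) ∧ u = w s)) ∧ b ∈ B ∧ Wk I t u b ∧ (∃ l, u = s :: l) ∧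
        u.Nodup ∧ ∀ e ∈ u, e ∈ H := by
      intro s
      by_cases hs : s ∈ Src I H t
      · by_cases h : ∃ β ∈ A, ∃ p ∈ β.2, p.1 = s
        · obtain ⟨β, hβ, ⟨s', u⟩, hp, rfl⟩ := h
          obtain ⟨h1, h2, h3, h4, b, hb, h5⟩ := hAd.c2 β hβ _ hp
          exact ⟨u, b, fun _ => ⟨Or.inl ⟨β, hβ, hp⟩, hb, h5, h2, h3, h4⟩⟩
        · refine ⟨w s, en s, fun _ => ⟨Or.inr ⟨?_, rfl⟩, ?_, F.wk s hs, F.hd s hs, F.nd s hs,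
            F.sub s hs⟩⟩
          · intro β hβ p hp hps
            exact h ⟨β, hβ, p, hp, hps⟩
          · by_contra hb
            exact h (hall s hs hb)
      · exact ⟨[], t, fun h => absurd h hs⟩
    choose w' en' hw' using hch
    refine ⟨w', en', ⟨fun s hs => (hw' s hs).2.2.1, fun s hs => (hw' s hs).2.2.2.1,
      fun s hs => (hw' s hs).2.2.2.2.1, fun s hs => (hw' s hs).2.2.2.2.2, ?_⟩,
      fun s hs => (hw' s hs).2.1⟩
    intro s hs s' hs' e he he'
    rcases (hw' s hs).1 with ⟨β, hβ, hp⟩ | ⟨h, h2⟩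
    · rcases (hw' s' hs').1 with ⟨β', hβ', hp'⟩ | ⟨h', h2'⟩
      · have := (hAd.c3 β hβ _ hp β' hβ' _ hp' e he he').2
        exact congrArg Prod.fst this
      · rw [h2'] at he'
        exact absurd he' (hAd.c4 s' hs' h' β hβ _ hp e he)
    · rcases (hw' s' hs').1 with ⟨β', hβ', hp'⟩ | ⟨h', h2'⟩
      · rw [h2] at he
        exact absurd he (hAd.c4 s hs h β' hβ' _ hp' e he')
      · rw [h2] at he; rw [h2'] at he'
        exact F.dj s hs s' hs' e he he'
  · exfalso
    push Not at hall
    obtain ⟨s0, hs0, hs0B, hun⟩ := hall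
    set Z1 : Set E := ⋃ β : A, {e | ∃ p ∈ β.1.2, e ∈ p.2} with hZ1
    set Z2 : Set E := ⋃ s : {s | s ∈ Src I H t ∧ en s ∉ B},
      {e | s.1 ≠ s0 ∧ (∀ β ∈ A, ∀ p ∈ β.2, p.1 ≠ s.1) ∧ e ∈ w s.1} with hZ2
    have mZ1 : ∀ e, e ∈ Z1 ↔ ∃ β ∈ A, ∃ p ∈ β.2, e ∈ p.2 := by
      intro e; simp [hZ1]
    have mZ2 : ∀ e, e ∈ Z2 ↔ ∃ s ∈ Src I H t, en s ∉ B ∧ s ≠ s0 ∧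
        (∀ β ∈ A, ∀ p ∈ β.2, p.1 ≠ s) ∧ e ∈ w s := by
      intro e
      simp only [hZ2, Set.mem_iUnion, Set.mem_ofPred_eq, Subtype.exists, exists_prop, and_assoc]
    have cA : #A ≤ c := by
      refine le_trans ?_ hD
      refine Cardinal.mk_le_of_injective (f := fun β : A =>
        (⟨β.1.1, hAd.c1' β.1 β.2⟩ : {s | s ∈ Src I H t ∧ en s ∉ B})) ?_
      intro β β' h
      have h' : β.1.1 = β'.1.1 := congrArg Subtype.val h
      obtain ⟨u, hu⟩ := hAd.c1 β.1 β.2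
      obtain ⟨u', hu'⟩ := hAd.c1 β'.1 β'.2
      obtain ⟨-, ⟨l, hl⟩, -⟩ := hAd.c2 β.1 β.2 _ hu
      obtain ⟨-, ⟨l', hl'⟩, -⟩ := hAd.c2 β'.1 β'.2 _ hu'
      refine Subtype.ext (hAd.c3 β.1 β.2 _ hu β'.1 β'.2 _ hu' β.1.1 ?_ ?_).1
      · simp only at hl; rw [hl]; simp
      · simp only at hl'; rw [hl', h']; simp
    have hcount : ∀ {ι : Type v} (f : ι → Set E), #ι ≤ c → (∀ i, (f i).Finite) →
        #(⋃ i, f i) ≤ c := by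
      intro ι f h1 h2
      refine (Cardinal.mk_iUnion_le_sum_mk).trans ((Cardinal.sum_le_sum _ (fun _ => ℵ₀)
        (fun i => ((Cardinal.lt_aleph0_iff_set_finite).2 (h2 i)).le)).trans ?_)
      simp only [Cardinal.sum_const, Cardinal.lift_id]
      exact (mul_le_mul' h1 hc).trans (Cardinal.mul_eq_self hc).le
    have cZ : #(Z1 ∪ Z2 : Set E) ≤ c := by
      refine (Cardinal.mk_union_le _ _).trans ?_
      refine (add_le_add ?_ ?_).trans (Cardinal.add_eq_self hc).le
      · refine hcount _ cA ?_
        intro β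
        refine (β.1.2.finite_toSet.biUnion (t := fun p => {e | e ∈ p.2})
          (fun p _ => List.finite_toSet p.2)).subset ?_
        rintro e ⟨p, hp, he⟩
        exact Set.mem_biUnion (show p ∈ (β.1.2 : Set _) from hp) he
      · refine hcount _ hD ?_
        intro s
        exact (List.finite_toSet (w s.1)).subset (fun e he => he.2.2)
    set H2 := H \ (Z1 ∪ Z2) with hH2
    have hsub : H2 ⊆ H := Set.sdiff_subset
    have hsrc : ∀ s, s ∈ Src I H2 t ↔ s ∈ Src I H t ∧ (∀ β ∈ A, ∀ p ∈ β.2, p.1 ≠ s) ∧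
        (s = s0 ∨ en s ∈ B) := by
      intro s
      constructor
      · intro hs
        have hs' := Src_mono hsub hs
        have hsZ := (mem_Src.1 hs).1.2
        have hun' : ∀ β ∈ A, ∀ p ∈ β.2, p.1 ≠ s := by
          rintro β hβ p hp rfl
          apply hsZ
          left
          rw [mZ1]
          obtain ⟨-, ⟨l, hl⟩, -⟩ := hAd.c2 β hβ _ hp
          exact ⟨β, hβ, p, hp, by rw [hl]; simp⟩
        refine ⟨hs', hun', ?_⟩
        by_contra hcon
        push Not at hcon
        apply hsZ
        right
        rw [mZ2]
        exact ⟨s, hs', hcon.2, hcon.1, hun', F.mem_self hs'⟩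
      · rintro ⟨hs, h1, h2⟩
        refine ⟨hs.1, hs.2, ?_⟩
        rintro (hz | hz)
        · rw [mZ1] at hz
          obtain ⟨β, hβ, p, hp, he⟩ := hz
          exact hAd.c4 s hs h1 β hβ p hp s he (F.mem_self hs)
        · rw [mZ2] at hz
          obtain ⟨s', hs', h3, h4, h5, h6⟩ := hz
          obtain rfl := F.dj s hs s' hs' s (F.mem_self hs) h6
          tauto
    have F2 : Fam I H2 t w en := by
      refine F.restrict hsub ?_
      intro s hs e he
      have h := (hsrc s).1 hs
      refine ⟨F.sub s h.1 e he, ?_⟩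
      rintro (hz | hz)
      · rw [mZ1] at hz
        obtain ⟨β, hβ, p, hp, he'⟩ := hz
        exact hAd.c4 s h.1 h.2.1 β hβ p hp e he' he
      · rw [mZ2] at hz
        obtain ⟨s', hs', h3, h4, h5, h6⟩ := hz
        obtain rfl := F.dj s h.1 s' hs' e he h6
        tauto
    have hs02 : s0 ∈ Src I H2 t := (hsrc s0).2 ⟨hs0, fun β hβ p hp => hun β hβ p hp, Or.inl rfl⟩
    rcases F2.dichotomy hs02 hB with ⟨z, hz, w', en', F', π, hπ, hen', hfin⟩ | ⟨X, h1, h2, h3⟩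
    · -- new block
      have hen2 : ∀ s ∈ Src I H2 t, en' s ∈ B := by
        intro s hs
        rw [hen' s hs]
        by_cases h : π s = s0
        · rw [h]; simpa using hz
        · simp only [Function.update_of_ne h]
          rcases ((hsrc (π s)).1 ((hπ s).2 hs)).2.2 with h' | h'
          · exact absurd h' h
          · exact h'
      have hf2 : {s | s ∈ Src I H2 t ∧ (s = s0 ∨ w' s ≠ w s)}.Finite := by
        refine (hfin.union (Set.finite_singleton s0)).subset ?_
        rintro s ⟨-, h | h⟩
        · right; exact h
        · left; exact h
      set β0 : E × Finset (E × List E) := (s0, hf2.toFinset.image (fun s => (s, w' s))) with hβ0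
      have mβ : ∀ p, p ∈ β0.2 ↔ p.1 ∈ Src I H2 t ∧ (p.1 = s0 ∨ w' p.1 ≠ w p.1) ∧ p.2 = w' p.1 := by
        intro p
        obtain ⟨s, u⟩ := p
        simp only [hβ0, Finset.mem_image, Set.Finite.mem_toFinset, Set.mem_ofPred_eq, Prod.mk.injEq]
        constructor
        · rintro ⟨s', ⟨h1, h2⟩, rfl, rfl⟩; exact ⟨h1, h2, rfl⟩
        · rintro ⟨h1, h2, rfl⟩; exact ⟨s, ⟨h1, h2⟩, rfl, rfl⟩
      have hβ1 : β0.1 = s0 := rfl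
      clear_value β0
      have hold : ∀ p ∈ β0.2, ∀ β ∈ A, ∀ p' ∈ β.2, ∀ e ∈ p.2, e ∉ p'.2 := by
        intro p hp β hβ p' hp' e he he'
        obtain ⟨h1, h2, h3⟩ := (mβ p).1 hp
        rw [h3] at he
        apply (F'.sub _ h1 e he).2
        left
        rw [mZ1]
        exact ⟨β, hβ, p', hp', he'⟩
      have hs0β : (s0, w' s0) ∈ β0.2 := (mβ _).2 ⟨hs02, Or.inl rfl, rfl⟩
      have hAd' : Adm I H t B w en (insert β0 A) := by
        refine ⟨?_, ?_, ?_, ?_, ?_⟩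
        · rintro β (rfl | hβ)
          · exact ⟨w' s0, by rw [hβ1]; exact hs0β⟩
          · exact hAd.c1 β hβ
        · rintro β (rfl | hβ)
          · rw [hβ1]; exact ⟨hs0, hs0B⟩
          · exact hAd.c1' β hβ
        · rintro β (rfl | hβ)
          · intro p hp
            obtain ⟨h1, h2, h3⟩ := (mβ p).1 hp
            rw [h3]
            exact ⟨Src_mono hsub h1, F'.hd _ h1, F'.nd _ h1, fun e he => hsub (F'.sub _ h1 e he),
              en' p.1, hen2 _ h1, F'.wk _ h1⟩
          · exact hAd.c2 β hβ
        · rintro β hβ p hp β' hβ' p' hp' e he he'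
          rcases hβ with rfl | hβ
          · rcases hβ' with rfl | hβ'
            · refine ⟨rfl, ?_⟩
              obtain ⟨h1, h2, h3⟩ := (mβ p).1 hp
              obtain ⟨h1', h2', h3'⟩ := (mβ p').1 hp'
              rw [h3] at he; rw [h3'] at he'
              have := F'.dj _ h1 _ h1' e he he'
              exact Prod.ext this (by rw [h3, h3', this])
            · exact absurd he' (hold p hp β' hβ' p' hp' e he)
          · rcases hβ' with rfl | hβ'
            · exact absurd he (hold p' hp' β hβ p hp e he')
            · exact hAd.c3 β hβ p hp β' hβ' p' hp' e he he'
        · rintro s hs hu β (rfl | hβ) p hp e he hew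
          · obtain ⟨h1, h2, h3⟩ := (mβ p).1 hp
            have hu' : ∀ β ∈ A, ∀ p ∈ β.2, p.1 ≠ s := fun β hβ => hu β (Or.inr hβ)
            have hss0 : s ≠ s0 := fun h => hu β (Or.inl rfl) _ hs0β h.symm
            rw [h3] at he
            by_cases hsB : en s ∈ B
            · have hs2 : s ∈ Src I H2 t := (hsrc s).2 ⟨hs, hu', Or.inr hsB⟩
              have hws : w' s = w s := by
                by_contra hne
                exact hu β (Or.inl rfl) (s, w' s) ((mβ _).2 ⟨hs2, Or.inr hne, rfl⟩) rfl
              rw [← hws] at hew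
              exact hu β (Or.inl rfl) p hp (F'.dj _ h1 _ hs2 e he hew)
            · apply (F'.sub _ h1 e he).2
              right
              rw [mZ2]
              exact ⟨s, hs, hsB, hss0, hu', hew⟩
          · exact hAd.c4 s hs (fun β hβ => hu β (Or.inr hβ)) β hβ p hp e he hew
      have : β0 ∈ A := hA.2 hAd' (Set.subset_insert _ _) (Set.mem_insert _ _)
      exact hun β0 this _ hs0β rfl
    · obtain ⟨q, hq⟩ := h3.shel F2 ht
      exact hno s0 hs0 hs0B _ cZ X h1 h2 q hq

end LK

namespace LK
variable {V : Type u} {E : Type v} {I : E → Sym2 V}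
variable {H : Set E} {t : V} {w : E → List E} {en : E → V} {T B X Y : Set V}

/-- One step in the graph with all terminals identified. -/
def Adj (I : E → Sym2 V) (T : Set V) (K : Set E) (x y : V) : Prop :=
  (x ∈ T ∧ y ∈ T) ∨ ∃ e ∈ K, I e = s(x, y)

def Conn (I : E → Sym2 V) (T : Set V) (K : Set E) : V → V → Prop :=
  Relation.ReflTransGen (Adj I T K)

theorem Conn.symm {K : Set E} {x y : V} (h : Conn I T K x y) : Conn I T K y x := by
  have : Std.Symm (Adj I T K) := ⟨by
    rintro a b (⟨h1, h2⟩ | ⟨e, h1, h2⟩)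
    · exact Or.inl ⟨h2, h1⟩
    · exact Or.inr ⟨e, h1, by rw [h2, Sym2.eq_swap]⟩⟩
  exact Relation.ReflTransGen.stdSymm.symm _ _ h

theorem Conn.mono {K K' : Set E} (hK : K ⊆ K') {x y : V} (h : Conn I T K x y) :
    Conn I T K' x y := by
  refine Relation.ReflTransGen.mono (p := Adj I T K') ?_ _ _ h
  rintro a b (h1 | ⟨e, h1, h2⟩)
  · exact Or.inl h1
  · exact Or.inr ⟨e, hK h1, h2⟩

theorem Conn.fin {K : Set E} {x y : V} (h : Conn I T K x y) :
    ∃ S : Set E, S.Finite ∧ S ⊆ K ∧ Conn I T S x y := by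
  induction h with
  | refl => exact ⟨∅, Set.finite_empty, Set.empty_subset _, Relation.ReflTransGen.refl⟩
  | tail _ h2 ih =>
    obtain ⟨S, hS, hSK, hc⟩ := ih
    rcases h2 with h2 | ⟨e, he, h2⟩
    · exact ⟨S, hS, hSK, Relation.ReflTransGen.tail hc (Or.inl h2)⟩
    · refine ⟨insert e S, hS.insert e, Set.insert_subset he hSK, ?_⟩
      exact Relation.ReflTransGen.tail (Conn.mono (Set.subset_insert _ _) hc)
        (Or.inr ⟨e, Set.mem_insert _ _, h2⟩)

theorem Conn.stay {K : Set E} {x y : V} (h : Conn I T K x y) (hX : Disjoint X T)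
    (hK : ∀ e ∈ K, e ∉ Dl I X) (hx : x ∈ X) : y ∈ X := by
  induction h with
  | refl => exact hx
  | tail _ h2 ih =>
    rcases h2 with h2 | ⟨e, he, h2⟩
    · exact absurd h2.1 (Set.disjoint_left.1 hX ih)
    · by_contra hc
      exact hK e he ⟨_, _, h2, ih, hc⟩

/-- Endpoints of a set of edges, together with the base terminal. -/
def Pt (I : E → Sym2 V) (t0 : V) (A : Set E) : Set V := {x | x = t0 ∨ ∃ s ∈ A, x ∈ I s}

theorem Pt_mono {t0 : V} {A A' : Set E} (h : A ⊆ A') : Pt I t0 A ⊆ Pt I t0 A' := by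
  rintro x (hx | ⟨s, hs, hx⟩)
  · exact Or.inl hx
  · exact Or.inr ⟨s, h hs, hx⟩

theorem sym2_fin (z : Sym2 V) : {x | x ∈ z}.Finite := by
  induction z using Sym2.ind with
  | _ a b =>
    refine (Set.toFinite {a, b}).subset ?_
    intro x hx
    simpa using hx

theorem Pt_fin {t0 : V} (A : Finset E) : (Pt I t0 (A : Set E)).Finite := by
  have : Pt I t0 (A : Set E) = {t0} ∪ ⋃ s ∈ (A : Set E), {x | x ∈ I s} := by
    ext x; simp [Pt]
  rw [this]
  exact (Set.finite_singleton _).union (A.finite_toSet.biUnion fun s _ => sym2_fin _)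

theorem D1 {t0 : V} (ht0 : t0 ∈ T) (N : Nice I T H) : ∃ Ψ : Finset E → Set E,
    (∀ A, (Ψ A).Countable) ∧
    ∀ F : Set E, (∀ A : Finset E, (A : Set E) ⊆ F → Ψ A ⊆ F) → Nice I T (H ∩ F) := by
  classical
  have h1 : ∀ t, ∃ w en, t ∈ T → Fam I H t w en ∧ ∀ s ∈ Src I H t, en s ∈ T \ {t} := by
    intro t
    by_cases ht : t ∈ T
    · obtain ⟨w, en, h⟩ := N.2 t ht
      exact ⟨w, en, fun _ => h⟩
    · exact ⟨fun _ => [], fun _ => t, fun h => absurd h ht⟩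
  choose w en hw using h1
  have h2 : ∀ (A : Finset E) (x y : V), ∃ S : Set E, S.Finite ∧
      (Conn I T (H \ A) x y → S ⊆ H \ A ∧ Conn I T S x y) := by
    intro A x y
    by_cases h : Conn I T (H \ A) x y
    · obtain ⟨S, hS, h'⟩ := h.fin
      exact ⟨S, hS, fun _ => h'⟩
    · exact ⟨∅, Set.finite_empty, fun h' => absurd h' h⟩
  choose π hπ1 hπ2 using h2
  refine ⟨fun A => (⋃ s ∈ (A : Set E), ⋃ t ∈ {x | x ∈ I s}, {e | e ∈ w t s}) ∪
    ⋃ x ∈ Pt I t0 (A : Set E), ⋃ y ∈ Pt I t0 (A : Set E), π A x y, ?_, ?_⟩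
  · intro A
    refine Set.Finite.countable (Set.Finite.union ?_ ?_)
    · exact A.finite_toSet.biUnion fun s _ => (sym2_fin _).biUnion fun t _ => List.finite_toSet _
    · exact (Pt_fin A).biUnion fun x _ => (Pt_fin A).biUnion fun y _ => hπ1 A x y
  · intro F hF
    have o1 : ∀ s ∈ F, ∀ t ∈ I s, ∀ e ∈ w t s, e ∈ F := by
      intro s hs t ht e he
      refine hF {s} (by simpa using hs) (Or.inl ?_)
      simp only [Set.mem_iUnion]
      exact ⟨s, by simp, t, ht, he⟩
    have o2 : ∀ A : Finset E, (A : Set E) ⊆ F → ∀ x ∈ Pt I t0 (A : Set E),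
        ∀ y ∈ Pt I t0 (A : Set E), Conn I T (H \ A) x y → Conn I T ((H ∩ F) \ A) x y := by
      intro A hA x hx y hy h
      obtain ⟨h3, h4⟩ := hπ2 A x y h
      refine h4.mono (fun e he => ?_)
      refine ⟨⟨(h3 he).1, hF A hA (Or.inr ?_)⟩, (h3 he).2⟩
      simp only [Set.mem_iUnion]
      exact ⟨x, hx, y, hy, he⟩
    constructor
    · rintro X hX ⟨hfin, hodd⟩
      obtain ⟨A, hA⟩ := hfin.exists_finset_coe
      have hAF : (A : Set E) ⊆ F := by rw [hA]; exact fun e he => he.2.2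
      have hK : ∀ e ∈ (H ∩ F) \ A, e ∉ Dl I X := by
        intro e he h
        apply he.2
        rw [hA]
        exact ⟨h, he.1⟩
      set Z : Set V := {z | ∃ a ∈ A, ∃ v ∈ I a, v ∈ X ∧ Conn I T (H \ A) v z} with hZ
      have hZX : ∀ z ∈ Z, z ∈ Pt I t0 (A : Set E) → z ∈ X := by
        rintro z ⟨a, ha, v, hv, hvX, hc⟩ hz
        exact (o2 A hAF v (Or.inr ⟨a, ha, hv⟩) z hz hc).stay hX hK hvX
      have hZT : Disjoint Z T := by
        rw [Set.disjoint_left]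
        rintro z ⟨a, ha, v, hv, hvX, hc⟩ hzT
        have h5 : t0 ∈ Z := ⟨a, ha, v, hv, hvX, Relation.ReflTransGen.tail hc (Or.inl ⟨hzT, ht0⟩)⟩
        exact Set.disjoint_left.1 hX (hZX t0 h5 (Or.inl rfl)) ht0
      have hcut : Dl I Z ∩ H = Dl I X ∩ (H ∩ F) := by
        rw [← hA]
        apply Set.Subset.antisymm
        · rintro e ⟨⟨u, v, he, hu, hv⟩, heH⟩
          by_contra heA
          apply hv
          obtain ⟨a, ha, v', hv', hvX, hc⟩ := hu
          exact ⟨a, ha, v', hv', hvX, Relation.ReflTransGen.tail hc (Or.inr ⟨e, ⟨heH, heA⟩, he⟩)⟩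
        · intro e he
          have he' := he
          rw [hA] at he'
          obtain ⟨⟨u, v, h3, hu, hv⟩, heH, heF⟩ := he'
          refine ⟨⟨u, v, h3, ⟨e, he, u, by simp [h3], hu, Relation.ReflTransGen.refl⟩, ?_⟩, heH⟩
          intro hvZ
          exact hv (hZX v hvZ (Or.inr ⟨e, he, by simp [h3]⟩))
      apply N.1 Z hZT
      rw [hcut]
      exact ⟨hfin, hodd⟩
    · intro t ht
      refine ⟨w t, en t, (hw t ht).1.restrict Set.inter_subset_left ?_,
        fun s hs => (hw t ht).2 s (Src_mono Set.inter_subset_left hs)⟩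
      intro s hs e he
      refine ⟨(hw t ht).1.sub s (Src_mono Set.inter_subset_left hs) e he, ?_⟩
      obtain ⟨h3, y, h4, h5⟩ := mem_Src.1 hs
      exact o1 s h3.2 t (by simp [h5]) e he

end LK

namespace LK
variable {V : Type u} {E : Type v} {I : E → Sym2 V}
variable {H : Set E} {t : V} {w : E → List E} {en : E → V} {T B X Y : Set V}
open Cardinal

theorem capture {ι : Type v} [LinearOrder ι] [WellFoundedLT ι] (Q : Set E → Prop) :
    ∃ (g : ι → Set E) (W : Set E), (∀ i, (g i).Countable) ∧
      ∀ (a : ι) (S : Set E), #S ≤ #(Set.Iio a) * ℵ₀ → Q S → Q W ∧ W ⊆ ⋃ i ∈ Set.Iio a, g i := by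
  classical
  by_cases h : ∃ a : ι, ∃ S : Set E, #S ≤ #(Set.Iio a) * ℵ₀ ∧ Q S
  · obtain ⟨a0, ⟨W, hW, hQ⟩, hmin⟩ := WellFounded.has_min (wellFounded_lt (α := ι))
      {a | ∃ S : Set E, #S ≤ #(Set.Iio a) * ℵ₀ ∧ Q S} h
    have : #W ≤ #(Set.Iio a0 × ULift.{v} ℕ) := by simpa using hW
    obtain ⟨em⟩ := (Cardinal.le_def _ _).1 this
    refine ⟨fun i => {e | ∃ h : e ∈ W, ((em ⟨e, h⟩).1 : ι) = i}, W, ?_, ?_⟩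
    · intro i
      rw [Set.countable_iff_exists_injOn]
      refine ⟨fun e => if h : e ∈ W then (em ⟨e, h⟩).2.down else 0, ?_⟩
      rintro e ⟨h1, h2⟩ e' ⟨h1', h2'⟩ heq
      simp only [h1, h1', dif_pos] at heq
      have : em ⟨e, h1⟩ = em ⟨e', h1'⟩ := by
        refine Prod.ext (Subtype.ext (h2.trans h2'.symm)) (ULift.ext _ _ heq)
      exact congrArg Subtype.val (em.injective this)
    · intro a S hS hQS
      refine ⟨hQ, ?_⟩
      intro e he
      have hle : a0 ≤ a := not_lt.1 (hmin a ⟨S, hS, hQS⟩)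
      simp only [Set.mem_iUnion]
      exact ⟨(em ⟨e, he⟩).1, lt_of_lt_of_le (em ⟨e, he⟩).1.2 hle, he, rfl⟩
  · refine ⟨fun _ => ∅, ∅, by simp, ?_⟩
    intro a S hS hQ
    exact absurd ⟨a, S, hS, hQ⟩ h

theorem D2_IE {t0 : V} (ht0 : t0 ∈ T) (hIE : IE I T H) {F : Set E} {c : Cardinal.{v}} (hc : ℵ₀ ≤ c)
    (hF : #F ≤ c) (hsep : ∀ x ∈ Pt I t0 F, ∀ y ∈ Pt I t0 F, Conn I T (H \ F) x y →
      ∀ S : Set E, #S ≤ c → Conn I T (H \ S) x y) : IE I T (H \ F) := by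
  classical
  rintro X hX ⟨hfin, hodd⟩
  set C := Dl I X ∩ (H \ F) with hC
  let comp : E → Set V := fun e => {z | ∃ u ∈ I e, Conn I T (H \ F) u z}
  have hcomp : ∀ e ∈ H \ F, ∀ u ∈ I e, comp e = {z | Conn I T (H \ F) u z} := by
    intro e he u hu
    ext z
    constructor
    · rintro ⟨u', hu', hz⟩
      by_cases h : u = u'
      · rw [h]; exact hz
      · have : I e = s(u, u') := (Sym2.mem_and_mem_iff h).1 ⟨hu, hu'⟩
        exact Relation.ReflTransGen.head (Or.inr ⟨e, he, this⟩) hz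
    · intro hz; exact ⟨u, hu, hz⟩
  obtain ⟨K, hK⟩ : ∃ K, Odd {e | e ∈ C ∧ comp e = K}.ncard := by
    by_contra hcon
    push Not at hcon
    have h1 := Finset.card_eq_sum_card_image comp hfin.toFinset
    rw [← Set.ncard_eq_toFinset_card C hfin] at h1
    rw [h1, ← Nat.not_even_iff_odd] at hodd
    apply hodd
    apply Finset.even_sum
    intro K hK
    have h2 := hcon K
    rw [Nat.not_odd_iff_even] at h2
    have h3 : {e | e ∈ C ∧ comp e = K} =
        ((hfin.toFinset.filter fun a => comp a = K : Finset E) : Set E) := by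
      ext e; simp
    rw [h3, Set.ncard_coe_finset] at h2
    exact h2
  have hne : {e | e ∈ C ∧ comp e = K}.Nonempty := by
    rw [Set.nonempty_iff_ne_empty]
    intro h
    rw [h] at hK
    simp at hK
  obtain ⟨e0, he0, he0K⟩ := hne
  obtain ⟨u0, v0, hI0, hu0, hv0⟩ := he0.1
  have hKu : K = {z | Conn I T (H \ F) u0 z} := by
    rw [← he0K]; exact hcomp e0 he0.2 u0 (by simp [hI0])
  have hKconn : ∀ x ∈ K, ∀ y, Conn I T (H \ F) x y → y ∈ K := by
    intro x hx y h
    rw [hKu] at hx ⊢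
    exact Relation.ReflTransGen.trans hx h
  have hKtwo : ∀ x ∈ K, ∀ y ∈ K, Conn I T (H \ F) x y := by
    intro x hx y hy
    rw [hKu] at hx hy
    exact Relation.ReflTransGen.trans (Conn.symm hx) hy
  have hCK : ∀ e ∈ H \ F, ∀ u ∈ I e, u ∈ K → comp e = K := by
    intro e he u hu huK
    rw [hcomp e he u hu]
    ext z
    exact ⟨fun h => hKconn u huK z h, fun h => hKtwo u huK z h⟩
  have hCK' : ∀ e ∈ H \ F, comp e = K → ∀ u ∈ I e, u ∈ K := by
    intro e he h u hu
    rw [← h]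
    exact ⟨u, hu, Relation.ReflTransGen.refl⟩
  have hCKf : {e | e ∈ C ∧ comp e = K}.Finite := hfin.subset fun e he => he.1
  -- any set `Z` inside `K` avoiding `Pt F`, which looks like `X` or its complement in `K`
  have key : ∀ Z : Set V, Disjoint Z T → Z ⊆ K → (∀ z ∈ Z, z ∉ Pt I t0 F) →
      (∀ x ∈ K, ∀ y ∈ K, (x ∈ Z ↔ y ∈ Z) ↔ (x ∈ X ↔ y ∈ X)) → False := by
    intro Z hZT hZK hZF hZX
    apply hIE Z hZT
    have : Dl I Z ∩ H = {e | e ∈ C ∧ comp e = K} := by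
      ext e
      constructor
      · rintro ⟨⟨u, v, he, hu, hv⟩, heH⟩
        have heF : e ∉ F := fun h => hZF u hu (Or.inr ⟨e, h, by simp [he]⟩)
        have h1 : comp e = K := hCK e ⟨heH, heF⟩ u (by simp [he]) (hZK hu)
        refine ⟨⟨?_, heH, heF⟩, h1⟩
        rw [mem_Dl he, ← hZX u (hZK hu) v (hCK' e ⟨heH, heF⟩ h1 v (by simp [he]))]
        tauto
      · rintro ⟨⟨h1, h2⟩, h3⟩
        refine ⟨?_, h2.1⟩
        obtain ⟨u, v, he, hu, hv⟩ := h1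
        rw [mem_Dl he, hZX u (hCK' e h2 h3 u (by simp [he])) v (hCK' e h2 h3 v (by simp [he]))]
        tauto
    rw [this]
    exact ⟨hCKf, hK⟩
  by_cases hx : ∃ x ∈ X ∩ K, x ∈ Pt I t0 F
  · by_cases hy : ∃ y ∈ K \ X, y ∈ Pt I t0 F
    · obtain ⟨x, hxK, hxF⟩ := hx
      obtain ⟨y, hyK, hyF⟩ := hy
      have h1 := hsep x hxF y hyF (hKtwo x hxK.2 y hyK.1) (F ∪ C) (by
        refine (Cardinal.mk_union_le _ _).trans ((add_le_add hF ?_).trans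
          (Cardinal.add_eq_self hc).le)
        exact (Cardinal.lt_aleph0_iff_set_finite.2 hfin).le.trans hc)
      apply hyK.2
      refine h1.stay hX ?_ hxK.1
      intro e he hd
      exact he.2 (Or.inr ⟨hd, he.1, fun h => he.2 (Or.inl h)⟩)
    · push Not at hy
      refine key (K \ X) ?_ Set.sdiff_subset hy ?_
      · rw [Set.disjoint_left]
        rintro z hz hzT
        have ht0K : t0 ∈ K := hKconn z hz.1 t0 (Relation.ReflTransGen.single (Or.inl ⟨hzT, ht0⟩))
        exact hy t0 ⟨ht0K, fun h => Set.disjoint_left.1 hX h ht0⟩ (Or.inl rfl)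
      · intro x hx y hy
        simp only [Set.mem_sdiff, hx, hy, true_and]
        tauto
  · push Not at hx
    refine key (X ∩ K) (hX.mono_left Set.inter_subset_left) Set.inter_subset_right hx ?_
    intro x hx y hy
    simp [hx, hy]

theorem D2_link {t0 : V} (ht : t ∈ T) {F : Set E} {c : Cardinal.{v}} (hc : ℵ₀ ≤ c)
    (hF : #F ≤ c) (Fm : Fam I H t w en) (hen : ∀ s ∈ Src I H t, en s ∈ T \ {t})
    (htF : t ∉ Pt I t0 F) {q : E → List E} (hS : Shel I (H \ F) T Y q) (htY : t ∉ Y)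
    (hh : ∀ v ∈ Pt I t0 F, ∀ S : Set E, #S ≤ c → ∀ X q, v ∈ X → (X ∩ T).Subsingleton →
      Shel I (H \ S) T X q → v ∈ Y) : LinkedTo I (H \ F) t (T \ {t}) := by
  classical
  refine hS.link htY ?_
  set B := (T \ {t}) ∪ Y with hB
  have htB : t ∉ B := by simp [hB, htY]
  have htB' : t ∉ Pt I t0 F ∪ B := by
    rintro (h | h)
    · exact htF h
    · exact htB h
  have h1 : ∀ s, ∃ l b, s ∈ Src I H t → (∃ m, w s = l ++ m) ∧ l ≠ [] ∧ Wk I t l b ∧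
      (∀ e ∈ l, e ∉ F) ∧ ((∃ e ∈ w s, e ∈ F) ∧ b ∈ Pt I t0 F ∨ b ∈ B) := by
    intro s
    by_cases hs : s ∈ Src I H t
    · by_cases hd : ∃ e ∈ w s, e ∈ F
      · obtain ⟨l1, l2, b, h2, h3, h4, h5, h6⟩ := (Fm.wk s hs).firstHit
          (B := Pt I t0 F ∪ B) (Or.inr (Or.inl (hen s hs)))
        refine ⟨l1, b, fun _ => ⟨⟨l2, h2⟩, ?_, h3, ?_, ?_⟩⟩
        · rintro rfl
          rw [Wk.nil_iff] at h3
          exact htB' (h3 ▸ h5)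
        · intro e he heF
          refine h6.not_ins h3 e he ?_
          intro x hx
          exact Or.inl (Or.inr ⟨e, heF, hx⟩)
        · rcases h5 with h5 | h5
          · exact Or.inl ⟨hd, h5⟩
          · exact Or.inr h5
      · push Not at hd
        refine ⟨w s, en s, fun _ => ⟨⟨[], by simp⟩, ?_, Fm.wk s hs, hd, Or.inr (Or.inl (hen s hs))⟩⟩
        exact List.ne_nil_of_mem (Fm.mem_self hs)
    · exact ⟨[], t, fun h => absurd h hs⟩
  choose w1 en1 hw1 using h1
  have hsub : H \ F ⊆ H := Set.sdiff_subset
  have F1 : Fam I H t w1 en1 := Fm.pref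
    (fun s hs => (hw1 s hs).1)
    (fun s hs => (hw1 s hs).2.1) (fun s hs => (hw1 s hs).2.2.1)
  have F2 : Fam I (H \ F) t w1 en1 := F1.restrict hsub fun s hs e he =>
    ⟨F1.sub s (Src_mono hsub hs) e he, (hw1 s (Src_mono hsub hs)).2.2.2.1 e he⟩
  refine finish F2 ht htB c hc ?_ ?_
  · refine le_trans ?_ hF
    have h2 : ∀ s : {s | s ∈ Src I (H \ F) t ∧ en1 s ∉ B}, ∃ e : F, e.1 ∈ w s.1 := by
      rintro ⟨s, hs, hsB⟩
      rcases (hw1 s (Src_mono hsub hs)).2.2.2.2 with ⟨⟨e, he, heF⟩, -⟩ | h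
      · exact ⟨⟨e, heF⟩, he⟩
      · exact absurd h hsB
    choose k hk using h2
    refine Cardinal.mk_le_of_injective (f := k) ?_
    intro s s' h
    refine Subtype.ext (Fm.dj s.1 (Src_mono hsub s.2.1) s'.1 (Src_mono hsub s'.2.1) (k s).1 (hk s) ?_)
    rw [h]; exact hk s'
  · intro s hs hsB Z hZ X hsX hXB q hq
    have hv : en1 s ∈ Pt I t0 F := by
      rcases (hw1 s (Src_mono hsub hs)).2.2.2.2 with ⟨-, h⟩ | h
      · exact h
      · exact absurd h hsB
    refine hsB (Or.inr (hh (en1 s) hv (F ∪ Z) ?_ X q hsX ?_ ?_))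
    · exact (Cardinal.mk_union_le _ _).trans ((add_le_add hF hZ).trans (Cardinal.add_eq_self hc).le)
    · have : ∀ x ∈ X ∩ T, x = t := by
        rintro x ⟨hx, hxT⟩
        by_contra hne
        exact Set.disjoint_left.1 hXB hx (Or.inl ⟨hxT, hne⟩)
      intro x hx y hy
      rw [this x hx, this y hy]
    · rwa [Set.sdiff_sdiff] at hq

end LK

namespace LK
variable {V : Type u} {E : Type v} {I : E → Sym2 V}
variable {H : Set E} {t : V} {w : E → List E} {en : E → V} {T B X Y : Set V}
open Cardinal

theorem D2 {ι : Type v} [LinearOrder ι] [WellFoundedLT ι] {t0 : V} (ht0 : t0 ∈ T)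
    (N : Nice I T H) : ∃ (f : Finset E → ι → Set E) (Φ : Finset E → Set E),
    (∀ A i, (f A i).Countable) ∧ (∀ A, (Φ A).Countable) ∧
    ∀ (a : ι) (F : Set E), #F ≤ #(Set.Iio a) * ℵ₀ →
      (∀ A : Finset E, (A : Set E) ⊆ F → Φ A ⊆ F ∧ ∀ i < a, f A i ⊆ F) → Nice I T (H \ F) := by
  classical
  have h1 : ∀ t, ∃ w en, t ∈ T → Fam I H t w en ∧ ∀ s ∈ Src I H t, en s ∈ T \ {t} := by
    intro t
    by_cases ht : t ∈ T
    · obtain ⟨w, en, h⟩ := N.2 t ht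
      exact ⟨w, en, fun _ => h⟩
    · exact ⟨fun _ => [], fun _ => t, fun h => absurd h ht⟩
  choose w en hw using h1
  choose g1 W1 hg1 hW1 using fun v : V => capture (ι := ι) (E := E)
    (fun S => ∃ X q, v ∈ X ∧ (X ∩ T).Subsingleton ∧ Shel I (H \ S) T X q)
  choose g2 W2 hg2 hW2 using fun (x y : V) => capture (ι := ι) (E := E)
    (fun S => ¬ Conn I T (H \ S) x y)
  have h3 : ∀ v, ∃ (X : Set V) (q : E → List E), (X ∩ T).Subsingleton ∧
      (∀ e, {g | g ∈ Dl I X ∩ (H \ W1 v) ∧ e ∈ q g}.Subsingleton) ∧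
      ((∃ X q, v ∈ X ∧ (X ∩ T).Subsingleton ∧ Shel I (H \ W1 v) T X q) →
        v ∈ X ∧ Shel I (H \ W1 v) T X q) := by
    intro v
    by_cases h : ∃ X q, v ∈ X ∧ (X ∩ T).Subsingleton ∧ Shel I (H \ W1 v) T X q
    · obtain ⟨X, q, hv, hX, hS⟩ := h
      refine ⟨X, q, hX, ?_, fun _ => ⟨hv, hS⟩⟩
      rintro e g ⟨hg, he⟩ g' ⟨hg', he'⟩
      exact hS.dj g hg g' hg' e he he'
    · exact ⟨∅, fun _ => [], by simp, by simp, fun h' => absurd h' h⟩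
  choose Xv qv hXT hqs hXq using h3
  refine ⟨fun A i => (⋃ v ∈ Pt I t0 (A : Set E), g1 v i) ∪
      ⋃ x ∈ Pt I t0 (A : Set E), ⋃ y ∈ Pt I t0 (A : Set E), g2 x y i,
    fun A => ⋃ v ∈ Pt I t0 (A : Set E), ⋃ e ∈ (A : Set E),
      ((⋃ t ∈ {t | t ∈ T ∧ (t = v ∨ t ∈ Xv v)}, {s | s ∈ Src I H t ∧ e ∈ w t s}) ∪
        {g | g ∈ Dl I (Xv v) ∩ (H \ W1 v) ∧ e ∈ qv v g}), ?_, ?_, ?_⟩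
  · intro A i
    refine Set.Countable.union ?_ ?_
    · exact (Pt_fin A).countable.biUnion fun v _ => hg1 v i
    · exact (Pt_fin A).countable.biUnion fun x _ =>
        (Pt_fin A).countable.biUnion fun y _ => hg2 x y i
  · intro A
    refine (Pt_fin A).countable.biUnion fun v _ => A.countable_toSet.biUnion fun e _ => ?_
    refine Set.Countable.union ?_ (hqs v e).finite.countable
    refine Set.Countable.biUnion (Set.Finite.countable ?_) ?_
    · refine ((Set.finite_singleton v).union (hXT v).finite).subset ?_
      rintro t ⟨ht, h | h⟩
      · exact Or.inl h
      · exact Or.inr ⟨h, ht⟩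
    · rintro t ⟨ht, -⟩
      refine Set.Finite.countable (Set.Subsingleton.finite ?_)
      rintro s ⟨hs, he⟩ s' ⟨hs', he'⟩
      exact (hw t ht).1.dj s hs s' hs' e he he'
  · intro a F hF hcl
    rcases F.eq_empty_or_nonempty with rfl | hne
    · simpa using N
    have hc : ℵ₀ ≤ #(Set.Iio a) * ℵ₀ := by
      refine Cardinal.le_mul_left ?_
      intro h0
      rw [h0, zero_mul, nonpos_iff_eq_zero, Cardinal.mk_set_eq_zero_iff] at hF
      exact hne.ne_empty hF
    set c := #(Set.Iio a) * ℵ₀ with hcdef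
    -- finite supports
    have hfs : ∀ v ∈ Pt I t0 F, ∃ A : Finset E, (A : Set E) ⊆ F ∧ v ∈ Pt I t0 (A : Set E) := by
      rintro v (hv | ⟨s, hs, hv⟩)
      · exact ⟨∅, by simp, Or.inl hv⟩
      · exact ⟨{s}, by simpa using hs, Or.inr ⟨s, by simp, hv⟩⟩
    -- operations
    have o1 : ∀ v ∈ Pt I t0 F, ∀ e ∈ F, ∀ t ∈ T, (t = v ∨ t ∈ Xv v) → ∀ s ∈ Src I H t,
        e ∈ w t s → s ∈ F := by
      intro v hv e he t ht htv s hs hes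
      obtain ⟨A, hA, hvA⟩ := hfs v hv
      have := (hcl (insert e A) (by
        rw [Finset.coe_insert]; exact Set.insert_subset he hA)).1
      apply this
      simp only [Set.mem_iUnion]
      refine ⟨v, Pt_mono (by simp) hvA, e, by simp, Or.inl ?_⟩
      simp only [Set.mem_iUnion]
      exact ⟨t, ⟨ht, htv⟩, hs, hes⟩
    have o2 : ∀ v ∈ Pt I t0 F, ∀ e ∈ F, ∀ g ∈ Dl I (Xv v) ∩ (H \ W1 v), e ∈ qv v g → g ∈ F := by
      intro v hv e he g hg heg
      obtain ⟨A, hA, hvA⟩ := hfs v hv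
      have := (hcl (insert e A) (by
        rw [Finset.coe_insert]; exact Set.insert_subset he hA)).1
      apply this
      simp only [Set.mem_iUnion]
      exact ⟨v, Pt_mono (by simp) hvA, e, by simp, Or.inr ⟨hg, heg⟩⟩
    have o3 : ∀ v ∈ Pt I t0 F, ∀ i < a, g1 v i ⊆ F := by
      intro v hv i hi
      obtain ⟨A, hA, hvA⟩ := hfs v hv
      refine Set.Subset.trans ?_ ((hcl A hA).2 i hi)
      refine Set.Subset.trans ?_ Set.subset_union_left
      exact Set.subset_biUnion_of_mem (u := fun v => g1 v i) hvA
    have o4 : ∀ x ∈ Pt I t0 F, ∀ y ∈ Pt I t0 F, ∀ i < a, g2 x y i ⊆ F := by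
      intro x hx y hy i hi
      obtain ⟨A, hA, hxA⟩ := hfs x hx
      obtain ⟨A', hA', hyA⟩ := hfs y hy
      refine Set.Subset.trans ?_ ((hcl (A ∪ A') (by
        rw [Finset.coe_union]; exact Set.union_subset hA hA')).2 i hi)
      refine Set.Subset.trans ?_ Set.subset_union_right
      intro e he
      simp only [Set.mem_iUnion]
      exact ⟨x, Pt_mono (by simp) hxA, y, Pt_mono (by simp) hyA, he⟩
    refine ⟨D2_IE ht0 N.1 hc hF ?_, ?_⟩
    · intro x hx y hy hxy S hS
      by_contra hcon
      obtain ⟨h4, h5⟩ := hW2 x y a S hS hcon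
      apply h4
      refine hxy.mono (Set.sdiff_subset_sdiff_right (h5.trans ?_))
      exact Set.iUnion₂_subset fun i hi => o4 x hx y hy i hi
    · intro t ht
      by_cases hU : ∃ v ∈ Pt I t0 F, t = v ∨ t ∈ Xv v
      · obtain ⟨v, hv, htv⟩ := hU
        have hsub : H \ F ⊆ H := Set.sdiff_subset
        refine ⟨w t, en t, (hw t ht).1.restrict hsub ?_,
          fun s hs => (hw t ht).2 s (Src_mono hsub hs)⟩
        intro s hs e he
        refine ⟨(hw t ht).1.sub s (Src_mono hsub hs) e he, fun heF => ?_⟩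
        exact (mem_Src.1 hs).1.2 (o1 v hv e heF t ht htv s (Src_mono hsub hs) he)
      · push Not at hU
        have hhoused : ∀ v ∈ Pt I t0 F, ∀ S : Set E, #S ≤ c →
            (∃ X q, v ∈ X ∧ (X ∩ T).Subsingleton ∧ Shel I (H \ S) T X q) →
            v ∈ Xv v ∧ Shel I (H \ F) T (Xv v) (qv v) := by
          intro v hv S hS hQ
          obtain ⟨h4, h5⟩ := hW1 v a S hS hQ
          have hWF : W1 v ⊆ F := h5.trans (Set.iUnion₂_subset fun i hi => o3 v hv i hi)
          obtain ⟨h6, h7⟩ := hXq v h4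
          have hs2 : H \ F ⊆ H \ W1 v := Set.sdiff_subset_sdiff_right hWF
          refine ⟨h6, fun g hg => h7.wk g (hs2 hg), fun g hg => h7.nd g ⟨hg.1, hs2 hg.2⟩, ?_,
            fun g hg g' hg' => h7.dj g ⟨hg.1, hs2 hg.2⟩ g' ⟨hg'.1, hs2 hg'.2⟩⟩
          intro g hg e he
          have h8 := h7.sub g ⟨hg.1, hs2 hg.2⟩ e he
          refine ⟨⟨h8.1.1, fun heF => ?_⟩, h8.2⟩
          exact hg.2.2 (o2 v hv e heF g ⟨hg.1, hs2 hg.2⟩ he)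
        obtain ⟨q, hq⟩ := Shel.sUnion (I := I) (H := H \ F) (T := T)
          {X | ∃ v ∈ Pt I t0 F, X = Xv v ∧ v ∈ Xv v ∧ Shel I (H \ F) T (Xv v) (qv v)} (by
            rintro X ⟨v, hv, rfl, -, h⟩
            exact ⟨_, h⟩)
        refine D2_link ht hc hF (hw t ht).1 (hw t ht).2 (fun h => (hU t h).1 rfl) hq ?_ ?_
        · rintro ⟨X, ⟨v, hv, rfl, -⟩, htX⟩
          exact (hU v hv).2 htX
        · intro v hv S hS X q hvX hXT hSh
          obtain ⟨h6, h7⟩ := hhoused v hv S hS ⟨X, q, hvX, hXT, hSh⟩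
          exact ⟨_, ⟨v, hv, rfl, h6, h7⟩, h6⟩

end LK

namespace LK
variable {V : Type u} {E : Type v} {I : E → Sym2 V}
variable {H : Set E} {t : V} {w : E → List E} {en : E → V} {T B X Y : Set V}
open Cardinal

theorem mk_iUnion_le_of {ι : Type v} (f : ι → Set E) {κ : Cardinal.{v}} (hκ : ℵ₀ ≤ κ) (hι : #ι ≤ κ)
    (hf : ∀ i, #(f i) ≤ κ) : #(⋃ i, f i) ≤ κ := by
  refine (Cardinal.mk_iUnion_le_sum_mk).trans ((Cardinal.sum_le_sum _ (fun _ => κ) hf).trans ?_)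
  simp only [Cardinal.sum_const, Cardinal.lift_id]
  exact (mul_le_mul' hι le_rfl).trans (Cardinal.mul_eq_self hκ).le

theorem exists_closure (Θ : Finset E → Set E) (A : Set E) {κ : Cardinal.{v}} (hκ : ℵ₀ ≤ κ)
    (hA : #A ≤ κ) (hΘ : ∀ s, #(Θ s) ≤ κ) :
    ∃ C : Set E, A ⊆ C ∧ #C ≤ κ ∧ ∀ s : Finset E, (s : Set E) ⊆ C → Θ s ⊆ C := by
  classical
  let st : Set E → Set E := fun A => A ∪ ⋃ s : Finset A, Θ (s.map (Function.Embedding.subtype _))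
  let An : ℕ → Set E := fun n => Nat.rec A (fun _ B => st B) n
  have hAn : ∀ n, An (n + 1) = st (An n) := fun _ => rfl
  have hA0 : An 0 = A := rfl
  clear_value An
  have hst : ∀ B : Set E, #B ≤ κ → #(st B) ≤ κ := by
    intro B hB
    refine (Cardinal.mk_union_le _ _).trans ((add_le_add hB ?_).trans (Cardinal.add_eq_self hκ).le)
    refine mk_iUnion_le_of _ hκ ?_ (fun s => hΘ _)
    rcases finite_or_infinite B with h | h
    · exact (Cardinal.lt_aleph0_of_finite (Finset B)).le.trans hκ
    · rw [Cardinal.mk_finset_of_infinite]; exact hB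
  have hcard : ∀ n, #(An n) ≤ κ := by
    intro n
    induction n with
    | zero => rw [hA0]; exact hA
    | succ n ih => rw [hAn]; exact hst _ ih
  have hmono : Monotone An := by
    refine monotone_nat_of_le_succ ?_
    intro n
    rw [hAn]; exact Set.subset_union_left
  refine ⟨⋃ n : ULift.{v} ℕ, An n.down, ?_, ?_, ?_⟩
  · rw [← hA0]; exact Set.subset_iUnion (fun n : ULift.{v} ℕ => An n.down) ⟨0⟩
  · refine mk_iUnion_le_of _ hκ ?_ (fun n => hcard _)
    simpa using hκ
  · intro s hs
    have : ∃ n, (s : Set E) ⊆ An n := by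
      induction s using Finset.induction_on with
      | empty => exact ⟨0, by simp⟩
      | insert e s _ ih =>
        rw [Finset.coe_insert, Set.insert_subset_iff] at hs
        obtain ⟨n, hn⟩ := ih hs.2
        obtain ⟨⟨m⟩, hm⟩ := Set.mem_iUnion.1 hs.1
        refine ⟨max n m, ?_⟩
        rw [Finset.coe_insert, Set.insert_subset_iff]
        exact ⟨hmono (le_max_right _ _) hm, hn.trans (hmono (le_max_left _ _))⟩
    obtain ⟨n, hn⟩ := this
    refine Set.Subset.trans ?_ (Set.subset_iUnion (fun n : ULift.{v} ℕ => An n.down) ⟨n + 1⟩)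
    rw [hAn]
    refine Set.Subset.trans ?_ Set.subset_union_right
    refine Set.Subset.trans ?_ (Set.subset_iUnion _ (s.subtype (fun e => e ∈ An n)))
    rw [Finset.subtype_map_of_mem (fun e he => hn he)]

theorem PL_of_nice {t0 : V} (ht0 : t0 ∈ T) (c : Cardinal.{v}) :
    ∀ H : Set E, #H = c → Nice I T H → PL I T H := by
  classical
  induction c using WellFoundedLT.induction with
  | _ c ih =>
  intro H hHc N
  by_cases hcount : #H ≤ ℵ₀
  · exact PL_countable N (Cardinal.le_aleph0_iff_set_countable.1 hcount)
  push Not at hcount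
  let ι : Type v := (#H).ord.ToType
  have hιH : #ι = #H := Cardinal.mk_ord_toType _
  obtain ⟨ε⟩ := Cardinal.eq.1 hιH
  have hIio : ∀ b : ι, #(Set.Iio b) < #H := fun b => Cardinal.mk_Iio_toType_ord_lt b
  have hIic : ∀ b : ι, #(Set.Iic b) < #H := by
    intro b
    have : Set.Iic b ⊆ Set.Iio b ∪ {b} := by
      intro x hx
      rcases lt_or_eq_of_le (show x ≤ b from hx) with h | h
      · exact Or.inl h
      · exact Or.inr h
    refine (Cardinal.mk_le_mk_of_subset this).trans_lt ((Cardinal.mk_union_le _ _).trans_lt ?_)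
    exact Cardinal.add_lt_of_lt hcount.le (hIio b)
      (by simpa using (Cardinal.one_lt_aleph0).trans hcount)
  obtain ⟨f, Φ, hf, hΦ, hD2⟩ := D2 (ι := ι) ht0 N
  have hΨ : ∀ A : Set E, ∃ Ψ : Finset E → Set E, (∀ s, (Ψ s).Countable) ∧ (Nice I T (H \ A) →
      ∀ F : Set E, (∀ s : Finset E, (s : Set E) ⊆ F → Ψ s ⊆ F) → Nice I T ((H \ A) ∩ F)) := by
    intro A
    by_cases h : Nice I T (H \ A)
    · obtain ⟨Ψ, h1, h2⟩ := D1 ht0 h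
      exact ⟨Ψ, h1, fun _ => h2⟩
    · exact ⟨fun _ => ∅, by simp, fun h' => absurd h' h⟩
  choose Ψ hΨ1 hΨ2 using hΨ
  have hκ : ∀ b : ι, ℵ₀ ≤ #(Set.Iic b) * ℵ₀ := by
    intro b
    refine Cardinal.le_mul_left ?_
    rw [Ne, Cardinal.mk_set_eq_zero_iff]
    exact (Set.nonempty_Iic (a := b)).ne_empty
  have hS : ∀ (b : ι) (A : Set E), ∃ C : Set E, A ⊆ C ∧ (ε b : E) ∈ C ∧
      (#A ≤ #(Set.Iic b) * ℵ₀ → #C ≤ #(Set.Iic b) * ℵ₀) ∧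
      ∀ s : Finset E, (s : Set E) ⊆ C → Φ s ⊆ C ∧ (∀ i ≤ b, f s i ⊆ C) ∧ Ψ A s ⊆ C := by
    intro b A
    by_cases hA : #A ≤ #(Set.Iic b) * ℵ₀
    · obtain ⟨C, h1, h2, h3⟩ := exists_closure
        (fun s => (Φ s ∪ Ψ A s) ∪ ⋃ i : Set.Iic b, f s i) (A ∪ {(ε b : E)}) (hκ b) (by
          refine (Cardinal.mk_union_le _ _).trans ((add_le_add hA ?_).trans
            (Cardinal.add_eq_self (hκ b)).le)
          simpa using (Cardinal.one_le_aleph0).trans (hκ b)) (by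
          intro s
          refine (Cardinal.mk_union_le _ _).trans ((add_le_add ?_ ?_).trans
            (Cardinal.add_eq_self (hκ b)).le)
          · exact (Cardinal.le_aleph0_iff_set_countable.2 ((hΦ s).union (hΨ1 A s))).trans (hκ b)
          · refine mk_iUnion_le_of _ (hκ b) ?_ ?_
            · exact Cardinal.le_mul_right Cardinal.aleph0_ne_zero
            · intro i
              exact (Cardinal.le_aleph0_iff_set_countable.2 (hf s i)).trans (hκ b))
      refine ⟨C, fun e he => h1 (Or.inl he), h1 (Or.inr rfl), fun _ => h2, ?_⟩
      intro s hs
      have h4 := h3 s hs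
      refine ⟨fun e he => h4 (Or.inl (Or.inl he)), ?_, fun e he => h4 (Or.inl (Or.inr he))⟩
      intro i hi e he
      exact h4 (Or.inr (Set.mem_iUnion.2 ⟨⟨i, hi⟩, he⟩))
    · exact ⟨Set.univ, Set.subset_univ _, Set.mem_univ _, fun h => absurd h hA, fun s _ =>
        ⟨Set.subset_univ _, fun _ _ => Set.subset_univ _, Set.subset_univ _⟩⟩
  choose S hSA hSε hSc hScl using hS
  let F : ι → Set E := IsWellFounded.fix (· < ·) (fun a F => ⋃ b : Set.Iio a, S b (F b.1 b.2))
  have hFeq : ∀ a, F a = ⋃ b : Set.Iio a, S b (F b) := by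
    intro a
    exact IsWellFounded.fix_eq _ _ _
  clear_value F
  have hSF : ∀ b a, b < a → S b (F b) ⊆ F a := by
    intro b a hba
    rw [hFeq a]
    exact Set.subset_iUnion (fun b : Set.Iio a => S b (F b)) ⟨b, hba⟩
  have hSS : ∀ b a, b ≤ a → S b (F b) ⊆ S a (F a) := by
    intro b a hba
    rcases lt_or_eq_of_le hba with h | h
    · exact (hSF b a h).trans (hSA a _)
    · rw [h]
  have hcard : ∀ a, #(F a) ≤ #(Set.Iio a) * ℵ₀ := by
    intro a
    induction a using WellFoundedLT.induction with
    | _ a iha =>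
    by_cases h0 : #(Set.Iio a) = 0
    · have : IsEmpty (Set.Iio a) := Cardinal.mk_eq_zero_iff.1 h0
      rw [hFeq a]; simp
    · rw [hFeq a]
      refine mk_iUnion_le_of _ (Cardinal.le_mul_left h0)
        (Cardinal.le_mul_right Cardinal.aleph0_ne_zero) ?_
      rintro ⟨b, hb⟩
      have h1 : #(F b) ≤ #(Set.Iic b) * ℵ₀ := (iha b hb).trans
        (mul_le_mul' (Cardinal.mk_le_mk_of_subset Set.Iio_subset_Iic_self) le_rfl)
      refine (hSc b (F b) h1).trans (mul_le_mul' (Cardinal.mk_le_mk_of_subset ?_) le_rfl)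
      intro x hx
      exact lt_of_le_of_lt (show x ≤ b from hx) hb
  have hSub : ∀ a, (F a).Nonempty → ∀ s : Finset E, (s : Set E) ⊆ F a →
      ∃ b < a, (s : Set E) ⊆ S b (F b) := by
    intro a hne s hs
    induction s using Finset.induction_on with
    | empty =>
      obtain ⟨e, he⟩ := hne
      rw [hFeq a] at he
      obtain ⟨⟨b, hb⟩, -⟩ := Set.mem_iUnion.1 he
      exact ⟨b, hb, by simp⟩
    | insert e s _ ihs =>
      rw [Finset.coe_insert, Set.insert_subset_iff] at hs
      obtain ⟨b, hb, hsb⟩ := ihs hs.2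
      have he := hs.1
      rw [hFeq a] at he
      obtain ⟨⟨b', hb'⟩, he⟩ := Set.mem_iUnion.1 he
      refine ⟨max b b', max_lt hb hb', ?_⟩
      rw [Finset.coe_insert, Set.insert_subset_iff]
      exact ⟨hSS _ _ (le_max_right _ _) he, hsb.trans (hSS _ _ (le_max_left _ _))⟩
  have hNice : ∀ a, Nice I T (H \ F a) := by
    intro a
    rcases (F a).eq_empty_or_nonempty with h | hne
    · rw [h]; simpa using N
    · refine hD2 a (F a) (hcard a) ?_
      intro s hs
      obtain ⟨b, hb, hsb⟩ := hSub a hne s hs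
      refine ⟨((hScl b (F b) s hsb).1).trans (hSF b a hb), ?_⟩
      intro i hi
      exact ((hScl (max b i) (F (max b i)) s (hsb.trans (hSS _ _ (le_max_left _ _)))).2.1 i
        (le_max_right _ _)).trans (hSF _ a (max_lt hb hi))
  refine PL_iUnion (fun b : ι => (H \ F b) ∩ S b (F b)) ?_ ?_ ?_ ?_
  · intro b
    have h1 : #(F b) ≤ #(Set.Iic b) * ℵ₀ := (hcard b).trans
        (mul_le_mul' (Cardinal.mk_le_mk_of_subset Set.Iio_subset_Iic_self) le_rfl)
    have hlt : #((H \ F b) ∩ S b (F b) : Set E) < c := by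
      rw [← hHc]
      refine (Cardinal.mk_le_mk_of_subset Set.inter_subset_right).trans_lt
        ((hSc b (F b) h1).trans_lt ?_)
      exact Cardinal.mul_lt_of_lt hcount.le (hIic b) hcount
    exact ih _ hlt _ rfl (hΨ2 (F b) (hNice b) _ (fun s hs => (hScl b (F b) s hs).2.2))
  · intro i j e hi hj
    rcases lt_trichotomy i j with h | h | h
    · exact absurd (hSF i j h hi.2) hj.1.2
    · exact h
    · exact absurd (hSF j i h hj.2) hi.1.2
  · intro b e he; exact he.1.1
  · intro e he
    have hne : {b : ι | e ∈ S b (F b)}.Nonempty := by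
      refine ⟨ε.symm ⟨e, he⟩, ?_⟩
      have := hSε (ε.symm ⟨e, he⟩) (F (ε.symm ⟨e, he⟩))
      simpa using this
    obtain ⟨b, hb, hmin⟩ := WellFounded.has_min (wellFounded_lt (α := ι)) _ hne
    refine ⟨b, ⟨he, fun hF => ?_⟩, hb⟩
    rw [hFeq b] at hF
    obtain ⟨⟨b', hb'⟩, he'⟩ := Set.mem_iUnion.1 hF
    exact hmin b' he' hb'

end LK

namespace LK
variable {V : Type u} {E : Type v} {G : Grapht V E}

theorem walk_wk {vs : List V} {es : List E} (h : G.IsWalk vs es) : ∀ {a b : V},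
    vs.head? = some a → vs.getLast? = some b → Wk G.I a es b := by
  induction h with
  | nil v =>
    intro a b h1 h2
    simp at h1 h2
    subst h1; subst h2
    exact Wk.nil _
  | cons h1 h2 ih =>
    intro a b h3 h4
    simp at h3
    subst h3
    rw [List.getLast?_cons_cons] at h4
    exact Wk.cons h1 (ih rfl h4)

theorem walk_mem {vs : List V} {es : List E} (h : G.IsWalk vs es) :
    ∀ e ∈ es, ∀ x ∈ G.I e, x ∈ vs := by
  induction h with
  | nil v => simp
  | cons h1 h2 ih =>
    intro e he x hx
    rcases List.mem_cons.1 he with rfl | he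
    · rw [h1, Sym2.mem_iff] at hx
      rcases hx with rfl | rfl <;> simp
    · exact List.mem_cons_of_mem _ (ih e he x hx)

theorem walk_nodup {vs : List V} {es : List E} (h : G.IsWalk vs es) (hn : vs.Nodup) :
    es.Nodup := by
  induction h with
  | nil v => simp
  | @cons u w vs e es h1 h2 ih =>
    rw [List.nodup_cons] at hn ⊢
    refine ⟨fun he => hn.1 (walk_mem h2 e he u (by rw [h1]; simp)), ih hn.2⟩

theorem walk_first {vs : List V} {es : List E} (h : G.IsWalk vs es) (hn : vs.Nodup)
    {t : V} (ht : vs.head? = some t) {s : E} (hs : s ∈ es) (hts : t ∈ G.I s) :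
    ∃ l, es = s :: l := by
  cases h with
  | nil v => simp at hs
  | @cons u w vs e es h1 h2 =>
    simp at ht
    subst ht
    rw [List.nodup_cons] at hn
    rcases List.mem_cons.1 hs with rfl | hs
    · exact ⟨_, rfl⟩
    · exact absurd (walk_mem h2 s hs _ hts) hn.1

theorem walk_last {vs : List V} {es : List E} (h : G.IsWalk vs es) (hn : vs.Nodup)
    {t : V} (ht : vs.getLast? = some t) {s : E} (hs : s ∈ es) (hts : t ∈ G.I s) :
    ∃ l, es = l ++ [s] := by
  induction h with
  | nil v => simp at hs
  | @cons u w vs e es h1 h2 ih =>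
    rw [List.getLast?_cons_cons] at ht
    rw [List.nodup_cons] at hn
    rcases List.mem_cons.1 hs with rfl | hs
    · have htm : t ∈ w :: vs := List.mem_of_getLast? ht
      rw [h1, Sym2.mem_iff] at hts
      rcases hts with rfl | rfl
      · exact absurd htm hn.1
      · cases vs with
        | nil => cases h2; exact ⟨[], rfl⟩
        | cons x vs =>
          rw [List.getLast?_cons_cons] at ht
          exact absurd (List.mem_of_getLast? ht) (List.nodup_cons.1 hn.2).1
    · obtain ⟨l, rfl⟩ := ih hn.2 ht hs
      exact ⟨e :: l, rfl⟩

theorem tpath_ends {P : G.Path} (hP : G.IsTPath P) {t : V} (htT : t ∈ G.T)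
    (ht : t ∈ P.verts) : t = P.first ∨ t = P.last := by
  by_contra! hc
  obtain ⟨h1, h2, h3, h4⟩ := hP
  refine h4 t ?_ htT
  have h5 := P.head_eq
  have h6 := P.getLast_eq
  unfold Grapht.Path.inner
  generalize P.verts = vs at *
  cases vs with
  | nil => simp at ht
  | cons x vs =>
    simp at h5
    subst h5
    have ht' : t ∈ vs := by
      rcases List.mem_cons.1 ht with h | h
      · exact absurd h hc.1
      · exact h
    have hne : vs ≠ [] := by rintro rfl; simp at ht'
    have h7 : vs.getLast? = some P.last := by
      cases vs with
      | nil => exact absurd rfl hne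
      | cons y vs => rwa [List.getLast?_cons_cons] at h6
    have h8 := List.dropLast_append_getLast? _ h7
    simp only [List.drop_succ_cons, List.drop_zero]
    rw [← h8] at ht'
    rcases List.mem_append.1 ht' with h | h
    · exact h
    · simp at h; exact absurd h hc.2

theorem linkedTo_of_linked {t : V} (htT : t ∈ G.T) (h : G.Linked t) :
    LinkedTo G.I Set.univ t (G.T \ {t}) := by
  obtain ⟨Ps, ⟨hd, hT⟩, hc⟩ := h
  have key : ∀ s, ∃ (l : List E) (b : V), s ∈ Src G.I Set.univ t →
      Wk G.I t l b ∧ (∃ l', l = s :: l') ∧ l.Nodup ∧ b ∈ G.T \ {t} ∧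
      ∃ P ∈ Ps, (∀ e, e ∈ l → e ∈ P.edges) ∧ s ∈ P.edges ∧
        ∀ e ∈ P.edges, t ∈ G.I e → e = s := by
    intro s
    by_cases hs : s ∈ Src G.I Set.univ t
    swap
    · exact ⟨[], t, fun h => absurd h hs⟩
    obtain ⟨P, hP, hsP⟩ := hc s hs.1
    obtain ⟨-, y, -, hI⟩ := mem_Src.1 hs
    have hts : t ∈ G.I s := by rw [hI]; simp
    have hPT := hT P hP
    have htv := walk_mem P.isWalk s hsP t hts
    have hnd := walk_nodup P.isWalk P.nodup
    have hwk := walk_wk P.isWalk P.head_eq P.getLast_eq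
    rcases tpath_ends hPT htT htv with h | h
    · have hh : P.verts.head? = some t := by rw [h]; exact P.head_eq
      obtain ⟨l, hl⟩ := walk_first P.isWalk P.nodup hh hsP hts
      refine ⟨P.edges, P.last, fun _ => ⟨by rw [h]; exact hwk, ⟨l, hl⟩, hnd,
        ⟨hPT.2.1, ?_⟩, P, hP, fun e he => he, hsP, ?_⟩⟩
      · intro hx
        exact hPT.2.2.1 (h.symm.trans (Set.mem_singleton_iff.1 hx).symm)
      · intro e he hte
        obtain ⟨l', hl'⟩ := walk_first P.isWalk P.nodup hh he hte
        rw [hl] at hl'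
        exact (List.cons.inj hl').1.symm
    · have hh : P.verts.getLast? = some t := by rw [h]; exact P.getLast_eq
      obtain ⟨l, hl⟩ := walk_last P.isWalk P.nodup hh hsP hts
      refine ⟨P.edges.reverse, P.first, fun _ => ⟨by rw [h]; exact hwk.reverse,
        ⟨l.reverse, by rw [hl]; simp⟩, List.nodup_reverse.2 hnd,
        ⟨hPT.1, ?_⟩, P, hP, fun e he => List.mem_reverse.1 he, hsP, ?_⟩⟩
      · intro hx
        exact hPT.2.2.1 ((Set.mem_singleton_iff.1 hx).trans h)
      · intro e he hte
        obtain ⟨l', hl'⟩ := walk_last P.isWalk P.nodup hh he hte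
        rw [hl] at hl'
        have := (List.append_inj' hl' rfl).2
        simp at this
        exact this.symm
  choose w en hw using key
  refine ⟨w, en, ⟨fun s hs => (hw s hs).1, fun s hs => (hw s hs).2.1,
    fun s hs => (hw s hs).2.2.1, fun _ _ _ _ => trivial, ?_⟩, fun s hs => (hw s hs).2.2.2.1⟩
  intro s hs s' hs' e he he'
  obtain ⟨P, hP, h1, h2, h3⟩ := (hw s hs).2.2.2.2
  obtain ⟨P', hP', h1', h2', h3'⟩ := (hw s' hs').2.2.2.2
  have hPP : P = P' := by
    by_contra hne
    exact hd hP hP' hne e (h1 e he) (h1' e he')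
  subst hPP
  obtain ⟨-, y, -, hI⟩ := mem_Src.1 hs
  exact h3' s h2 (by rw [hI]; simp)

theorem walk_suffix {vs : List V} {es : List E} (h : G.IsWalk vs es) {a b : V}
    (ha : a ∈ vs) (hb : vs.getLast? = some b) : ∃ vs' es', G.IsWalk vs' es' ∧
      vs' <:+ vs ∧ vs'.head? = some a ∧ vs'.getLast? = some b ∧ ∀ e ∈ es', e ∈ es := by
  induction h with
  | nil v =>
    simp at ha
    subst ha
    exact ⟨[a], [], Grapht.IsWalk.nil _, List.suffix_refl _, rfl, hb, by simp⟩
  | @cons u w vs e es h1 h2 ih =>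
    by_cases hau : a = u
    · subst hau
      exact ⟨_, _, Grapht.IsWalk.cons h1 h2, List.suffix_refl _, rfl, hb, fun e he => he⟩
    · have ha' : a ∈ w :: vs := by
        rcases List.mem_cons.1 ha with h | h
        · exact absurd h hau
        · exact h
      have hb' := hb
      rw [List.getLast?_cons_cons] at hb'
      obtain ⟨vs', es', k1, k2, k3, k4, k5⟩ := ih ha' hb'
      exact ⟨vs', es', k1, k2.trans (List.suffix_cons _ _), k3, k4,
        fun e he => List.mem_cons_of_mem _ (k5 e he)⟩

theorem loop_erase {a b : V} {l : List E} (h : Wk G.I a l b) : ∃ P : G.Path,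
    P.first = a ∧ P.last = b ∧ (∀ e ∈ P.edges, e ∈ l) ∧
      ∀ v ∈ P.verts, ∃ m1 m2, l = m1 ++ m2 ∧ Wk G.I a m1 v := by
  induction h with
  | nil a =>
    exact ⟨⟨a, a, [a], [], Grapht.IsWalk.nil _, by simp, rfl, rfl⟩, rfl, rfl, by simp,
      fun v hv => ⟨[], [], rfl, by simp at hv; rw [hv]; exact Wk.nil _⟩⟩
  | @cons a c b e l h1 h2 ih =>
    obtain ⟨P, hf, hl, hsub, hr⟩ := ih
    have hr' : ∀ v ∈ P.verts, ∃ m1 m2, e :: l = m1 ++ m2 ∧ Wk G.I a m1 v := by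
      intro v hv
      obtain ⟨m1, m2, rfl, hm⟩ := hr v hv
      exact ⟨e :: m1, m2, rfl, Wk.cons h1 hm⟩
    by_cases ha : a ∈ P.verts
    · obtain ⟨vs', es', k1, k2, k3, k4, k5⟩ := walk_suffix P.isWalk ha P.getLast_eq
      exact ⟨⟨a, P.last, vs', es', k1, P.nodup.sublist k2.sublist, k3, k4⟩, rfl, hl,
        fun f hf => List.mem_cons_of_mem _ (hsub f (k5 f hf)),
        fun v hv => hr' v (k2.subset hv)⟩
    · have h5 := P.head_eq
      have h6 := P.getLast_eq
      have h7 := P.isWalk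
      have h8 := P.nodup
      generalize P.verts = vs at *
      cases vs with
      | nil => simp at h5
      | cons x vs =>
        simp at h5
        have hx : x = c := h5.trans hf
        subst hx
        refine ⟨⟨a, P.last, a :: x :: vs, e :: P.edges, Grapht.IsWalk.cons h1 h7,
          List.nodup_cons.2 ⟨ha, h8⟩, rfl, by rw [List.getLast?_cons_cons]; exact h6⟩,
          rfl, hl, ?_, ?_⟩
        · intro f hf
          rcases List.mem_cons.1 hf with rfl | hf
          · simp
          · exact List.mem_cons_of_mem _ (hsub f hf)
        · intro v hv
          rcases List.mem_cons.1 hv with rfl | hv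
          · exact ⟨[], _, rfl, Wk.nil _⟩
          · exact hr' v hv

theorem wk_edge_start {I : E → Sym2 V} {a b : V} {l : List E} (h : Wk I a l b) (hab : a ≠ b) :
    ∃ e ∈ l, a ∈ I e := by
  cases h with
  | nil => exact absurd rfl hab
  | cons h1 h2 => exact ⟨_, List.mem_cons_self, by rw [h1]; simp⟩

/-- From a trail between terminals, extract a path keeping all edges at terminals. -/
theorem trail_path {l : List E} (h : TTrail G.I G.T l) : ∃ P : G.Path, G.IsTPath P ∧
    (∀ e ∈ P.edges, e ∈ l) ∧ ∀ t ∈ G.T, ∀ e ∈ l, t ∈ G.I e → e ∈ P.edges := by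
  obtain ⟨a, b, ha, hb, hab, hw, hn, hin⟩ := h
  obtain ⟨P, hf, hl, hsub, hr⟩ := loop_erase hw
  have hwk := walk_wk P.isWalk P.head_eq P.getLast_eq
  rw [hf, hl] at hwk
  have claim : ∀ t ∈ G.T, ∀ e ∈ l, t ∈ G.I e →
      (t = a ∧ ∃ m, l = e :: m) ∨ (t = b ∧ ∃ m, l = m ++ [e]) := by
    intro t ht e he hte
    obtain ⟨m1, m2, rfl⟩ := List.append_of_mem he
    obtain ⟨x, h1, h2⟩ := Wk.append_iff.1 hw
    obtain ⟨y, h3, h4⟩ := Wk.cons_iff.1 h2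
    rw [h3, Sym2.mem_iff] at hte
    rcases hte with rfl | rfl
    · by_cases hm : m1 = []
      · subst hm
        exact Or.inl ⟨(Wk.nil_iff.1 h1).symm, m2, rfl⟩
      · exact absurd ht (hin m1 (e :: m2) t rfl hm (by simp) h1)
    · by_cases hm : m2 = []
      · subst hm
        exact Or.inr ⟨Wk.nil_iff.1 h4, m1, rfl⟩
      · exact absurd ht (hin (m1 ++ [e]) m2 t (by simp) (by simp) hm
          (h1.append (Wk.single h3)))
  have uniq : ∀ t ∈ G.T, ∀ e ∈ l, ∀ f ∈ l, t ∈ G.I e → t ∈ G.I f → e = f := by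
    intro t ht e he f hf' hte htf
    rcases claim t ht e he hte with ⟨h1, m, h2⟩ | ⟨h1, m, h2⟩ <;>
    rcases claim t ht f hf' htf with ⟨h1', m', h2'⟩ | ⟨h1', m', h2'⟩
    · rw [h2] at h2'; exact (List.cons.inj h2').1
    · exact absurd (h1.symm.trans h1') hab
    · exact absurd (h1'.symm.trans h1) hab
    · rw [h2] at h2'
      have := (List.append_inj' h2' rfl).2
      simpa using this
  refine ⟨P, ⟨hf ▸ ha, hl ▸ hb, by rw [hf, hl]; exact hab, ?_⟩, hsub, ?_⟩
  · intro v hv hvT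
    have h5 := P.head_eq
    have h6 := P.getLast_eq
    have h8 := P.nodup
    have hv' : v ∈ P.verts := List.mem_of_mem_drop (List.mem_of_mem_dropLast hv)
    obtain ⟨m1, m2, h9, h10⟩ := hr v hv'
    unfold Grapht.Path.inner at hv
    rw [hf] at h5
    rw [hl] at h6
    generalize P.verts = vs at *
    cases vs with
    | nil => simp at hv
    | cons x vs =>
      simp at h5
      subst h5
      simp only [List.drop_succ_cons, List.drop_zero] at hv
      rw [List.nodup_cons] at h8
      have hvs : v ∈ vs := List.mem_of_mem_dropLast hv
      by_cases hm1 : m1 = []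
      · subst hm1
        rw [Wk.nil_iff] at h10
        subst h10
        exact h8.1 hvs
      by_cases hm2 : m2 = []
      · subst hm2
        rw [List.append_nil] at h9
        subst h9
        have hvb := h10.unique hw
        subst hvb
        have h7 : vs.getLast? = some v := by
          cases vs with
          | nil => simp at hvs
          | cons y vs => rwa [List.getLast?_cons_cons] at h6
        have h11 := List.dropLast_append_getLast? _ h7
        rw [← h11] at h8
        have := h8.2
        rw [List.nodup_append] at this
        exact this.2.2 v hv v (by simp) rfl
      · exact hin m1 m2 v h9 hm1 hm2 h10 hvT
  · intro t ht e he hte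
    rcases claim t ht e he hte with ⟨h1, -⟩ | ⟨h1, -⟩
    · obtain ⟨f, hf1, hf2⟩ := wk_edge_start hwk hab
      rw [← h1] at hf2
      rw [uniq t ht e he f (hsub f hf1) hte hf2]
      exact hf1
    · obtain ⟨f, hf1, hf2⟩ := wk_edge_start hwk.reverse hab.symm
      rw [List.mem_reverse] at hf1
      rw [← h1] at hf2
      rw [uniq t ht e he f (hsub f hf1) hte hf2]
      exact hf1

theorem perfect_of_PL (h : PL G.I G.T Set.univ) : ∃ Ps : Set G.Path, G.IsPerfectLinkage Ps := by
  obtain ⟨L, h1, h2, h3⟩ := h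
  choose p hp1 hp2 hp3 using fun l (hl : l ∈ L) => trail_path (h1 l hl).1
  refine ⟨{P | ∃ l, ∃ hl : l ∈ L, P = p l hl}, ⟨?_, ?_⟩, ?_⟩
  · rintro _ ⟨l, hl, rfl⟩ _ ⟨l', hl', rfl⟩ hne e he he'
    have := h2 l hl l' hl' e (hp2 l hl e he) (hp2 l' hl' e he')
    subst this
    exact hne rfl
  · rintro _ ⟨l, hl, rfl⟩
    exact hp1 l hl
  · intro t ht e he
    have heS : e ∈ Src G.I Set.univ t := ⟨he, trivial⟩
    obtain ⟨l, hl, hel⟩ := h3 t ht e heS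
    obtain ⟨-, y, -, hI⟩ := mem_Src.1 heS
    exact ⟨p l hl, ⟨l, hl, rfl⟩, hp3 l hl t ht e hel (by rw [hI]; simp)⟩

theorem main (G : Grapht V E) (h1 : G.InnerEulerian) (h2 : G.LinkabilityCondition) :
    ∃ Ps : Set G.Path, G.IsPerfectLinkage Ps := by
  obtain ⟨t0, ht0⟩ := G.T_nontrivial.nonempty
  refine perfect_of_PL (PL_of_nice ht0 _ Set.univ rfl ⟨?_, ?_⟩)
  · intro X hX
    rw [Set.inter_univ]
    exact h1 X hX
  · intro t ht
    exact linkedTo_of_linked ht (h2 t ht)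
end LK



/-- **Linkage theorem.** Every inner Eulerian grapht satisfying the linkability
condition admits a perfect linkage. -/
theorem linkage_theorem {V : Type u} {E : Type v} (G : Grapht V E)
    (h1 : G.InnerEulerian) (h2 : G.LinkabilityCondition) :
    ∃ Ps : Set G.Path, G.IsPerfectLinkage Ps := by
  exact LK.main G h1 h2
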